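/- For every convex body K in R^d, if P_m(K) denotes the set of convex polytopes with vertices in the lattice (1/m)Z^d contained in K, and n is the number of points of (1/m)Z^d in K, then there exist constants c_1, c_2 > 0 depending only on d with c_1 · n^{(d-1)/(d+1)} ≤ log |P_m(K)| ≤ c_2 · n^{(d-1)/(d+1)} for all sufficiently large m. -/

import Mathlib

open MeasureTheory Set Filter
noncomputable section

/-- Euclidean space `ℝ^d`. -/
abbrev E (d : ℕ) := EuclideanSpace ℝ (Fin d)

/-- The scaled integer lattice `(1/m)ℤ^d` in `ℝ^d`. -/
def scaledLattice (d m : ℕ) : Set (E d) := {v | ∀ i, ∃ z : ℤ, v i = z / m}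

/-- `𝒫_m(K)`: the collection of (nonempty) convex polytopes contained in `K` all of whose
vertices lie in the lattice `(1/m)ℤ^d`. -/
def latticePolytopes (d m : ℕ) (K : Set (E d)) : Set (Set (E d)) :=
  {P | P.Nonempty ∧ P ⊆ K ∧
    ∃ F : Finset (E d), (↑F : Set (E d)) ⊆ scaledLattice d m ∧ P = convexHull ℝ (↑F : Set (E d))}

theorem ua_updateCol {d : ℕ} (x0 : Fin d → ℝ) (x : Fin d → Fin d → ℝ) (i : Fin d) (y : Fin d → ℝ) :
    (Matrix.of (fun r j => x j r - x0 r)).updateCol i (y - x0)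
      = Matrix.of (fun r j => (Function.update x i y) j r - x0 r) := by
  ext r j
  by_cases h : j = i
  · subst h; simp
  · simp [Matrix.updateCol_ne h, Function.update_of_ne h]

theorem ua_box {d : ℕ} (K : Set (Fin d → ℝ)) (hK : IsCompact K) (hc : Convex ℝ K)
    (hi : (interior K).Nonempty) :
    ∃ (x0 : Fin d → ℝ) (T : Matrix (Fin d) (Fin d) ℝ), T.det ≠ 0 ∧
      (∀ b : Fin d → ℝ, (∀ i, 0 ≤ b i) → ∑ i, b i ≤ 1 → x0 + T.mulVec b ∈ K) ∧
      ∀ y ∈ K, ∃ b : Fin d → ℝ, (∀ i, |b i| ≤ 1) ∧ y = x0 + T.mulVec b := by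
  set S : Set ((Fin d → ℝ) × (Fin d → Fin d → ℝ)) := K ×ˢ (univ.pi fun _ => K) with hS
  have hScomp : IsCompact S := hK.prod (isCompact_univ_pi fun _ => hK)
  set f : (Fin d → ℝ) × (Fin d → Fin d → ℝ) → ℝ :=
    fun p => |(Matrix.of (fun r j => p.2 j r - p.1 r)).det| with hf
  have hfc : Continuous f := by
    apply Continuous.abs
    apply Continuous.matrix_det
    apply continuous_matrix
    intro i j
    simp only [Matrix.of_apply]
    fun_prop
  obtain ⟨c, hcK⟩ := hi
  obtain ⟨ε, hε, hball⟩ := Metric.isOpen_iff.1 isOpen_interior c hcK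
  have hne : S.Nonempty := ⟨(c, fun _ => c), interior_subset hcK, fun _ _ => interior_subset hcK⟩
  obtain ⟨p, hpS, hpmax⟩ := hScomp.exists_isMaxOn hne hfc.continuousOn
  obtain ⟨x0, x⟩ := p
  have hx0 : x0 ∈ K := hpS.1
  have hx : ∀ i, x i ∈ K := fun i => hpS.2 i (mem_univ i)
  have hpos : 0 < f (x0, x) := by
    have h1 : (c, fun j => c + Pi.single j (ε / 2)) ∈ S := by
      refine ⟨interior_subset hcK, fun j _ => interior_subset (hball ?_)⟩
      simp only [Metric.mem_ball, dist_self_add_left]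
      refine (pi_norm_lt_iff hε).2 fun i => ?_
      by_cases h : i = j
      · subst h; simp [abs_of_pos hε]; linarith
      · simp [h, hε]
    refine lt_of_lt_of_le ?_ (hpmax h1)
    have : (Matrix.of (fun r j => (c + Pi.single j (ε / 2) : Fin d → ℝ) r - c r))
        = Matrix.diagonal (fun _ : Fin d => ε / 2) := by
      ext r j
      by_cases h : r = j
      · subst h; simp
      · simp [h]
    simp only [hf, this, Matrix.det_diagonal]
    positivity
  have hdet : (Matrix.of (fun r j => x j r - x0 r)).det ≠ 0 := abs_pos.1 hpos
  refine ⟨x0, Matrix.of (fun r j => x j r - x0 r), hdet, ?_, ?_⟩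
  · intro b hb hsum
    have h1 : x0 + (Matrix.of (fun r j => x j r - x0 r)).mulVec b
        = (1 - ∑ i, b i) • x0 + ∑ i, b i • x i := by
      ext r
      simp only [Matrix.mulVec, dotProduct, Pi.add_apply, Matrix.of_apply, Pi.smul_apply,
        smul_eq_mul, Finset.sum_apply]
      simp only [sub_mul, Finset.sum_sub_distrib, ← Finset.mul_sum]
      simp only [mul_comm]
      ring
    rw [h1]
    have := hc.sum_mem (t := Finset.univ) (w := fun o : Option (Fin d) => o.elim (1 - ∑ i, b i) b)
      (z := fun o => o.elim x0 x) (by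
        rintro (_ | i) _
        · simpa using hsum
        · exact hb i) (by simp [Fintype.sum_option]) (by
        rintro (_ | i) _
        · exact hx0
        · exact hx i)
    simpa [Fintype.sum_option] using this
  · intro y hy
    set T := Matrix.of (fun r j => x j r - x0 r) with hT
    refine ⟨fun i => T.cramer (y - x0) i / T.det, ?_, ?_⟩
    · intro i
      rw [abs_div, div_le_one (abs_pos.2 hdet), Matrix.cramer_apply, hT, ua_updateCol]
      have : (x0, Function.update x i y) ∈ S := by
        refine ⟨hx0, fun j _ => ?_⟩
        by_cases h : j = i
        · subst h; simpa using hy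
        · simpa [Function.update_of_ne h] using hx j
      exact hpmax this
    · have h2 : T.mulVec (fun i => T.cramer (y - x0) i / T.det)
          = (T.det)⁻¹ • T.mulVec (T.cramer (y - x0)) := by
        rw [← Matrix.mulVec_smul]; congr 1; ext i; simp [div_eq_inv_mul]
      rw [h2, Matrix.mulVec_cramer, smul_smul, inv_mul_cancel₀ hdet, one_smul]
      abel

/-- Integer points of `N • D`. -/
def ub_Z {d : ℕ} (D : Set (Fin d → ℝ)) (N : ℕ) : Set (Fin d → ℤ) :=
  {z | (fun i => (z i : ℝ) / N) ∈ D}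

theorem ub_image {d : ℕ} (D : Set (Fin d → ℝ)) (N : ℕ) :
    (fun (z : Fin d → ℤ) (i : Fin d) => (z i : ℝ) / N) '' ub_Z D N
      = D ∩ {v : Fin d → ℝ | ∀ i, ∃ z : ℤ, v i = (z : ℝ) / N} := by
  ext v
  constructor
  · rintro ⟨z, hz, rfl⟩
    exact ⟨hz, fun i => ⟨z i, rfl⟩⟩
  · rintro ⟨hv, h⟩
    choose z hz using h
    refine ⟨z, ?_, ?_⟩
    · have : (fun i => (z i : ℝ) / N) = v := by ext i; rw [hz]
      simpa [ub_Z, this] using hv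
    · ext i; rw [hz]

theorem ub_inj {d : ℕ} (N : ℕ) (hN : N ≠ 0) :
    Function.Injective (fun (z : Fin d → ℤ) (i : Fin d) => (z i : ℝ) / N) := by
  intro z w h
  ext i
  have := congrFun h i
  have hN' : (N : ℝ) ≠ 0 := by exact_mod_cast hN
  field_simp at this
  exact_mod_cast this

open scoped Pointwise in
theorem ub_lat {d : ℕ} (N : ℕ) (hN : N ≠ 0) :
    ((N : ℝ)⁻¹ • (Submodule.span ℤ (range (Pi.basisFun ℝ (Fin d))) : Set (Fin d → ℝ)))
      = {v : Fin d → ℝ | ∀ i, ∃ z : ℤ, v i = (z : ℝ) / N} := by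
  have hN' : (N : ℝ) ≠ 0 := by exact_mod_cast hN
  ext v
  rw [Set.mem_inv_smul_set_iff₀ hN']
  simp only [SetLike.mem_coe, Module.Basis.mem_span_iff_repr_mem, Pi.basisFun_repr, Set.mem_ofPred_eq]
  refine forall_congr' fun i => ?_
  simp only [Pi.smul_apply, smul_eq_mul, algebraMap_int_eq, mem_range, eq_intCast]
  refine exists_congr fun z => ?_
  rw [eq_div_iff hN', eq_comm, mul_comm]

theorem ub_finite {d : ℕ} (D : Set (Fin d → ℝ)) (hD : Bornology.IsBounded D) (N : ℕ) (hN : N ≠ 0) :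
    (ub_Z D N).Finite := by
  obtain ⟨R, hR⟩ := hD.subset_closedBall 0
  have hN' : (0 : ℝ) < N := by exact_mod_cast Nat.pos_of_ne_zero hN
  refine Set.Finite.subset (Set.finite_Icc (fun _ => -⌈R * N⌉) (fun _ => ⌈R * N⌉)) ?_
  intro z hz
  have h1 := hR hz
  rw [mem_closedBall_zero_iff] at h1
  have h2 : ∀ i, |(z i : ℝ)| ≤ R * N := by
    intro i
    have h3 := (norm_le_pi_norm _ i).trans h1
    simp only [Real.norm_eq_abs, abs_div, Nat.abs_cast] at h3
    rwa [div_le_iff₀ hN'] at h3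
  constructor
  · intro i
    have := (abs_le.1 ((h2 i).trans (Int.le_ceil _))).1
    exact_mod_cast this
  · intro i
    have := (abs_le.1 ((h2 i).trans (Int.le_ceil _))).2
    exact_mod_cast this

theorem ub_count {d : ℕ} (D : Set (Fin d → ℝ)) (hD : IsCompact D) (hc : Convex ℝ D)
    (hv : 0 < volume.real D) :
    ∀ᶠ N : ℕ in atTop, volume.real D / 2 * (N : ℝ) ^ d ≤ (ub_Z D N).ncard ∧
      ((ub_Z D N).ncard : ℝ) ≤ 2 * volume.real D * (N : ℝ) ^ d := by
  have h := tendsto_card_div_pow_atTop_volume (ι := Fin d) D hD.isBounded hD.measurableSet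
    (hc.addHaar_frontier volume)
  have h1 := h.eventually_const_le (u := volume.real D / 2) (by linarith)
  have h2 := h.eventually_le_const (u := 2 * volume.real D) (by linarith)
  filter_upwards [h1, h2, eventually_gt_atTop 0] with N h1 h2 hN
  have hN' : (0 : ℝ) < (N : ℝ) ^ d := by positivity
  rw [ub_lat N hN.ne', ← ub_image, Nat.card_coe_set_eq,
    Set.ncard_image_of_injective _ (ub_inj N hN.ne'), Fintype.card_fin] at h1 h2
  rw [le_div_iff₀ hN'] at h1
  rw [div_le_iff₀ hN'] at h2
  exact ⟨h1, h2⟩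

def uc_bas {D : ℕ} {ι : Type} [Fintype ι] (u : ι → Fin D → ℝ) (σ : Finset ι) : Prop :=
  LinearIndepOn ℝ u (σ : Set ι) ∧ Submodule.span ℝ (u '' (σ : Set ι)) = ⊤

def uc_cn {D : ℕ} {ι : Type} [Fintype ι] (u : ι → Fin D → ℝ) (σ : Finset ι) : Set (Fin D → ℝ) :=
  {x | ∃ l : ι → ℝ, (∀ i, 0 ≤ l i) ∧ (∀ i, i ∉ σ → l i = 0) ∧ x = ∑ i, l i • u i}

def uc_gen {D : ℕ} {ι : Type} [Fintype ι] (u : ι → Fin D → ℝ) (x : Fin D → ℝ) : Prop :=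
  ∀ s : Finset ι, Submodule.span ℝ (u '' (s : Set ι)) ≠ ⊤ → x ∉ Submodule.span ℝ (u '' (s : Set ι))

theorem uc_phi {D : ℕ} {ι : Type} [Fintype ι] (u : ι → Fin D → ℝ) (σ : Finset ι)
    (h : uc_bas u σ) : ∃ Φ : (ι → ℝ) →ₗ[ℝ] ((Fin D → ℝ) →ₗ[ℝ] ℝ), ∀ η, ∀ i ∈ σ, Φ η (u i) = η i := by
  have hli : LinearIndependent ℝ (fun i : (σ : Set ι) => u i) := h.1
  have hsp : ⊤ ≤ Submodule.span ℝ (Set.range (fun i : (σ : Set ι) => u i)) := by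
    rw [← h.2, Set.image_eq_range]
  let b := Module.Basis.mk hli hsp
  refine ⟨(b.constr ℝ).toLinearMap ∘ₗ LinearMap.funLeft ℝ ℝ (fun i : (σ : Set ι) => (i : ι)), ?_⟩
  intro η i hi
  have : u i = b ⟨i, hi⟩ := by simp [b]
  rw [this]
  simp only [LinearMap.comp_apply, LinearEquiv.coe_coe, Module.Basis.constr_basis,
    LinearMap.funLeft_apply]

theorem uc_circ {D : ℕ} {ι : Type} [Fintype ι] (u : ι → Fin D → ℝ) (σ : Finset ι)
    (h : uc_bas u σ) (j : ι) (hj : j ∉ σ) :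
    ∃ c : ι → ℝ, c j = 1 ∧ (∀ i, i ∉ σ → i ≠ j → c i = 0) ∧ ∑ i, c i • u i = 0 ∧
      ∀ (η : ι → ℝ) (A : (Fin D → ℝ) →ₗ[ℝ] ℝ), (∀ i ∈ σ, A (u i) = η i) →
        ∑ i, c i * η i = η j - A (u j) := by
  classical
  have hm : u j ∈ Submodule.span ℝ (u '' (σ : Set ι)) := by rw [h.2]; trivial
  rw [Submodule.mem_span_image_finset_iff_exists_fun'] at hm
  obtain ⟨a, ha⟩ := hm
  have e1 : ∀ (M : Type) [AddCommGroup M] [Module ℝ M] (w : ι → M),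
      ∑ i, (if i = j then (1:ℝ) else if i ∈ σ then - a i else 0) • w i = w j - ∑ i ∈ σ, a i • w i := by
    intro M _ _ w
    rw [← Finset.add_sum_erase _ _ (Finset.mem_univ j)]
    simp only [if_true, one_smul]
    rw [sub_eq_add_neg, ← Finset.sum_neg_distrib]
    congr 1
    rw [← Finset.sum_subset (s₁ := σ) (s₂ := Finset.univ.erase j)]
    · apply Finset.sum_congr rfl
      intro i hi
      have : i ≠ j := fun e => hj (e ▸ hi)
      simp [this, hi]
    · intro i hi
      have : i ≠ j := fun e => hj (e ▸ hi)
      simp [this]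
    · intro i hi hi'
      have : i ≠ j := (Finset.mem_erase.1 hi).1
      simp [this, hi']
  refine ⟨fun i => if i = j then 1 else if i ∈ σ then - a i else 0, by simp, ?_, ?_, ?_⟩
  · intro i hi hij; simp [hi, hij]
  · rw [e1, ha, sub_self]
  · intro η A hA
    have := e1 ℝ η
    simp only [smul_eq_mul] at this
    rw [this, ← ha, map_sum]
    congr 1
    apply Finset.sum_congr rfl
    intro i hi
    simp [hA i hi]

theorem uc_pos {D : ℕ} {ι : Type} [Fintype ι] (u : ι → Fin D → ℝ) (σ : Finset ι)
    (h : uc_bas u σ) (x : Fin D → ℝ) (hx : uc_gen u x) (l : ι → ℝ) (h0 : ∀ i, i ∉ σ → l i = 0)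
    (hl : x = ∑ i, l i • u i) : ∀ i ∈ σ, l i ≠ 0 := by
  classical
  intro i hi hli
  have hs : x ∈ Submodule.span ℝ (u '' ((σ.erase i : Finset ι) : Set ι)) := by
    rw [hl]
    apply Submodule.sum_mem
    intro j _
    by_cases hj : j ∈ σ.erase i
    · exact Submodule.smul_mem _ _ (Submodule.subset_span ⟨j, hj, rfl⟩)
    · have : l j = 0 := by
        by_cases e : j = i
        · rw [e]; exact hli
        · apply h0; intro hj'; exact hj (Finset.mem_erase.2 ⟨e, hj'⟩)
      rw [this, zero_smul]; exact Submodule.zero_mem _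
  refine hx _ ?_ hs
  intro ht
  have := (linearIndepOn_iff_notMem_span.1 h.1) i hi
  apply this
  rw [show ((σ : Set ι) \ {i}) = ((σ.erase i : Finset ι) : Set ι) by simp]
  rw [ht]; trivial

theorem uc_tri {D : ℕ} {ι : Type} [Fintype ι] (u : ι → Fin D → ℝ) (t : ι → ℝ)
    (ℓ : (Fin D → ℝ) →ₗ[ℝ] ℝ) (hℓ : ∀ i, ℓ (u i) = 1) :
    ∃ (𝒯 : Finset (Finset ι)) (A : Finset ι → (Fin D → ℝ) →ₗ[ℝ] ℝ),
      (∀ σ ∈ 𝒯, uc_bas u σ ∧ (∀ j, A σ (u j) ≤ t j) ∧ (∀ j ∈ σ, A σ (u j) = t j)) ∧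
      ∀ x, uc_gen u x → x ∈ uc_cn u Finset.univ → ∃! σ, σ ∈ 𝒯 ∧ x ∈ uc_cn u σ := by
  classical
  have hΦ : ∀ σ : Finset ι, ∃ Φ : (ι → ℝ) →ₗ[ℝ] ((Fin D → ℝ) →ₗ[ℝ] ℝ),
      uc_bas u σ → ∀ η, ∀ i ∈ σ, Φ η (u i) = η i := by
    intro σ
    by_cases h : uc_bas u σ
    · obtain ⟨Φ, h'⟩ := uc_phi u σ h; exact ⟨Φ, fun _ => h'⟩
    · exact ⟨0, fun h' => absurd h' h⟩
  choose Φ hΦ using hΦ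
  let L : Finset ι → ι → ((ι → ℝ) →ₗ[ℝ] ℝ) := fun σ j =>
    LinearMap.proj j - (LinearMap.applyₗ (u j)) ∘ₗ Φ σ
  have hL : ∀ σ j η, L σ j η = η j - Φ σ η (u j) := by
    intro σ j η; simp [L]
  have hom : ∃ ω : ι → ℝ, ∀ σ j, uc_bas u σ → j ∉ σ → L σ j ω ≠ 0 := by
    let I := {p : Finset ι × ι // uc_bas u p.1 ∧ p.2 ∉ p.1}
    obtain ⟨ω, hω⟩ := Module.Dual.exists_forall_ne_zero_of_forall_exists
      (fun p : I => L p.1.1 p.1.2) (by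
        rintro ⟨⟨σ, j⟩, hb, hj⟩
        refine ⟨Pi.single j 1, ?_⟩
        have h1 : Φ σ (Pi.single j 1) = 0 := by
          apply LinearMap.ext_on hb.2
          rintro _ ⟨i, hi, rfl⟩
          rw [hΦ σ hb _ i hi]
          have : i ≠ j := fun e => hj (e ▸ hi)
          simp [this]
        simp only [hL]
        rw [h1]; simp)
    exact ⟨ω, fun σ j hb hj => hω ⟨⟨σ, j⟩, hb, hj⟩⟩
  obtain ⟨ω, hω⟩ := hom
  have hη : ∃ η : ι → ℝ, ∀ σ j, uc_bas u σ → j ∉ σ → L σ j η ≠ 0 ∧ (L σ j t < 0 → L σ j η < 0) := by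
    have : ∀ᶠ ε : ℝ in nhdsWithin 0 (Set.Ioi 0), ∀ σ : Finset ι, ∀ j, uc_bas u σ → j ∉ σ →
        L σ j (t + ε • ω) ≠ 0 ∧ (L σ j t < 0 → L σ j (t + ε • ω) < 0) := by
      rw [eventually_all]; intro σ
      rw [eventually_all]; intro j
      by_cases hb : uc_bas u σ ∧ j ∉ σ
      swap
      · filter_upwards with ε h1 h2; exact absurd ⟨h1, h2⟩ hb
      have hT : Tendsto (fun ε : ℝ => L σ j (t + ε • ω)) (nhdsWithin 0 (Set.Ioi 0)) (nhds (L σ j t)) := by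
        have : Continuous (fun ε : ℝ => L σ j (t + ε • ω)) := by
          simp only [map_add, map_smul]; fun_prop
        have := (this.tendsto 0).mono_left (nhdsWithin_le_nhds (s := Set.Ioi 0))
        simpa using this
      rcases lt_trichotomy (L σ j t) 0 with h | h | h
      · filter_upwards [hT.eventually (gt_mem_nhds h)] with ε hε _ _
        exact ⟨hε.ne, fun _ => hε⟩
      · filter_upwards [self_mem_nhdsWithin] with ε hε _ _
        rw [map_add, map_smul, h]
        refine ⟨?_, fun h' => absurd h' (lt_irrefl _)⟩
        simp only [zero_add, smul_eq_mul]
        exact mul_ne_zero (ne_of_gt hε) (hω σ j hb.1 hb.2)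
      · filter_upwards [hT.eventually (lt_mem_nhds h)] with ε hε _ _
        exact ⟨hε.ne', fun h' => absurd h' (not_lt.2 h.le)⟩
    obtain ⟨ε, hε⟩ := this.exists
    exact ⟨_, hε⟩
  obtain ⟨η, hη⟩ := hη
  refine ⟨Finset.univ.filter (fun σ => uc_bas u σ ∧ ∀ j, 0 ≤ L σ j η), fun σ => Φ σ t, ?_, ?_⟩
  · intro σ hσ
    simp only [Finset.mem_filter, Finset.mem_univ, true_and] at hσ
    refine ⟨hσ.1, ?_, fun j hj => hΦ σ hσ.1 t j hj⟩
    intro j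
    by_cases hj : j ∈ σ
    · exact (hΦ σ hσ.1 t j hj).le
    · by_contra hc
      have := (hη σ j hσ.1 hj).2 (by rw [hL]; linarith [not_le.1 hc])
      linarith [hσ.2 j]
  · intro x hx hxc
    obtain ⟨l0, hl0, -, hxl0⟩ := hxc
    -- minimise
    let S : Set (ι → ℝ) := {l | (∀ i, 0 ≤ l i) ∧ ∑ i, l i • u i = x}
    have hScl : IsClosed S := by
      apply IsClosed.inter
      · exact isClosed_Ici (a := (0 : ι → ℝ))
      · exact isClosed_eq (by fun_prop) continuous_const
    have hSb : S ⊆ Set.Icc 0 (fun _ => ℓ x) := by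
      rintro l ⟨h1, h2⟩
      refine ⟨fun i => h1 i, fun i => ?_⟩
      rw [← h2, map_sum]
      simp only [map_smul, hℓ, smul_eq_mul, mul_one]
      exact Finset.single_le_sum (fun i _ => h1 i) (Finset.mem_univ i)
    have hSc : IsCompact S := (isCompact_Icc).of_isClosed_subset hScl hSb
    obtain ⟨l, hlS, hmin⟩ := hSc.exists_isMinOn ⟨l0, hl0, hxl0.symm⟩
      (f := fun l : ι → ℝ => ∑ i, l i * η i) (by fun_prop)
    have hmin : ∀ l' ∈ S, ∑ i, l i * η i ≤ ∑ i, l' i * η i := fun l' h => hmin h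
    let s : Finset ι := Finset.univ.filter (fun i => l i ≠ 0)
    have hspan : Submodule.span ℝ (u '' (s : Set ι)) = ⊤ := by
      by_contra hne
      apply hx s hne
      rw [← hlS.2]
      apply Submodule.sum_mem
      intro i _
      by_cases hi : l i = 0
      · rw [hi, zero_smul]; exact Submodule.zero_mem _
      · exact Submodule.smul_mem _ _ (Submodule.subset_span ⟨i, by simp [s, hi], rfl⟩)
    obtain ⟨b, hbs, -, hspb, hbli⟩ := exists_linearIndepOn_extension (K := ℝ) (v := u)
      (s := ∅) (t := (s : Set ι)) (linearIndepOn_empty _ _) (Set.empty_subset _)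
    obtain ⟨σ, rfl⟩ : ∃ σ : Finset ι, (σ : Set ι) = b := ⟨(Set.toFinite b).toFinset, by simp⟩
    have hbas : uc_bas u σ := by
      refine ⟨hbli, ?_⟩
      rw [eq_top_iff, ← hspan]
      exact Submodule.span_le.2 hspb
    have hspos : ∀ i ∈ σ, 0 < l i := by
      intro i hi
      have h1 : i ∈ s := hbs hi
      have h2 : l i ≠ 0 := by simpa [s] using h1
      exact lt_of_le_of_ne (hlS.1 i) (Ne.symm h2)
    have hmove : ∀ c : ι → ℝ, (∀ i, l i = 0 → 0 ≤ c i) → ∑ i, c i • u i = 0 →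
        0 ≤ ∑ i, c i * η i := by
      intro c hc hc0
      have : ∀ᶠ ε : ℝ in nhdsWithin 0 (Set.Ioi 0), ∀ i, 0 ≤ l i + ε * c i := by
        rw [eventually_all]; intro i
        rcases (hlS.1 i).eq_or_lt with h | h
        · filter_upwards [self_mem_nhdsWithin] with ε hε
          rw [← h, zero_add]
          exact mul_nonneg (le_of_lt hε) (hc i h.symm)
        · have hT : Tendsto (fun ε : ℝ => l i + ε * c i) (nhdsWithin 0 (Set.Ioi 0)) (nhds (l i)) := by
            have : Continuous (fun ε : ℝ => l i + ε * c i) := by fun_prop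
            have := (this.tendsto 0).mono_left (nhdsWithin_le_nhds (s := Set.Ioi 0))
            simpa using this
          filter_upwards [hT.eventually (lt_mem_nhds h)] with ε hε
          exact hε.le
      obtain ⟨ε, hε, hε0⟩ := (this.and self_mem_nhdsWithin).exists
      have hε0 : 0 < ε := hε0
      have := hmin (fun i => l i + ε * c i) ⟨hε, by
        simp only [add_smul, mul_smul, Finset.sum_add_distrib, ← Finset.smul_sum, hc0, smul_zero,
          add_zero]
        exact hlS.2⟩
      simp only [add_mul, Finset.sum_add_distrib, mul_assoc, ← Finset.mul_sum] at this
      have h3 : 0 ≤ ε * ∑ i, c i * η i := by linarith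
      exact nonneg_of_mul_nonneg_right h3 hε0
    have hge : ∀ j, 0 ≤ L σ j η := by
      intro j
      by_cases hj : j ∈ σ
      · rw [hL, hΦ σ hbas η j hj, sub_self]
      · obtain ⟨c, hcj, hcn, hc0, hcA⟩ := uc_circ u σ hbas j hj
        rw [hL, ← hcA η (Φ σ η) (hΦ σ hbas η)]
        apply hmove c _ hc0
        intro i hi
        by_cases hij : i = j
        · rw [hij, hcj]; exact zero_le_one
        · rw [hcn i _ hij]
          intro h; exact absurd hi (hspos i h).ne'
    have hl0' : ∀ i, i ∉ σ → l i = 0 := by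
      intro j hj
      by_contra hlj
      obtain ⟨c, hcj, hcn, hc0, hcA⟩ := uc_circ u σ hbas j hj
      have h1 := hmove (fun i => - c i) (by
        intro i hi
        have hij : i ≠ j := fun e => hlj (e ▸ hi)
        rw [hcn i _ hij, neg_zero]
        intro h; exact absurd hi (hspos i h).ne') (by simp [hc0])
      simp only [neg_mul, Finset.sum_neg_distrib] at h1
      rw [hcA η (Φ σ η) (hΦ σ hbas η), ← hL] at h1
      exact (hη σ j hbas hj).1 (le_antisymm (by linarith) (hge j))
    refine ⟨σ, ⟨by simp only [Finset.mem_filter, Finset.mem_univ, true_and]; exact ⟨hbas, hge⟩,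
      l, hlS.1, hl0', hlS.2.symm⟩, ?_⟩
    rintro τ ⟨hτ, l', hl'0, hl'n, hl'x⟩
    simp only [Finset.mem_filter, Finset.mem_univ, true_and] at hτ
    have hpos := uc_pos u τ hτ.1 x hx l' hl'n hl'x
    -- evaluate
    have ev : ∀ (ρ : Finset ι), uc_bas u ρ → ∀ a : ι → ℝ, (∀ i, i ∉ ρ → a i = 0) →
        x = ∑ i, a i • u i → Φ ρ η x = ∑ i, a i * η i := by
      intro ρ hρ a ha hax
      rw [hax, map_sum]
      apply Finset.sum_congr rfl
      intro i _
      rw [map_smul, smul_eq_mul]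
      by_cases hi : i ∈ ρ
      · rw [hΦ ρ hρ η i hi]
      · simp [ha i hi]
    have ev2 : ∀ (ρ : Finset ι), ∀ a : ι → ℝ, 
        x = ∑ i, a i • u i → Φ ρ η x = ∑ i, a i * η i - ∑ i, a i * L ρ i η := by
      intro ρ a hax
      rw [hax, map_sum, ← Finset.sum_sub_distrib]
      apply Finset.sum_congr rfl
      intro i _
      rw [map_smul, smul_eq_mul, hL]; ring
    have a1 := ev σ hbas l hl0' hlS.2.symm
    have a2 := ev2 σ l' hl'x
    have b1 := ev τ hτ.1 l' hl'n hl'x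
    have b2 := ev2 τ l hlS.2.symm
    have c1 : ∀ i ∈ Finset.univ, 0 ≤ l' i * L σ i η := fun i _ => mul_nonneg (hl'0 i) (hge i)
    have c2 : ∀ i ∈ Finset.univ, 0 ≤ l i * L τ i η := fun i _ => mul_nonneg (hlS.1 i) (hτ.2 i)
    have s1 := Finset.sum_nonneg c1
    have s2 := Finset.sum_nonneg c2
    have z1 := (Finset.sum_eq_zero_iff_of_nonneg c1).1 (by linarith)
    have z2 := (Finset.sum_eq_zero_iff_of_nonneg c2).1 (by linarith)
    ext i
    constructor
    · intro hi
      by_contra hi'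
      rcases mul_eq_zero.1 (z1 i (Finset.mem_univ i)) with h | h
      · exact hpos i hi h
      · exact (hη σ i hbas hi').1 h
    · intro hi
      by_contra hi'
      rcases mul_eq_zero.1 (z2 i (Finset.mem_univ i)) with h | h
      · exact (hspos i hi).ne' h
      · exact (hη τ i hτ.1 hi').1 h

def ud_u {k : ℕ} {ι : Type} (s : ι → Fin k → ℝ) : ι → Fin (k+1) → ℝ := fun j => Fin.cons 1 (s j)

def ud_g {k : ℕ} (A : (Fin (k+1) → ℝ) →ₗ[ℝ] ℝ) : Fin k → ℝ := fun i => A (Pi.single i.succ 1)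

structure UD (k : ℕ) where
  ι : Type
  fin : Fintype ι
  ne : Nonempty ι
  s : ι → Fin k → ℝ
  t : ι → ℝ
  hs : ∀ j i, |s j i| ≤ 3
  hΩ : ∀ x : Fin (k+1) → ℝ, 0 ≤ x 0 → (∀ i : Fin k, |x i.succ| ≤ 3 * x 0) →
    x ∈ uc_cn (ud_u s) Finset.univ
  T : Finset (Finset ι)
  A : Finset ι → (Fin (k+1) → ℝ) →ₗ[ℝ] ℝ
  hA : ∀ σ ∈ T, uc_bas (ud_u s) σ ∧ (∀ j, A σ (ud_u s j) ≤ t j) ∧ (∀ j ∈ σ, A σ (ud_u s j) = t j)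
  hT : ∀ x, uc_gen (ud_u s) x → x ∈ uc_cn (ud_u s) Finset.univ → ∃! σ, σ ∈ T ∧ x ∈ uc_cn (ud_u s) σ

namespace UD
variable {k : ℕ} (Y : UD k)

instance : Fintype Y.ι := Y.fin
instance : Nonempty Y.ι := Y.ne

def u : Y.ι → Fin (k+1) → ℝ := ud_u Y.s
def H (g : Fin k → ℝ) : ℝ :=
  Finset.univ.sup' Finset.univ_nonempty (fun j : Y.ι => ∑ i, g i * Y.s j i - Y.t j)
def C (σ : Finset Y.ι) : Set (Fin (k+1) → ℝ) := uc_cn Y.u σ ∩ {x | x 0 < 1}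
def w (σ : Finset Y.ι) : ℝ := volume.real (Y.C σ)
def g (σ : Finset Y.ι) : Fin k → ℝ := ud_g (Y.A σ)

theorem u0 (j : Y.ι) : Y.u j 0 = 1 := rfl
theorem us (j : Y.ι) (i : Fin k) : Y.u j i.succ = Y.s j i := rfl

theorem le_H (g : Fin k → ℝ) (j : Y.ι) : ∑ i, g i * Y.s j i - Y.t j ≤ Y.H g :=
  Finset.le_sup' (fun j : Y.ι => ∑ i, g i * Y.s j i - Y.t j) (Finset.mem_univ j)

theorem ex_H (g : Fin k → ℝ) : ∃ j : Y.ι, Y.H g = ∑ i, g i * Y.s j i - Y.t j := by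
  obtain ⟨j, -, h⟩ := Finset.exists_mem_eq_sup' Finset.univ_nonempty
    (fun j : Y.ι => ∑ i, g i * Y.s j i - Y.t j)
  exact ⟨j, h⟩

theorem lin (A : (Fin (k+1) → ℝ) →ₗ[ℝ] ℝ) (x : Fin (k+1) → ℝ) :
    A x = x 0 * A (Pi.single 0 1) + ∑ i, ud_g A i * x i.succ := by
  have h1 : ∀ i : Fin (k+1), A (Pi.single i (x i)) = x i * A (Pi.single i 1) := by
    intro i
    rw [← smul_eq_mul (x i), ← map_smul, ← Pi.single_smul, smul_eq_mul, mul_one]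
  conv_lhs => rw [← Finset.univ_sum_single x]
  rw [map_sum, Fin.sum_univ_succ, h1]
  congr 1
  apply Finset.sum_congr rfl
  intro i _
  rw [h1]; simp [ud_g, mul_comm]

theorem gen_ae : ∀ᵐ x, uc_gen Y.u x := by
  unfold uc_gen
  rw [ae_all_iff]; intro s
  by_cases h : Submodule.span ℝ (Y.u '' (s : Set Y.ι)) = ⊤
  · filter_upwards with x hx; exact absurd h hx
  · have := Measure.addHaar_submodule (volume : Measure (Fin (k+1) → ℝ)) _ h
    filter_upwards [measure_eq_zero_iff_ae_notMem.1 this] with x hx _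
    exact hx

theorem x0_pos (σ : Finset Y.ι) (x) (hx : x ∈ uc_cn Y.u σ) (hg : uc_gen Y.u x) : 0 < x 0 := by
  obtain ⟨l, h1, -, h3⟩ := hx
  have h4 : x 0 = ∑ i, l i := by
    rw [h3, Finset.sum_apply]
    simp [u0]
  rw [h4]
  rcases (Finset.sum_nonneg fun i (_ : i ∈ Finset.univ) => h1 i).eq_or_lt with h | h
  · exfalso
    have h5 := (Finset.sum_eq_zero_iff_of_nonneg (fun i _ => h1 i)).1 h.symm
    have hx0 : x = 0 := by
      rw [h3]; apply Finset.sum_eq_zero; intro i hi; rw [h5 i hi, zero_smul]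
    refine hg ∅ ?_ ?_
    · simp
    · rw [hx0]; exact Submodule.zero_mem _
  · exact h

theorem cn_box (σ : Finset Y.ι) (x) (hx : x ∈ uc_cn Y.u σ) :
    0 ≤ x 0 ∧ ∀ i : Fin k, |x i.succ| ≤ 3 * x 0 := by
  obtain ⟨l, h1, -, h3⟩ := hx
  have h4 : x 0 = ∑ i, l i := by
    rw [h3, Finset.sum_apply]
    simp [u0]
  refine ⟨by rw [h4]; exact Finset.sum_nonneg fun i _ => h1 i, fun i => ?_⟩
  rw [h4, h3, Finset.sum_apply, Finset.mul_sum]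
  refine (Finset.abs_sum_le_sum_abs _ _).trans (Finset.sum_le_sum fun j _ => ?_)
  rw [Pi.smul_apply, smul_eq_mul, us, abs_mul, abs_of_nonneg (h1 j), mul_comm]
  exact mul_le_mul_of_nonneg_right (Y.hs j i) (h1 j)

theorem A_e0 (σ) (hσ : σ ∈ Y.T) (hne : σ.Nonempty) : Y.A σ (Pi.single 0 1) = - Y.H (Y.g σ) := by
  apply le_antisymm
  · obtain ⟨j, hj⟩ := Y.ex_H (Y.g σ)
    have h1 := (Y.hA σ hσ).2.1 j
    rw [lin] at h1
    have h2 : ∑ i, ud_g (Y.A σ) i * ud_u Y.s j i.succ = ∑ i, Y.g σ i * Y.s j i := rfl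
    rw [h2] at h1
    have h3 : ud_u Y.s j 0 = 1 := rfl
    rw [h3] at h1
    linarith
  · obtain ⟨j, hj⟩ := hne
    have h1 := (Y.hA σ hσ).2.2 j hj
    rw [lin] at h1
    have h2 : ∑ i, ud_g (Y.A σ) i * ud_u Y.s j i.succ = ∑ i, Y.g σ i * Y.s j i := rfl
    rw [h2] at h1
    have h3 : ud_u Y.s j 0 = 1 := rfl
    rw [h3] at h1
    have := Y.le_H (Y.g σ) j
    linarith

theorem T_ne (σ) (hσ : σ ∈ Y.T) : σ.Nonempty := by
  by_contra h
  rw [Finset.not_nonempty_iff_eq_empty] at h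
  have := (Y.hA σ hσ).1.2
  rw [h] at this
  simp at this

theorem A_eq (σ) (hσ : σ ∈ Y.T) (x) :
    Y.A σ x = ∑ i, Y.g σ i * x i.succ - x 0 * Y.H (Y.g σ) := by
  rw [lin, Y.A_e0 σ hσ (Y.T_ne σ hσ)]
  have : ∑ i, ud_g (Y.A σ) i * x i.succ = ∑ i, Y.g σ i * x i.succ := rfl
  rw [this]; ring

theorem A_ge (σ) (hσ : σ ∈ Y.T) (x) (hx : x ∈ uc_cn Y.u σ) (g : Fin k → ℝ) :
    ∑ i, g i * x i.succ - x 0 * Y.H g ≤ Y.A σ x := by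
  obtain ⟨l, h1, h2, h3⟩ := hx
  have h4 : x 0 = ∑ i, l i := by
    rw [h3, Finset.sum_apply]
    simp [u0]
  have h5 : Y.A σ x = ∑ j, l j * Y.t j := by
    rw [h3, map_sum]
    apply Finset.sum_congr rfl
    intro j _
    rw [map_smul, smul_eq_mul]
    by_cases hj : j ∈ σ
    · rw [show Y.u = ud_u Y.s from rfl, (Y.hA σ hσ).2.2 j hj]
    · simp [h2 j hj]
  have h6 : ∑ i, g i * x i.succ = ∑ j, l j * ∑ i, g i * Y.s j i := by
    simp_rw [Finset.mul_sum]
    rw [Finset.sum_comm]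
    apply Finset.sum_congr rfl
    intro i _
    rw [h3, Finset.sum_apply, Finset.mul_sum]
    apply Finset.sum_congr rfl
    intro j _
    rw [Pi.smul_apply, smul_eq_mul, us]; ring
  rw [h5, h4, h6, Finset.sum_mul, ← Finset.sum_sub_distrib]
  apply Finset.sum_le_sum
  intro j _
  have := mul_le_mul_of_nonneg_left (Y.le_H g j) (h1 j)
  linarith

theorem A_max (σ) (hσ : σ ∈ Y.T) (x) (hx : x ∈ uc_cn Y.u σ) (τ) (hτ : τ ∈ Y.T) :
    Y.A τ x ≤ Y.A σ x := by
  rw [Y.A_eq τ hτ]; exact Y.A_ge σ hσ x hx _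

theorem convex_cn (σ : Finset Y.ι) : Convex ℝ (uc_cn Y.u σ) := by
  rintro x ⟨l, h1, h2, h3⟩ y ⟨l', h1', h2', h3'⟩ a b ha hb hab
  refine ⟨fun i => a * l i + b * l' i, fun i => ?_, fun i hi => ?_, ?_⟩
  · have := h1 i; have := h1' i; positivity
  · simp [h2 i hi, h2' i hi]
  · rw [h3, h3']; simp only [add_smul, Finset.sum_add_distrib, Finset.smul_sum, mul_smul]

theorem convex_C (σ : Finset Y.ι) : Convex ℝ (Y.C σ) := by
  refine (Y.convex_cn σ).inter ?_
  exact convex_halfSpace_lt (f := fun x : Fin (k+1) → ℝ => x 0) ⟨fun _ _ => rfl, fun _ _ => rfl⟩ 1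

theorem C_bdd (σ : Finset Y.ι) : Y.C σ ⊆ Set.Icc (fun _ => -3) (fun _ => 3) := by
  rintro x ⟨hx, hx1⟩
  have hx1 : x 0 < 1 := hx1
  obtain ⟨h0, h1⟩ := Y.cn_box σ x hx
  have : ∀ i, |x i| ≤ 3 := by
    intro i
    refine Fin.cases ?_ (fun i => ?_) i
    · rw [abs_of_nonneg h0]; linarith
    · linarith [h1 i]
  exact ⟨fun i => (abs_le.1 (this i)).1, fun i => (abs_le.1 (this i)).2⟩

theorem C_fin (σ : Finset Y.ι) : volume (Y.C σ) ≠ ⊤ :=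
  ne_top_of_le_ne_top (isCompact_Icc.measure_lt_top.ne) (measure_mono (Y.C_bdd σ))

def M (Y Y' : UD k) (σ : Finset Y.ι) (τ : Finset Y'.ι) : ℝ := volume.real (Y.C σ ∩ Y'.C τ)

theorem row (Y Y' : UD k) (σ : Finset Y.ι) : ∑ τ ∈ Y'.T, M Y Y' σ τ = Y.w σ := by
  unfold M w
  rw [← measureReal_biUnion_finset₀ (h := fun τ _ =>
    ne_top_of_le_ne_top (Y.C_fin σ) (measure_mono Set.inter_subset_left))]
  · apply measureReal_congr
    filter_upwards [Y'.gen_ae] with x hx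
    apply propext
    change (x ∈ ⋃ b ∈ Y'.T, Y.C σ ∩ Y'.C b) ↔ x ∈ Y.C σ
    simp only [Set.mem_iUnion]
    constructor
    · rintro ⟨τ, _, h⟩; exact h.1
    · intro h
      obtain ⟨h0, h1⟩ := Y.cn_box σ x h.1
      obtain ⟨τ, ⟨hτ, hτ'⟩, -⟩ := Y'.hT x hx (Y'.hΩ x h0 h1)
      exact ⟨τ, hτ, h, hτ', h.2⟩
  · intro τ hτ τ' hτ' hne
    change volume _ = 0
    rw [measure_eq_zero_iff_ae_notMem]
    filter_upwards [Y'.gen_ae] with x hx h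
    obtain ⟨h0, h1⟩ := Y.cn_box σ x h.1.1.1
    exact hne ((Y'.hT x hx (Y'.hΩ x h0 h1)).unique ⟨hτ, h.1.2.1⟩ ⟨hτ', h.2.2.1⟩)
  · intro τ _
    exact ((Y.convex_C σ).inter (Y'.convex_C τ)).nullMeasurableSet _

theorem M_symm (Y Y' : UD k) (σ : Finset Y.ι) (τ : Finset Y'.ι) : M Y Y' σ τ = M Y' Y τ σ := by
  unfold M; rw [Set.inter_comm]


theorem F_le (Y Y' : UD k) (σ) (hσ : σ ∈ Y.T) (τ) (hτ : τ ∈ Y'.T) (x) (hx : x ∈ uc_cn Y.u σ)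
    (hx' : x ∈ uc_cn Y'.u τ) (h0 : 0 < x 0) :
    Y.H (Y.g σ) - Y'.H (Y.g σ) ≤ Y.H (Y'.g τ) - Y'.H (Y'.g τ) := by
  have h1 := Y.A_ge σ hσ x hx (Y'.g τ)
  have h2 := Y'.A_ge τ hτ x hx' (Y.g σ)
  rw [Y.A_eq σ hσ] at h1
  rw [Y'.A_eq τ hτ] at h2
  have : x 0 * (Y.H (Y.g σ) - Y'.H (Y.g σ)) ≤ x 0 * (Y.H (Y'.g τ) - Y'.H (Y'.g τ)) := by linarith
  exact le_of_mul_le_mul_left this h0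

theorem F_eq (Y Y' : UD k) (σ) (hσ : σ ∈ Y.T) (τ) (hτ : τ ∈ Y'.T) (x) (hx : x ∈ uc_cn Y.u σ)
    (hx' : x ∈ uc_cn Y'.u τ) 
    (hF : Y.H (Y.g σ) - Y'.H (Y.g σ) = Y.H (Y'.g τ) - Y'.H (Y'.g τ)) :
    Y.A σ x - Y'.A τ x = - x 0 * (Y.H (Y'.g τ) - Y'.H (Y'.g τ)) := by
  have h1 := Y.A_ge σ hσ x hx (Y'.g τ)
  have h2 := Y'.A_ge τ hτ x hx' (Y.g σ)
  rw [Y.A_eq σ hσ] at h1 ⊢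
  rw [Y'.A_eq τ hτ] at h2 ⊢
  have : x 0 * (Y.H (Y.g σ) - Y'.H (Y.g σ)) = x 0 * (Y.H (Y'.g τ) - Y'.H (Y'.g τ)) := by rw [hF]
  linarith

theorem M_F (Y Y' : UD k) (hd : ∀ F : (Fin k → ℝ) → ℝ,
      ∑ σ ∈ Y.T, Y.w σ * F (Y.g σ) = ∑ τ ∈ Y'.T, Y'.w τ * F (Y'.g τ))
    (σ) (hσ : σ ∈ Y.T) (τ) (hτ : τ ∈ Y'.T) (hM : M Y Y' σ τ ≠ 0) :
    Y.H (Y.g σ) - Y'.H (Y.g σ) = Y.H (Y'.g τ) - Y'.H (Y'.g τ) := by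
  set F : (Fin k → ℝ) → ℝ := fun g => Y.H g - Y'.H g with hF
  have key : ∀ σ ∈ Y.T, ∀ τ ∈ Y'.T, 0 ≤ M Y Y' σ τ * (F (Y'.g τ) - F (Y.g σ)) := by
    intro σ hσ τ hτ
    by_cases hM : M Y Y' σ τ = 0
    · rw [hM, zero_mul]
    · refine mul_nonneg measureReal_nonneg ?_
      have : ∃ x ∈ Y.C σ ∩ Y'.C τ, uc_gen Y.u x := by
        by_contra hcon
        push Not at hcon
        apply hM
        unfold M
        rw [measureReal_def]
        have : volume (Y.C σ ∩ Y'.C τ) = 0 := by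
          rw [measure_eq_zero_iff_ae_notMem]
          filter_upwards [Y.gen_ae] with x hx h
          exact hcon x h hx
        rw [this]; rfl
      obtain ⟨x, hx, hxg⟩ := this
      have := F_le Y Y' σ hσ τ hτ x hx.1.1 hx.2.1 (Y.x0_pos σ x hx.1.1 hxg)
      simp only [hF]; linarith
  have hsum : ∑ σ ∈ Y.T, ∑ τ ∈ Y'.T, M Y Y' σ τ * (F (Y'.g τ) - F (Y.g σ)) = 0 := by
    simp only [mul_sub, Finset.sum_sub_distrib]
    have e1 : ∑ σ ∈ Y.T, ∑ τ ∈ Y'.T, M Y Y' σ τ * F (Y.g σ) = ∑ σ ∈ Y.T, Y.w σ * F (Y.g σ) := by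
      apply Finset.sum_congr rfl; intro σ _
      rw [← Finset.sum_mul, row]
    have e2 : ∑ σ ∈ Y.T, ∑ τ ∈ Y'.T, M Y Y' σ τ * F (Y'.g τ) = ∑ τ ∈ Y'.T, Y'.w τ * F (Y'.g τ) := by
      rw [Finset.sum_comm]
      apply Finset.sum_congr rfl; intro τ _
      rw [← Finset.sum_mul, ← row Y' Y]
      simp only [M_symm Y Y']
    rw [e1, e2, hd F, sub_self]
  have h1 := (Finset.sum_eq_zero_iff_of_nonneg (fun σ hσ => Finset.sum_nonneg (key σ hσ))).1 hsum σ hσ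
  have h2 := (Finset.sum_eq_zero_iff_of_nonneg (key σ hσ)).1 h1 τ hτ
  rcases mul_eq_zero.1 h2 with h | h
  · exact absurd h hM
  · simp only [hF] at h; linarith

def Om (k : ℕ) : Set (Fin (k+1) → ℝ) := {x | 0 < x 0 ∧ x 0 < 1 ∧ ∀ i : Fin k, |x i.succ| < 3 * x 0}

theorem Om_open : IsOpen (Om k) := by
  unfold Om
  apply IsOpen.inter (isOpen_lt continuous_const (continuous_apply 0))
  apply IsOpen.inter (isOpen_lt (continuous_apply 0) continuous_const)
  have : {x : Fin (k+1) → ℝ | ∀ i : Fin k, |x i.succ| < 3 * x 0} =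
      ⋂ i : Fin k, {x : Fin (k+1) → ℝ | |x i.succ| < 3 * x 0} := by ext; simp
  change IsOpen {x : Fin (k+1) → ℝ | ∀ i : Fin k, |x i.succ| < 3 * x 0}
  rw [this]
  exact isOpen_iInter_of_finite fun i => isOpen_lt (by fun_prop) (by fun_prop)

theorem Om_convex : Convex ℝ (Om k) := by
  rintro x ⟨h1, h2, h3⟩ y ⟨h1', h2', h3'⟩ a b ha hb hab
  have hpos : ∀ p q : ℝ, 0 < p → 0 < q → 0 < a * p + b * q := by
    intro p q hp hq
    rcases ha.eq_or_lt with h | h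
    · have : b = 1 := by linarith
      subst h; rw [this]; linarith
    · have := mul_pos h hp; have := mul_nonneg hb hq.le; linarith
  refine ⟨?_, ?_, fun i => ?_⟩
  · simpa using hpos _ _ h1 h1'
  · have := hpos _ _ (sub_pos.2 h2) (sub_pos.2 h2')
    simp only [Pi.add_apply, Pi.smul_apply, smul_eq_mul]; nlinarith
  · have := hpos _ _ (sub_pos.2 (h3 i)) (sub_pos.2 (h3' i))
    simp only [Pi.add_apply, Pi.smul_apply, smul_eq_mul]
    have h5 := abs_add_le (a * x i.succ) (b * y i.succ)
    rw [abs_mul, abs_mul, abs_of_nonneg ha, abs_of_nonneg hb] at h5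
    nlinarith

theorem Om_ae (S : Set (Fin (k+1) → ℝ)) (hS : ∀ x ∈ Om k, x ∈ closure (S ∩ Om k) → x ∈ S)
    (hae : ∀ᵐ x, x ∈ Om k → x ∈ S) : Om k ⊆ S := by
  intro x hx
  apply hS x hx
  rw [mem_closure_iff]
  intro o ho hxo
  by_contra hcon
  have hpos : 0 < volume (o ∩ Om k) := (ho.inter Om_open).measure_pos _ ⟨x, hxo, hx⟩
  apply hpos.ne'
  rw [measure_eq_zero_iff_ae_notMem]
  filter_upwards [hae] with y hy h
  exact hcon ⟨y, h.1, hy h.2, h.2⟩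

theorem Om_ext (ψ : (Fin (k+1) → ℝ) → ℝ) (hψ : Continuous ψ) (hae : ∀ᵐ x, x ∈ Om k → 0 ≤ ψ x)
    (s : Fin k → ℝ) (hs : ∀ i, |s i| ≤ 3) : 0 ≤ ψ (Fin.cons 1 s) := by
  have h1 : Om k ⊆ {x | 0 ≤ ψ x} := by
    apply Om_ae _ _ hae
    intro x _ hx
    have : IsClosed {x | 0 ≤ ψ x} := isClosed_le continuous_const hψ
    exact this.closure_subset (closure_mono Set.inter_subset_left hx)
  have h2 : Continuous (fun τ : ℝ => ψ (τ • (Fin.cons 1 (τ • s) : Fin (k+1) → ℝ))) := by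
    apply hψ.comp
    refine continuous_id.smul ?_
    rw [continuous_pi_iff]
    intro i
    refine Fin.cases ?_ (fun i => ?_) i
    · simp only [Fin.cons_zero]; fun_prop
    · simp only [Fin.cons_succ, Pi.smul_apply, smul_eq_mul]; fun_prop
  have h3 : Tendsto (fun τ : ℝ => ψ (τ • (Fin.cons 1 (τ • s) : Fin (k+1) → ℝ)))
      (nhdsWithin 1 (Set.Iio 1)) (nhds (ψ (Fin.cons 1 s))) := by
    have := (h2.tendsto 1).mono_left (nhdsWithin_le_nhds (s := Set.Iio 1))
    simpa using this
  apply ge_of_tendsto h3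
  have h4 : Set.Ioo (0:ℝ) 1 ∈ nhdsWithin (1:ℝ) (Set.Iio 1) := Ioo_mem_nhdsLT (by norm_num)
  filter_upwards [h4] with τ hτ
  apply h1
  refine ⟨?_, ?_, fun i => ?_⟩
  · simpa using hτ.1
  · simpa using hτ.2
  · simp only [Pi.smul_apply, Fin.cons_succ, smul_eq_mul, Fin.cons_zero, mul_one]
    rw [abs_mul, abs_mul, abs_of_pos hτ.1]
    have := hs i
    have h5 : τ * |s i| ≤ τ * 3 := mul_le_mul_of_nonneg_left this hτ.1.le
    have h6 : τ * (τ * |s i|) ≤ τ * (τ * 3) := mul_le_mul_of_nonneg_left h5 hτ.1.le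
    nlinarith [hτ.1, hτ.2, mul_pos hτ.1 (sub_pos.2 hτ.2)]

theorem T_nonempty : Y.T.Nonempty := by
  have hpos : 0 < volume (Om k) := Om_open.measure_pos _ ⟨Pi.single 0 (1/2), by
    refine ⟨by norm_num, by norm_num, fun i => by simp⟩⟩
  by_contra h
  apply hpos.ne'
  rw [measure_eq_zero_iff_ae_notMem]
  filter_upwards [Y.gen_ae] with x hx hxo
  obtain ⟨σ, ⟨hσ, -⟩, -⟩ := Y.hT x hx (Y.hΩ x hxo.1.le (fun i => (hxo.2.2 i).le))
  exact h ⟨σ, hσ⟩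

def phi (x : Fin (k+1) → ℝ) : ℝ := Y.T.sup' Y.T_nonempty (fun σ => Y.A σ x)

theorem phi_cont : Continuous Y.phi := by
  unfold phi
  apply Continuous.finset_sup'_apply
  intro σ _
  exact (Y.A σ).continuous_of_finiteDimensional

theorem phi_eq (σ) (hσ : σ ∈ Y.T) (x) (hx : x ∈ uc_cn Y.u σ) : Y.phi x = Y.A σ x := by
  apply le_antisymm
  · apply Finset.sup'_le
    intro τ hτ; exact Y.A_max σ hσ x hx τ hτ
  · exact Finset.le_sup' (fun σ => Y.A σ x) hσ

theorem phi_u (j) : Y.phi (Y.u j) ≤ Y.t j := by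
  apply Finset.sup'_le
  intro τ hτ; exact (Y.hA τ hτ).2.1 j

theorem H_le_of (Y Y' : UD k) (c : ℝ) (h : ∀ x ∈ Om k, Y.phi x - Y'.phi x = x 0 * c) (g) :
    Y.H g + c ≤ Y'.H g := by
  obtain ⟨j, hj⟩ := Y.ex_H g
  have := Om_ext (fun x => Y.phi x - (∑ i, g i * x i.succ - x 0 * Y'.H g + x 0 * c)) (by
      have := Y.phi_cont
      fun_prop) (by
      filter_upwards [Y'.gen_ae] with x hx hxo
      obtain ⟨σ, ⟨hσ, hxσ⟩, -⟩ := Y'.hT x hx (Y'.hΩ x hxo.1.le (fun i => (hxo.2.2 i).le))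
      have h1 := Y'.A_ge σ hσ x hxσ g
      rw [← Y'.phi_eq σ hσ x hxσ] at h1
      have h2 := h x hxo
      linarith) (Y.s j) (Y.hs j)
  have h2 := Y.phi_u j
  have h3 : (Fin.cons 1 (Y.s j) : Fin (k+1) → ℝ) = Y.u j := rfl
  simp only [Fin.cons_succ, Fin.cons_zero] at this
  rw [h3] at this
  linarith

theorem uniq (Y Y' : UD k) (hd : ∀ F : (Fin k → ℝ) → ℝ,
      ∑ σ ∈ Y.T, Y.w σ * F (Y.g σ) = ∑ τ ∈ Y'.T, Y'.w τ * F (Y'.g τ))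
    (g1 : Fin k → ℝ) (hg1 : Y.H g1 = Y'.H g1) (g : Fin k → ℝ) : Y.H g = Y'.H g := by
  classical
  let S : Finset ℝ := Y'.T.image (fun τ => - (Y.H (Y'.g τ) - Y'.H (Y'.g τ)))
  have hcont : ContinuousOn (fun x : Fin (k+1) → ℝ => (Y.phi x - Y'.phi x) / x 0) (Om k) := by
    apply ContinuousOn.div
    · exact (Y.phi_cont.sub Y'.phi_cont).continuousOn
    · exact (continuous_apply 0).continuousOn
    · intro x hx; exact hx.1.ne'
  have hS : Om k ⊆ {x | (Y.phi x - Y'.phi x) / x 0 ∈ S} := by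
    apply Om_ae
    · intro x hx hxc
      have h1 : (Y.phi x - Y'.phi x) / x 0 ∈ closure (S : Set ℝ) := by
        have h2 : ContinuousWithinAt (fun x : Fin (k+1) → ℝ => (Y.phi x - Y'.phi x) / x 0)
          ({x | (Y.phi x - Y'.phi x) / x 0 ∈ S} ∩ Om k) x := (hcont x hx).mono Set.inter_subset_right
        have := h2.mem_closure_image hxc
        refine closure_mono ?_ this
        rintro _ ⟨y, hy, rfl⟩
        exact hy.1
      rwa [(S.finite_toSet.isClosed).closure_eq] at h1
    · have hM : ∀ᵐ x, ∀ σ τ, M Y Y' σ τ = 0 → x ∉ Y.C σ ∩ Y'.C τ := by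
        rw [ae_all_iff]; intro σ
        rw [ae_all_iff]; intro τ
        by_cases h : M Y Y' σ τ = 0
        · have h0 : volume (Y.C σ ∩ Y'.C τ) = 0 := by
            rcases (ENNReal.toReal_eq_zero_iff _).1 h with h | h
            · exact h
            · exact absurd h (ne_top_of_le_ne_top (Y.C_fin σ) (measure_mono Set.inter_subset_left))
          filter_upwards [measure_eq_zero_iff_ae_notMem.1 h0] with x hx _
          exact hx
        · filter_upwards with x hx; exact absurd hx h
      filter_upwards [Y.gen_ae, Y'.gen_ae, hM] with x hx hx' hxM hxo
      obtain ⟨σ, ⟨hσ, hxσ⟩, -⟩ := Y.hT x hx (Y.hΩ x hxo.1.le (fun i => (hxo.2.2 i).le))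
      obtain ⟨τ, ⟨hτ, hxτ⟩, -⟩ := Y'.hT x hx' (Y'.hΩ x hxo.1.le (fun i => (hxo.2.2 i).le))
      have hne : M Y Y' σ τ ≠ 0 := fun h => hxM σ τ h ⟨⟨hxσ, hxo.2.1⟩, ⟨hxτ, hxo.2.1⟩⟩
      have hFF := F_eq Y Y' σ hσ τ hτ x hxσ hxτ (M_F Y Y' hd σ hσ τ hτ hne)
      change (Y.phi x - Y'.phi x) / x 0 ∈ S
      rw [Y.phi_eq σ hσ x hxσ, Y'.phi_eq τ hτ x hxτ, hFF]
      refine Finset.mem_image.2 ⟨τ, hτ, ?_⟩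
      have := hxo.1.ne'
      field_simp
  obtain ⟨c, -, hc⟩ := (Om_convex (k := k)).isPreconnected.eqOn_const_of_mapsTo
    (T := (S : Set ℝ)) (S.finite_toSet.isDiscrete) hcont (fun x hx => hS hx)
      (by obtain ⟨τ, hτ⟩ := Y'.T_nonempty; exact ⟨_, Finset.mem_coe.2 (Finset.mem_image_of_mem _ hτ)⟩)
  have hc1 : ∀ x ∈ Om k, Y.phi x - Y'.phi x = x 0 * c := by
    intro x hx
    have h1 : (Y.phi x - Y'.phi x) / x 0 = c := hc hx
    have := hx.1.ne'
    field_simp at h1; linarith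
  have hc2 : ∀ x ∈ Om k, Y'.phi x - Y.phi x = x 0 * (-c) := by
    intro x hx; have := hc1 x hx; linarith
  have a1 := H_le_of Y Y' c hc1 g
  have a2 := H_le_of Y' Y (-c) hc2 g
  have b1 := H_le_of Y Y' c hc1 g1
  have b2 := H_le_of Y' Y (-c) hc2 g1
  linarith

end UD

def ue_s {k : ℕ} (X : Finset (Fin (k+1) → ℝ)) : (X ⊕ (Fin k → Bool)) → Fin k → ℝ :=
  Sum.elim (fun q i => q.1 i.succ) (fun b i => if b i then 3 else -3)
def ue_t {k : ℕ} (X : Finset (Fin (k+1) → ℝ)) : (X ⊕ (Fin k → Bool)) → ℝ :=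
  Sum.elim (fun q => q.1 0) (fun _ => 4 * k + 1)

theorem ue_hs {k : ℕ} (X : Finset (Fin (k+1) → ℝ)) (hX : ∀ q ∈ X, ∀ i, |q i| ≤ 1) (j) (i) :
    |ue_s X j i| ≤ 3 := by
  rcases j with q | b
  · exact (hX q.1 q.2 i.succ).trans (by norm_num)
  · simp only [ue_s, Sum.elim_inr]
    split_ifs <;> norm_num

theorem ue_hΩ {k : ℕ} (X : Finset (Fin (k+1) → ℝ)) (x : Fin (k+1) → ℝ) (h0 : 0 ≤ x 0)
    (h1 : ∀ i : Fin k, |x i.succ| ≤ 3 * x 0) : x ∈ uc_cn (ud_u (ue_s X)) Finset.univ := by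
  rcases h0.eq_or_lt with h | h
  · have : x = 0 := by
      ext i
      refine Fin.cases h.symm (fun i => ?_) i
      have := h1 i
      rw [← h, mul_zero] at this
      simpa using this
    exact ⟨0, fun i => le_rfl, fun i _ => rfl, by simp [this]⟩
  · let B : Set (Fin k → ℝ) := {y | (Fin.cons 1 y : Fin (k+1) → ℝ) ∈ uc_cn (ud_u (ue_s X)) Finset.univ}
    have hB : Convex ℝ B := by
      rintro y ⟨l, a1, a2, a3⟩ y' ⟨l', a1', a2', a3'⟩ a b ha hb hab
      refine ⟨fun i => a * l i + b * l' i, fun i => ?_, fun i hi => absurd (Finset.mem_univ _) hi, ?_⟩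
      · have := a1 i; have := a1' i; positivity
      · simp only [add_smul, Finset.sum_add_distrib, mul_smul, ← Finset.smul_sum]
        rw [← a3, ← a3']
        ext i
        refine Fin.cases ?_ (fun i => ?_) i
        · simp [hab]
        · simp
    have hc : Set.univ.pi (fun _ : Fin k => ({-3, 3} : Set ℝ)) ⊆ B := by
      classical
      intro y hy
      let b : Fin k → Bool := fun i => decide (y i = 3)
      refine ⟨Pi.single (Sum.inr b) 1, fun i => ?_, fun i hi => absurd (Finset.mem_univ _) hi, ?_⟩
      · by_cases e : i = Sum.inr b
        · subst e; simp
        · simp [e]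
      · rw [Finset.sum_eq_single (Sum.inr b)]
        · rw [Pi.single_eq_same, one_smul]
          have : y = ue_s X (Sum.inr b) := by
            ext i
            have := hy i (Set.mem_univ i)
            simp only [ue_s, Sum.elim_inr, b, decide_eq_true_eq]
            split_ifs with h3
            · exact h3
            · rcases this with h | h
              · exact h
              · exact absurd h h3
          rw [this]; rfl
        · intro i _ hi; simp [hi]
        · intro h; exact absurd (Finset.mem_univ _) h
    have hc2 := convexHull_min hc hB
    rw [convexHull_pi] at hc2
    have hy : (fun i => x i.succ / x 0) ∈ B := by
      apply hc2
      intro i _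
      rw [convexHull_pair, segment_eq_Icc (by norm_num)]
      have := abs_le.1 (h1 i)
      constructor
      · rw [le_div_iff₀ h]; linarith
      · rw [div_le_iff₀ h]; linarith
    obtain ⟨l, a1, a2, a3⟩ := hy
    refine ⟨fun i => x 0 * l i, fun i => mul_nonneg h0 (a1 i), fun i hi => absurd (Finset.mem_univ _) hi, ?_⟩
    simp only [mul_smul, ← Finset.smul_sum]
    rw [← a3]
    ext i
    refine Fin.cases ?_ (fun i => ?_) i
    · simp
    · simp only [Pi.smul_apply, Fin.cons_succ, smul_eq_mul]; field_simp

def ue_Y {k : ℕ} (X : Finset (Fin (k+1) → ℝ)) (hX : ∀ q ∈ X, ∀ i, |q i| ≤ 1) : UD k where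
  ι := X ⊕ (Fin k → Bool)
  fin := inferInstance
  ne := inferInstance
  s := ue_s X
  t := ue_t X
  hs := ue_hs X hX
  hΩ := ue_hΩ X
  T := (uc_tri (ud_u (ue_s X)) (ue_t X) (LinearMap.proj 0) (fun _ => rfl)).choose
  A := (uc_tri (ud_u (ue_s X)) (ue_t X) (LinearMap.proj 0) (fun _ => rfl)).choose_spec.choose
  hA := (uc_tri (ud_u (ue_s X)) (ue_t X) (LinearMap.proj 0) (fun _ => rfl)).choose_spec.choose_spec.1
  hT := (uc_tri (ud_u (ue_s X)) (ue_t X) (LinearMap.proj 0) (fun _ => rfl)).choose_spec.choose_spec.2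

theorem ue_dot {k : ℕ} (g s : Fin k → ℝ) (hs : ∀ i, |s i| ≤ 1) : |∑ i, g i * s i| ≤ ∑ i, |g i| := by
  refine (Finset.abs_sum_le_sum_abs _ _).trans (Finset.sum_le_sum fun i _ => ?_)
  rw [abs_mul]
  exact mul_le_of_le_one_right (abs_nonneg _) (hs i)

theorem ue_dotc {k : ℕ} (X : Finset (Fin (k+1) → ℝ)) (g : Fin k → ℝ) (b : Fin k → Bool) :
    ∑ i, g i * ue_s X (Sum.inr b) i ≤ 3 * ∑ i, |g i| := by
  rw [Finset.mul_sum]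
  apply Finset.sum_le_sum
  intro i _
  simp only [ue_s, Sum.elim_inr]
  have h1 := le_abs_self (g i)
  have h2 := neg_abs_le (g i)
  split_ifs <;> linarith

theorem ue_slope {k : ℕ} (X : Finset (Fin (k+1) → ℝ)) (hX : ∀ q ∈ X, ∀ i, |q i| ≤ 1)
    (σ) (hσ : σ ∈ (ue_Y X hX).T) (i : Fin k) : |(ue_Y X hX).g σ i| ≤ 2 * k + 1 := by
  let Y : UD k := ue_Y X hX
  change |Y.g σ i| ≤ _
  have hY1 := Y.hA σ hσ
  by_cases h : ∃ q : X, (Sum.inl q : X ⊕ (Fin k → Bool)) ∈ σ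
  · obtain ⟨q, hq⟩ := h
    let b : Fin k → Bool := fun i => decide (0 ≤ Y.g σ i)
    have a1 := hY1.2.2 (Sum.inl q) hq
    have a2 := hY1.2.1 (Sum.inr b)
    rw [show ud_u Y.s = Y.u from rfl, Y.A_eq σ hσ] at a1 a2
    change ∑ i, Y.g σ i * Y.s (Sum.inl q) i - 1 * Y.H (Y.g σ) = _ at a1
    change ∑ i, Y.g σ i * Y.s (Sum.inr b) i - 1 * Y.H (Y.g σ) ≤ _ at a2
    have b1 : ∑ i, Y.g σ i * Y.s (Sum.inr b) i = 3 * ∑ i, |Y.g σ i| := by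
      rw [Finset.mul_sum]
      apply Finset.sum_congr rfl
      intro i _
      change Y.g σ i * (if b i then 3 else -3) = _
      simp only [b, decide_eq_true_eq]
      split_ifs with h3
      · rw [abs_of_nonneg h3]; ring
      · rw [abs_of_neg (not_le.1 h3)]; ring
    have b2 := (abs_le.1 (ue_dot (Y.g σ) (Y.s (Sum.inl q)) (fun i => hX q.1 q.2 i.succ))).2
    have b3 : Y.t (Sum.inr b) = 4 * k + 1 := rfl
    have b4 : -1 ≤ Y.t (Sum.inl q) := (abs_le.1 (hX q.1 q.2 0)).1
    have b5 : |Y.g σ i| ≤ ∑ i, |Y.g σ i| :=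
      Finset.single_le_sum (f := fun i => |Y.g σ i|) (fun i _ => abs_nonneg _) (Finset.mem_univ i)
    linarith
  · have hz : Y.A σ = (4 * k + 1 : ℝ) • LinearMap.proj 0 := by
      apply LinearMap.ext_on hY1.1.2
      rintro _ ⟨j, hj, rfl⟩
      rw [hY1.2.2 j hj]
      rcases j with q | b
      · exact absurd ⟨q, hj⟩ h
      · change ((4:ℝ) * k + 1) = (4 * k + 1) * 1
        ring
    have : Y.g σ i = 0 := by
      simp [UD.g, ud_g, hz]
    rw [this, abs_zero]; positivity

theorem ue_g1 {k : ℕ} (hk : 1 ≤ k) (X : Finset (Fin (k+1) → ℝ)) (hX : ∀ q ∈ X, ∀ i, |q i| ≤ 1) :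
    (ue_Y X hX).H (fun _ => 3) = 9 * k - (4 * k + 1) := by
  have hk' : (1:ℝ) ≤ k := by exact_mod_cast hk
  have e1 : ∑ i : Fin k, |(fun _ : Fin k => (3:ℝ)) i| = 3 * k := by simp [mul_comm]
  apply le_antisymm
  · obtain ⟨j, hj⟩ := (ue_Y X hX).ex_H (fun _ => 3)
    rw [hj]
    rcases j with q | b
    · have h1 := (abs_le.1 (ue_dot (fun _ => 3) ((ue_Y X hX).s (Sum.inl q)) (fun i => hX q.1 q.2 i.succ))).2
      rw [e1] at h1
      have b4 : -1 ≤ (ue_Y X hX).t (Sum.inl q) := (abs_le.1 (hX q.1 q.2 0)).1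
      linarith
    · have h1 := ue_dotc X (fun _ => 3) b
      rw [e1] at h1
      have b3 : (ue_Y X hX).t (Sum.inr b) = 4 * k + 1 := rfl
      rw [b3]
      have : (ue_Y X hX).s (Sum.inr b) = ue_s X (Sum.inr b) := rfl
      rw [this]
      linarith
  · have h := (ue_Y X hX).le_H (fun _ => 3) (Sum.inr fun _ => true)
    refine le_trans (le_of_eq ?_) h
    change (9:ℝ) * k - (4 * k + 1) = ∑ i : Fin k, 3 * (3:ℝ) - (4 * k + 1)
    simp; ring

theorem ue_sup {k : ℕ} (X : Finset (Fin (k+1) → ℝ)) (hX : ∀ q ∈ X, ∀ i, |q i| ≤ 1)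
    (hne : X.Nonempty) (g : Fin k → ℝ) (hg : ∀ i, |g i| ≤ 1) (a : ℝ) :
    (ue_Y X hX).H g ≤ a ↔ ∀ q ∈ X, ∑ i, g i * q i.succ - q 0 ≤ a := by
  constructor
  · intro h q hq
    exact ((ue_Y X hX).le_H g (Sum.inl ⟨q, hq⟩)).trans h
  · intro h
    obtain ⟨j, hj⟩ := (ue_Y X hX).ex_H g
    rw [hj]
    rcases j with q | b
    · exact h q.1 q.2
    · obtain ⟨q, hq⟩ := hne
      refine le_trans ?_ (h q hq)
      have h1 := ue_dotc X g b
      have h2 := (abs_le.1 (ue_dot g (fun i => q i.succ) (fun i => hX q hq i.succ))).1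
      have h3 := (abs_le.1 (hX q hq 0)).2
      have b3 : (ue_Y X hX).t (Sum.inr b) = 4 * k + 1 := rfl
      rw [b3]
      have : (ue_Y X hX).s (Sum.inr b) = ue_s X (Sum.inr b) := rfl
      rw [this]
      have h4 : ∑ i, |g i| ≤ k := by
        refine (Finset.sum_le_sum fun i _ => hg i).trans ?_
        simp
      linarith

def ue_simp (k : ℕ) : Set (Fin (k+1) → ℝ) := {l | (∀ i, 0 ≤ l i) ∧ ∑ i, l i < 1}
def ue_v (k : ℕ) : ℝ := volume.real (ue_simp k)

theorem ue_v_pos (k : ℕ) : 0 < ue_v k := by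
  unfold ue_v
  rw [measureReal_def]
  apply ENNReal.toReal_pos
  · have hs : Set.univ.pi (fun _ : Fin (k+1) => Set.Ioo (0:ℝ) (1/(k+1))) ⊆ ue_simp k := by
      intro x hx
      refine ⟨fun i => (hx i (Set.mem_univ i)).1.le, ?_⟩
      have : ∑ i, x i < ∑ i : Fin (k+1), (1/(k+1) : ℝ) :=
        Finset.sum_lt_sum_of_nonempty Finset.univ_nonempty (fun i _ => (hx i (Set.mem_univ i)).2)
      refine this.trans_le (le_of_eq ?_)
      simp; field_simp
    have h2 : 0 < volume (Set.univ.pi (fun _ : Fin (k+1) => Set.Ioo (0:ℝ) (1/(k+1)))) := by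
      apply IsOpen.measure_pos
      · exact isOpen_set_pi Set.finite_univ (fun _ _ => isOpen_Ioo)
      · refine ⟨fun _ => 1/(2*(k+1)), fun i _ => ⟨by positivity, ?_⟩⟩
        apply one_div_lt_one_div_of_lt <;> linarith [(Nat.cast_nonneg k : (0:ℝ) ≤ k)]
    exact (h2.trans_le (measure_mono hs)).ne'
  · have hs : ue_simp k ⊆ Set.Icc 0 1 := by
      rintro x ⟨h1, h2⟩
      exact ⟨fun i => h1 i, fun i => (Finset.single_le_sum (fun i _ => h1 i) (Finset.mem_univ i)).trans h2.le⟩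
    exact ne_top_of_le_ne_top (isCompact_Icc.measure_lt_top.ne) (measure_mono hs)

theorem ue_vol {k : ℕ} (Y : UD k) (σ) (hσ : σ ∈ Y.T) : ∃ e : Fin (k+1) → Y.ι, (∀ a, e a ∈ σ) ∧
    (Matrix.of (fun a => Y.u (e a))).det ≠ 0 ∧
    Y.w σ = |(Matrix.of (fun a => Y.u (e a))).det| * ue_v k := by
  classical
  obtain ⟨hli, hsp⟩ := (Y.hA σ hσ).1
  have hli' : LinearIndependent ℝ (fun i : (σ : Set Y.ι) => Y.u i) := hli
  have hsp' : ⊤ ≤ Submodule.span ℝ (Set.range (fun i : (σ : Set Y.ι) => Y.u i)) := by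
    rw [← hsp, Set.image_eq_range]; exact le_rfl
  let b := Module.Basis.mk hli' hsp'
  have hcard : σ.card = k + 1 := by
    have h1 := Module.finrank_eq_card_basis b
    simp at h1
    exact h1.symm
  let e : Fin (k+1) ≃ σ := (σ.equivFinOfCardEq hcard).symm
  have hdet : (Matrix.of (fun a => Y.u (e a))).det ≠ 0 := by
    have h1 : LinearIndependent ℝ (Matrix.of (fun a => Y.u (e a))).row := by
      exact hli'.comp e e.injective
    have := Matrix.linearIndependent_rows_iff_isUnit.1 h1
    exact ((Matrix.isUnit_iff_isUnit_det _).1 this).ne_zero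
  refine ⟨fun a => e a, fun a => (e a).2, hdet, ?_⟩
  set U := Matrix.of (fun a => Y.u (e a)) with hU
  have hsum : ∀ (M : Type) [AddCommMonoid M] (f : Y.ι → M), (∀ i, i ∉ σ → f i = 0) →
      ∑ i, f i = ∑ a, f (e a) := by
    intro M _ f hf
    rw [Equiv.sum_comp e (fun i : σ => f i), Finset.sum_coe_sort σ f]
    symm
    apply Finset.sum_subset (Finset.subset_univ _)
    intro i _ hi; exact hf i hi
  have himg : Y.C σ = (Matrix.toLin' U.transpose) '' ue_simp k := by
    have happ : ∀ l : Fin (k+1) → ℝ, Matrix.toLin' U.transpose l = ∑ a, l a • Y.u (e a) := by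
      intro l
      ext i
      rw [Matrix.toLin'_apply]
      simp [Matrix.mulVec, dotProduct, U, mul_comm]
    ext x
    constructor
    · rintro ⟨⟨l, h1, h2, h3⟩, h4⟩
      have h5 : x = ∑ a, l (e a) • Y.u (e a) := by
        rw [h3]; apply hsum _ (fun i => l i • Y.u i)
        intro i hi; simp [h2 i hi]
      refine ⟨fun a => l (e a), ⟨fun a => h1 _, ?_⟩, ?_⟩
      · have h6 : x 0 = ∑ a, l (e a) := by rw [h5, Finset.sum_apply]; simp [UD.u0]
        rw [← h6]; exact h4
      · rw [happ]; exact h5.symm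
    · rintro ⟨l, ⟨h1, h2⟩, rfl⟩
      rw [happ]
      refine ⟨⟨fun i => if h : i ∈ σ then l (e.symm ⟨i, h⟩) else 0, fun i => ?_, fun i hi => ?_, ?_⟩, ?_⟩
      · dsimp only
        split_ifs
        · exact h1 _
        · exact le_rfl
      · simp [hi]
      · rw [hsum _ (fun i => (if h : i ∈ σ then l (e.symm ⟨i, h⟩) else 0) • Y.u i)]
        · apply Finset.sum_congr rfl
          intro a _
          simp
        · intro i hi; simp [hi]
      · change (∑ a, l a • Y.u (e a)) 0 < 1
        rw [Finset.sum_apply]; simpa [UD.u0] using h2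
  unfold UD.w ue_v
  rw [himg, measureReal_def, Measure.addHaar_image_linearMap, ENNReal.toReal_mul,
    ENNReal.toReal_ofReal (abs_nonneg _), LinearMap.det_toLin', Matrix.det_transpose, measureReal_def]

theorem ue_det {k : ℕ} (q : Fin (k+1) → Fin (k+1) → ℝ) (g : Fin k → ℝ) (H : ℝ)
    (hq : ∀ a, ∑ i, g i * q a i.succ - q a 0 = H) (r : Fin (k+1) → ℝ) :
    (Matrix.of (Fin.cons r (fun a : Fin k => q a.succ - q 0) : Fin (k+1) → Fin (k+1) → ℝ)).det =
      (r 0 - ∑ i, g i * r i.succ) *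
        (Matrix.of (fun a => (Fin.cons 1 (fun i => q a i.succ) : Fin (k+1) → ℝ))).det := by
  set M : Matrix (Fin (k+1)) (Fin (k+1)) ℝ :=
    Matrix.of (Fin.cons r (fun a : Fin k => q a.succ - q 0) : Fin (k+1) → Fin (k+1) → ℝ) with hM
  have h1 := Matrix.det_updateCol_sum M 0 (Fin.cons 1 (fun i => - g i))
  simp only [Fin.cons_zero, one_smul] at h1
  rw [← h1, Matrix.det_succ_column_zero, Fin.sum_univ_succ]
  have h2 : ∀ a : Fin k, (M.updateCol 0 fun k_1 =>
      ∑ i, (Fin.cons 1 (fun i => - g i) : Fin (k+1) → ℝ) i • M k_1 i) a.succ 0 = 0 := by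
    intro a
    rw [Matrix.updateCol_self, Fin.sum_univ_succ]
    simp only [hM, Fin.cons_zero, Fin.cons_succ, Matrix.of_apply, Pi.sub_apply, smul_eq_mul, one_mul,
      neg_mul, mul_sub, Finset.sum_neg_distrib, Finset.sum_sub_distrib]
    have := hq a.succ; have := hq 0
    linarith
  rw [Finset.sum_eq_zero (fun a _ => by rw [h2]; ring)]
  have h3 : (M.updateCol 0 fun k_1 =>
      ∑ i, (Fin.cons 1 (fun i => - g i) : Fin (k+1) → ℝ) i • M k_1 i) 0 0 = r 0 - ∑ i, g i * r i.succ := by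
    rw [Matrix.updateCol_self, Fin.sum_univ_succ]
    simp only [hM, Fin.cons_zero, Fin.cons_succ, Matrix.of_apply, smul_eq_mul, one_mul,
      neg_mul, Finset.sum_neg_distrib]
    ring
  rw [h3]
  set U : Matrix (Fin (k+1)) (Fin (k+1)) ℝ :=
    Matrix.of (fun a => (Fin.cons 1 (fun i => q a i.succ) : Fin (k+1) → ℝ)) with hU
  let U' : Matrix (Fin (k+1)) (Fin (k+1)) ℝ := 
    Matrix.of (Fin.cons (U 0) (fun a : Fin k => U a.succ - U 0) : Fin (k+1) → Fin (k+1) → ℝ)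
  have hUU' : U.det = U'.det := by
    apply Matrix.det_eq_of_forall_row_eq_smul_add_const (Fin.cons 0 (fun _ => 1)) 0 rfl
    intro i j
    refine Fin.cases ?_ (fun i => ?_) i
    · simp [U']
    · simp [U']
  rw [hUU', Matrix.det_succ_column_zero U', Fin.sum_univ_succ]
  rw [Finset.sum_eq_zero (s := Finset.univ) (f := fun i : Fin k => (-1) ^ (i.succ : ℕ) * U' i.succ 0 * _)
    (fun a _ => by simp [U', hU])]
  have h4 : U' 0 0 = 1 := by simp [U', hU]
  rw [h4]
  simp only [Fin.val_zero, pow_zero, one_mul, add_zero]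
  congr 2

theorem ue_int {k : ℕ} (X : Finset (Fin (k+1) → ℝ)) (hX : ∀ q ∈ X, ∀ i, |q i| ≤ 1)
    (W : Matrix (Fin (k+1)) (Fin (k+1)) ℤ) (hW : W.det ≠ 0) (v0 : Fin (k+1) → ℤ)
    (hI : ∀ q ∈ X, ∃ p : Fin (k+1) → ℤ, (fun i => (p i : ℝ)) = (fun i => (v0 i : ℝ)) +
      (W.map (Int.cast : ℤ → ℝ)).mulVec q) (σ) (hσ : σ ∈ (ue_Y X hX).T) :
    ∃ N : Fin (k+1) → ℤ, ∀ r : Fin (k+1) → ℝ,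
      ∑ j, (N j : ℝ) * (W.map (Int.cast : ℤ → ℝ)).mulVec r j =
        ((ue_Y X hX).w σ / ue_v k) * |(W.det : ℝ)| * (r 0 - ∑ i, (ue_Y X hX).g σ i * r i.succ) := by
  classical
  let Y : UD k := ue_Y X hX
  obtain ⟨e, he, hdet, hw⟩ := ue_vol Y σ hσ
  let WR : Matrix (Fin (k+1)) (Fin (k+1)) ℝ := W.map (Int.cast : ℤ → ℝ)
  let q : Fin (k+1) → Fin (k+1) → ℝ := fun a => Fin.cons (Y.t (e a)) (Y.s (e a))
  have hp : ∀ a, ∃ p : Fin (k+1) → ℤ, (fun i => (p i : ℝ)) = (fun i => (v0 i : ℝ)) + WR.mulVec (q a) := by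
    intro a
    rcases hea : e a with x | b
    · obtain ⟨p, hp⟩ := hI x.1 x.2
      refine ⟨p, ?_⟩
      rw [hp]
      congr 2
      ext i
      refine Fin.cases ?_ (fun i => ?_) i
      · simp only [q, hea, Fin.cons_zero]; rfl
      · simp only [q, hea, Fin.cons_succ]; rfl
    · let c : Fin (k+1) → ℤ := Fin.cons (4 * k + 1) (fun i => if b i then 3 else -3)
      refine ⟨v0 + W.mulVec c, ?_⟩
      have hc : q a = fun i => (c i : ℝ) := by
        ext i
        refine Fin.cases ?_ (fun i => ?_) i
        · simp only [q, hea, Fin.cons_zero, c]; push_cast; rfl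
        · simp only [q, hea, Fin.cons_succ, c]; push_cast; rfl
      rw [hc]
      ext i
      simp [Matrix.mulVec, dotProduct, WR]
  choose p hp using hp
  let M : Matrix (Fin (k+1)) (Fin (k+1)) ℤ :=
    Matrix.of (Fin.cons 0 (fun a : Fin k => p a.succ - p 0) : Fin (k+1) → Fin (k+1) → ℤ)
  set U := Matrix.of (fun a => Y.u (e a)) with hU
  have hHq : ∀ a, ∑ i, Y.g σ i * q a i.succ - q a 0 = Y.H (Y.g σ) := by
    intro a
    have h1 := (Y.hA σ hσ).2.2 (e a) (he a)
    rw [Y.A_eq σ hσ] at h1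
    change ∑ i, Y.g σ i * Y.s (e a) i - 1 * Y.H (Y.g σ) = Y.t (e a) at h1
    change ∑ i, Y.g σ i * Y.s (e a) i - Y.t (e a) = _
    linarith
  have key : ∀ r : Fin (k+1) → ℝ, ∑ j, ((M.adjugate j 0 : ℤ) : ℝ) * WR.mulVec r j =
      (W.det : ℝ) * U.det * (r 0 - ∑ i, Y.g σ i * r i.succ) := by
    intro r
    let MR : Matrix (Fin (k+1)) (Fin (k+1)) ℝ := M.map (Int.cast : ℤ → ℝ)
    have e1 : ∀ j, ((M.adjugate j 0 : ℤ) : ℝ) = MR.adjugate j 0 := by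
      intro j
      have := RingHom.map_adjugate (Int.castRingHom ℝ) M
      have := congrFun (congrFun this j) 0
      simpa [MR] using this
    have e2 : ∑ j, ((M.adjugate j 0 : ℤ) : ℝ) * WR.mulVec r j = (MR.updateRow 0 (WR.mulVec r)).det := by
      rw [← Matrix.cramer_transpose_apply, Matrix.cramer_eq_adjugate_mulVec, ← Matrix.adjugate_transpose]
      simp only [Matrix.mulVec, dotProduct, Matrix.transpose_apply, e1]
    rw [e2]
    have e3 : MR.updateRow 0 (WR.mulVec r) =
        Matrix.of (Fin.cons r (fun a : Fin k => q a.succ - q 0) : Fin (k+1) → Fin (k+1) → ℝ) * WR.transpose := by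
      ext a i
      refine Fin.cases ?_ (fun a => ?_) a
      · simp [Matrix.mul_apply, Matrix.mulVec, dotProduct, mul_comm]
      · rw [Matrix.updateRow_ne (Fin.succ_ne_zero a)]
        have h1 := congrFun (hp a.succ) i
        have h2 := congrFun (hp 0) i
        simp only [Pi.add_apply] at h1 h2
        have h3 : MR a.succ i = (p a.succ i : ℝ) - p 0 i := by simp [MR, M]
        rw [h3, h1, h2, add_sub_add_left_eq_sub]
        simp only [Matrix.mul_apply, Matrix.of_apply, Fin.cons_succ, Matrix.transpose_apply,
          Matrix.mulVec, dotProduct, Pi.sub_apply, ← Finset.sum_sub_distrib]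
        apply Finset.sum_congr rfl
        intro j _
        ring
    rw [e3, Matrix.det_mul, Matrix.det_transpose, ue_det q (Y.g σ) (Y.H (Y.g σ)) hHq]
    have e4 : WR.det = (W.det : ℝ) := by
      have := RingHom.map_det (Int.castRingHom ℝ) W
      simpa [WR] using this.symm
    rw [e4]
    have e5 : (Matrix.of (fun a => (Fin.cons 1 (fun i => q a i.succ) : Fin (k+1) → ℝ))) = U := rfl
    rw [e5]; ring
  have hw' : (ue_Y X hX).w σ / ue_v k = |U.det| := by
    have hw : (ue_Y X hX).w σ = |U.det| * ue_v k := hw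
    rw [hw]; field_simp [(ue_v_pos k).ne']
  rw [hw']
  rcases le_total 0 ((W.det : ℝ) * U.det) with h | h
  · refine ⟨fun j => M.adjugate j 0, fun r => ?_⟩
    rw [key r, ← abs_mul, mul_comm U.det, abs_of_nonneg h]
  · refine ⟨fun j => - M.adjugate j 0, fun r => ?_⟩
    rw [← abs_mul, mul_comm U.det, abs_of_nonpos h, neg_mul, ← key r, ← Finset.sum_neg_distrib]
    apply Finset.sum_congr rfl
    intro j _; push_cast; ring

theorem ue_wsum {k : ℕ} (Y : UD k) : ∑ σ ∈ Y.T, Y.w σ ≤ 6 ^ (k+1) := by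
  unfold UD.w
  rw [← measureReal_biUnion_finset₀ (h := fun σ _ => Y.C_fin σ)]
  · have hv : volume.real (Set.Icc (fun _ => (-3:ℝ)) (fun _ => 3) : Set (Fin (k+1) → ℝ)) = 6 ^ (k+1) := by
      rw [measureReal_def, Real.volume_Icc_pi]
      simp [ENNReal.toReal_pow]
      norm_num
    rw [← hv]
    apply measureReal_mono _ (isCompact_Icc.measure_lt_top.ne)
    exact Set.iUnion₂_subset fun σ _ => Y.C_bdd σ
  · intro τ hτ τ' hτ' hne
    change volume _ = 0
    rw [measure_eq_zero_iff_ae_notMem]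
    filter_upwards [Y.gen_ae] with x hx h
    obtain ⟨h0, h1⟩ := Y.cn_box _ x h.1.1
    exact hne ((Y.hT x hx (Y.hΩ x h0 h1)).unique ⟨hτ, h.1.1⟩ ⟨hτ', h.2.1⟩)
  · intro τ _
    exact (Y.convex_C τ).nullMeasurableSet _

theorem ue_wpos {k : ℕ} (Y : UD k) (σ) (hσ : σ ∈ Y.T) : 0 < Y.w σ := by
  obtain ⟨e, -, h1, h2⟩ := ue_vol Y σ hσ
  rw [h2]; exact mul_pos (abs_pos.2 h1) (ue_v_pos k)

def ue_nu {k : ℕ} (W : Matrix (Fin (k+1)) (Fin (k+1)) ℤ) (N : Fin (k+1) → ℤ) (i : Fin (k+1)) : ℝ :=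
  ∑ j, (N j : ℝ) * (W j i : ℝ)

def ue_good {k : ℕ} (W : Matrix (Fin (k+1)) (Fin (k+1)) ℤ) (v0 : Fin (k+1) → ℤ)
    (X : Finset (Fin (k+1) → ℝ)) : Prop :=
  X.Nonempty ∧ (∀ q ∈ X, ∀ i, |q i| ≤ 1) ∧
   ∀ q ∈ X, ∃ p : Fin (k+1) → ℤ, (fun i => (p i : ℝ)) = (fun i => (v0 i : ℝ)) +
      (W.map (Int.cast : ℤ → ℝ)).mulVec q

theorem ue_dat1 {k : ℕ} (W : Matrix (Fin (k+1)) (Fin (k+1)) ℤ) (hW : W.det ≠ 0) (v0 : Fin (k+1) → ℤ)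
    (X : Finset (Fin (k+1) → ℝ)) (hX : ue_good W v0 X) :
    ∃ D : Finset (Fin (k+1) → ℤ), 
      (∀ N ∈ D, 0 < ue_nu W N 0 ∧ ∀ i : Fin k, |ue_nu W N i.succ| ≤ (2 * k + 1) * ue_nu W N 0) ∧
      (∑ N ∈ D, ue_nu W N 0 ≤ |(W.det : ℝ)| * 6 ^ (k+1) / ue_v k) ∧
      ∀ F : (Fin k → ℝ) → ℝ, ∑ σ ∈ (ue_Y X hX.2.1).T, (ue_Y X hX.2.1).w σ * F ((ue_Y X hX.2.1).g σ) =
        ∑ N ∈ D, (ue_v k / |(W.det : ℝ)|) * ue_nu W N 0 * F (fun i => - ue_nu W N i.succ / ue_nu W N 0) := by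
  classical
  let Y : UD k := ue_Y X hX.2.1
  have hintN : ∀ σ, ∃ N : Fin (k+1) → ℤ, σ ∈ Y.T → ∀ r : Fin (k+1) → ℝ,
      ∑ j, (N j : ℝ) * (W.map (Int.cast : ℤ → ℝ)).mulVec r j =
        (Y.w σ / ue_v k) * |(W.det : ℝ)| * (r 0 - ∑ i, Y.g σ i * r i.succ) := by
    intro σ
    by_cases h : σ ∈ Y.T
    · obtain ⟨N, hN⟩ := ue_int X hX.2.1 W hW v0 hX.2.2 σ h
      exact ⟨N, fun _ => hN⟩
    · exact ⟨0, fun h' => absurd h' h⟩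
  choose N hN using hintN
  have hd : 0 < |(W.det : ℝ)| := abs_pos.2 (by exact_mod_cast hW)
  have hv := ue_v_pos k
  let G := Y.T.image Y.g
  let wg : (Fin k → ℝ) → ℝ := fun γ => ∑ σ ∈ Y.T.filter (fun σ => Y.g σ = γ), Y.w σ
  let Ng : (Fin k → ℝ) → Fin (k+1) → ℤ := fun γ => ∑ σ ∈ Y.T.filter (fun σ => Y.g σ = γ), N σ
  have hwg : ∀ γ ∈ G, 0 < wg γ := by
    intro γ hγ
    obtain ⟨σ, hσ, h⟩ := Finset.mem_image.1 hγ
    apply Finset.sum_pos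
    · intro τ hτ; exact ue_wpos Y τ (Finset.mem_filter.1 hτ).1
    · exact ⟨σ, Finset.mem_filter.2 ⟨hσ, h⟩⟩
  have hNg : ∀ γ, ∀ r : Fin (k+1) → ℝ, ∑ j, (Ng γ j : ℝ) * (W.map (Int.cast : ℤ → ℝ)).mulVec r j =
        (wg γ / ue_v k) * |(W.det : ℝ)| * (r 0 - ∑ i, γ i * r i.succ) := by
    intro γ r
    simp only [Ng, wg, Finset.sum_apply, Int.cast_sum, Finset.sum_mul, Finset.sum_div]
    rw [Finset.sum_comm]
    apply Finset.sum_congr rfl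
    intro σ hσ
    obtain ⟨h1, h2⟩ := Finset.mem_filter.1 hσ
    rw [hN σ h1 r, h2]
  have hcol : ∀ (N : Fin (k+1) → ℤ) i, ue_nu W N i =
      ∑ j, (N j : ℝ) * (W.map (Int.cast : ℤ → ℝ)).mulVec (Pi.single i 1) j := by
    intro N i
    simp [ue_nu]
  have hnu0 : ∀ γ, ue_nu W (Ng γ) 0 = (wg γ / ue_v k) * |(W.det : ℝ)| := by
    intro γ
    rw [hcol, hNg]; simp
  have hnus : ∀ γ i, ue_nu W (Ng γ) (Fin.succ i) = - γ i * ((wg γ / ue_v k) * |(W.det : ℝ)|) := by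
    intro γ i
    rw [hcol, hNg]
    simp [Pi.single_apply, Fin.succ_ne_zero]
    ring
  have hpos : ∀ γ ∈ G, 0 < ue_nu W (Ng γ) 0 := by
    intro γ hγ
    rw [hnu0]; have := hwg γ hγ; positivity
  have hrec : ∀ γ ∈ G, (fun i => - ue_nu W (Ng γ) (Fin.succ i) / ue_nu W (Ng γ) 0) = γ := by
    intro γ hγ
    ext i
    have := hpos γ hγ
    rw [div_eq_iff this.ne', hnus, hnu0]; ring
  have hinj : Set.InjOn Ng G := by
    intro γ hγ γ' hγ' h
    rw [← hrec γ hγ, ← hrec γ' hγ', h]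
  refine ⟨G.image Ng, ?_, ?_, ?_⟩
  · intro N hN
    obtain ⟨γ, hγ, rfl⟩ := Finset.mem_image.1 hN
    refine ⟨hpos γ hγ, fun i => ?_⟩
    obtain ⟨σ, hσ, h⟩ := Finset.mem_image.1 hγ
    have h1 := hpos γ hγ
    rw [hnus, ← hnu0, abs_mul, abs_neg, abs_of_pos h1]
    apply mul_le_mul_of_nonneg_right _ h1.le
    rw [← h]
    exact ue_slope X hX.2.1 σ hσ i
  · rw [Finset.sum_image hinj]
    simp only [hnu0]
    rw [← Finset.sum_mul, ← Finset.sum_div]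
    have : ∑ γ ∈ G, wg γ = ∑ σ ∈ Y.T, Y.w σ := by
      simp only [wg]
      exact Finset.sum_fiberwise_of_maps_to (fun σ hσ => Finset.mem_image_of_mem _ hσ) _
    rw [this]
    have h1 := ue_wsum Y
    rw [div_mul_eq_mul_div, mul_comm]
    gcongr
  · intro F
    rw [Finset.sum_image hinj]
    have h1 : ∀ γ ∈ G, (ue_v k / |(W.det : ℝ)|) * ue_nu W (Ng γ) 0 *
        F (fun i => - ue_nu W (Ng γ) i.succ / ue_nu W (Ng γ) 0) =
        ∑ σ ∈ Y.T.filter (fun σ => Y.g σ = γ), Y.w σ * F (Y.g σ) := by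
      intro γ hγ
      rw [hrec γ hγ, hnu0]
      have : ∑ σ ∈ Y.T.filter (fun σ => Y.g σ = γ), Y.w σ * F (Y.g σ) = wg γ * F γ := by
        simp only [wg, Finset.sum_mul]
        apply Finset.sum_congr rfl
        intro σ hσ
        rw [(Finset.mem_filter.1 hσ).2]
      rw [this]
      field_simp
    rw [Finset.sum_congr rfl h1]
    exact (Finset.sum_fiberwise_of_maps_to (fun σ hσ => Finset.mem_image_of_mem _ hσ) _).symm

theorem ue_dat {k : ℕ} (hk : 1 ≤ k) (W : Matrix (Fin (k+1)) (Fin (k+1)) ℤ) (hW : W.det ≠ 0)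
    (v0 : Fin (k+1) → ℤ) :
    ∃ Dat : Finset (Fin (k+1) → ℝ) → Finset (Fin (k+1) → ℤ), 
      (∀ X, ue_good W v0 X →
        (∀ N ∈ Dat X, 0 < ue_nu W N 0 ∧ ∀ i : Fin k, |ue_nu W N i.succ| ≤ (2 * k + 1) * ue_nu W N 0) ∧
        (∑ N ∈ Dat X, ue_nu W N 0 ≤ |(W.det : ℝ)| * 6 ^ (k+1) / ue_v k)) ∧
      ∀ X X', ue_good W v0 X → ue_good W v0 X' → Dat X = Dat X' →
        ∀ g : Fin k → ℝ, (∀ i, |g i| ≤ 1) → ∀ a : ℝ, (∀ q ∈ X, ∑ i, g i * q i.succ - q 0 ≤ a) →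
          ∀ q ∈ X', ∑ i, g i * q i.succ - q 0 ≤ a := by
  have h : ∀ X, ∃ D : Finset (Fin (k+1) → ℤ), ∀ hX : ue_good W v0 X,
      (∀ N ∈ D, 0 < ue_nu W N 0 ∧ ∀ i : Fin k, |ue_nu W N i.succ| ≤ (2 * k + 1) * ue_nu W N 0) ∧
      (∑ N ∈ D, ue_nu W N 0 ≤ |(W.det : ℝ)| * 6 ^ (k+1) / ue_v k) ∧
      ∀ F : (Fin k → ℝ) → ℝ, ∑ σ ∈ (ue_Y X hX.2.1).T, (ue_Y X hX.2.1).w σ * F ((ue_Y X hX.2.1).g σ) =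
        ∑ N ∈ D, (ue_v k / |(W.det : ℝ)|) * ue_nu W N 0 * F (fun i => - ue_nu W N i.succ / ue_nu W N 0) := by
    intro X
    by_cases hX : ue_good W v0 X
    · obtain ⟨D, hD⟩ := ue_dat1 W hW v0 X hX
      exact ⟨D, fun _ => hD⟩
    · exact ⟨∅, fun h => absurd h hX⟩
  choose Dat hDat using h
  refine ⟨Dat, fun X hX => ⟨(hDat X hX).1, (hDat X hX).2.1⟩, ?_⟩
  intro X X' hX hX' hDD g hg a hXa
  rw [← ue_sup X' hX'.2.1 hX'.1 g hg a]
  rw [← ue_sup X hX.2.1 hX.1 g hg a] at hXa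
  have := UD.uniq (ue_Y X hX.2.1) (ue_Y X' hX'.2.1) (fun F => by
    rw [(hDat X hX).2.2 F, (hDat X' hX').2.2 F, hDD]) (fun _ => 3)
    (by rw [ue_g1 hk, ue_g1 hk]) g
  rw [← this]; exact hXa

def ue_sz {k : ℕ} (W : Matrix (Fin (k+1)) (Fin (k+1)) ℤ) (N : Fin (k+1) → ℤ) : ℝ :=
  ∑ i, |ue_nu W N i|

def ue_sg (e : Bool) : ℤ := if e then 1 else -1

def ue_ch {k : ℕ} (W : Matrix (Fin (k+1)) (Fin (k+1)) ℤ) (c : Fin (k+1) × Bool) :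
    Matrix (Fin (k+1)) (Fin (k+1)) ℤ := Matrix.of fun a i => ue_sg c.2 * W a (Equiv.swap 0 c.1 i)

theorem ue_sg_abs (e : Bool) : |(ue_sg e : ℝ)| = 1 := by cases e <;> simp [ue_sg]
theorem ue_sg_sq (e : Bool) : (ue_sg e : ℝ) * ue_sg e = 1 := by cases e <;> simp [ue_sg]

theorem ue_ch_nu {k : ℕ} (W : Matrix (Fin (k+1)) (Fin (k+1)) ℤ) (c : Fin (k+1) × Bool) (N) (i) :
    ue_nu (ue_ch W c) N i = ue_sg c.2 * ue_nu W N (Equiv.swap 0 c.1 i) := by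
  simp only [ue_nu, ue_ch, Matrix.of_apply, Int.cast_mul, Finset.mul_sum]
  apply Finset.sum_congr rfl; intro j _; ring

theorem ue_ch_det {k : ℕ} (W : Matrix (Fin (k+1)) (Fin (k+1)) ℤ) (c : Fin (k+1) × Bool) :
    |((ue_ch W c).det : ℝ)| = |(W.det : ℝ)| := by
  have : ue_ch W c = ue_sg c.2 • W.submatrix id (Equiv.swap 0 c.1) := by
    ext a i; simp [ue_ch]
  rw [this, Matrix.det_smul, Matrix.det_permute']
  push_cast
  rw [abs_mul, abs_mul, abs_pow, ue_sg_abs, one_pow, one_mul]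
  have : |((Equiv.Perm.sign (Equiv.swap 0 c.1) : ℤ) : ℝ)| = 1 := by
    rcases Int.units_eq_one_or (Equiv.Perm.sign (Equiv.swap 0 c.1)) with h | h <;> rw [h] <;> simp
  rw [this, one_mul]

def ue_cp {k : ℕ} (c : Fin (k+1) × Bool) (q : Fin (k+1) → ℝ) : Fin (k+1) → ℝ :=
  fun i => ue_sg c.2 * q (Equiv.swap 0 c.1 i)

open Classical in
theorem ue_ch_good {k : ℕ} (W : Matrix (Fin (k+1)) (Fin (k+1)) ℤ) (c : Fin (k+1) × Bool) (v0 X)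
    (hX : ue_good W v0 X) : ue_good (ue_ch W c) v0 (X.image (ue_cp c)) := by
  refine ⟨hX.1.image _, ?_, ?_⟩
  · intro q hq i
    obtain ⟨q0, hq0, rfl⟩ := Finset.mem_image.1 hq
    simp only [ue_cp]
    rw [abs_mul, ue_sg_abs, one_mul]; exact hX.2.1 q0 hq0 _
  · intro q hq
    obtain ⟨q0, hq0, rfl⟩ := Finset.mem_image.1 hq
    obtain ⟨p, hp⟩ := hX.2.2 q0 hq0
    refine ⟨p, ?_⟩
    rw [hp]
    congr 1
    ext a
    simp only [Matrix.mulVec, dotProduct, Matrix.map_apply, ue_ch, Matrix.of_apply, ue_cp]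
    rw [← Equiv.sum_comp (Equiv.swap 0 c.1)]
    apply Finset.sum_congr rfl
    intro i _
    push_cast
    have := ue_sg_sq c.2
    linear_combination (- (W a (Equiv.swap 0 c.1 i) : ℝ) * q0 (Equiv.swap 0 c.1 i)) * this

theorem ue_code {k : ℕ} (hk : 1 ≤ k) (W : Matrix (Fin (k+1)) (Fin (k+1)) ℤ) (hW : W.det ≠ 0)
    (v0 : Fin (k+1) → ℤ) :
    ∃ Code : Finset (Fin (k+1) → ℝ) → (Fin (k+1) × Bool) → Finset (Fin (k+1) → ℤ), 
      (∀ X, ue_good W v0 X → ∀ c,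
        (∀ N ∈ Code X c, 0 < ue_sz W N) ∧
        (∑ N ∈ Code X c, ue_sz W N ≤ (k+1) * (2*k+1) * (|(W.det : ℝ)| * 6 ^ (k+1) / ue_v k))) ∧
      ∀ X X', ue_good W v0 X → ue_good W v0 X' → Code X = Code X' →
        ∀ b : Fin (k+1) → ℝ, ∀ a : ℝ, (∀ q ∈ X, ∑ i, b i * q i ≤ a) →
          ∀ q ∈ X', ∑ i, b i * q i ≤ a := by
  classical
  have hWc : ∀ c, (ue_ch W c).det ≠ 0 := by
    intro c h
    have h1 := ue_ch_det W c
    rw [h] at h1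
    simp at h1
    exact hW (by exact_mod_cast abs_eq_zero.1 h1.symm)
  choose Dat hDat hDat2 using fun c => ue_dat hk (ue_ch W c) (hWc c) v0
  refine ⟨fun X c => Dat c (X.image (ue_cp c)), ?_, ?_⟩
  · intro X hX c
    obtain ⟨h1, h2⟩ := hDat c _ (ue_ch_good W c v0 X hX)
    have hsz : ∀ N, ue_sz W N = ∑ i, |ue_nu (ue_ch W c) N i| := by
      intro N
      simp only [ue_sz, ue_ch_nu, abs_mul, ue_sg_abs, one_mul]
      rw [Equiv.sum_comp (Equiv.swap 0 c.1) (fun i => |ue_nu W N i|)]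
    constructor
    · intro N hN
      rw [hsz]
      have := (h1 N hN).1
      exact (abs_pos.2 this.ne').trans_le (Finset.single_le_sum
        (f := fun i => |ue_nu (ue_ch W c) N i|) (fun i _ => abs_nonneg _) (Finset.mem_univ 0))
    · rw [ue_ch_det] at h2
      refine le_trans ?_ (mul_le_mul_of_nonneg_left h2 (by positivity))
      rw [Finset.mul_sum]
      apply Finset.sum_le_sum
      intro N hN
      obtain ⟨h3, h4⟩ := h1 N hN
      rw [hsz]
      have : ∀ i ∈ Finset.univ, |ue_nu (ue_ch W c) N i| ≤ (2*k+1) * ue_nu (ue_ch W c) N 0 := by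
        intro i _
        refine Fin.cases ?_ (fun i => h4 i) i
        rw [abs_of_pos h3]
        have : (0:ℝ) ≤ k := Nat.cast_nonneg k
        nlinarith
      refine (Finset.sum_le_sum this).trans (le_of_eq ?_)
      simp
      ring
  · intro X X' hX hX' hC b a hXa q hq
    obtain ⟨j, -, hj⟩ := Finset.exists_max_image Finset.univ (fun i => |b i|) Finset.univ_nonempty
    by_cases hb : b j = 0
    · have hb0 : ∀ i, b i = 0 := by
        intro i
        have := hj i (Finset.mem_univ i)
        rw [hb, abs_zero] at this
        exact abs_eq_zero.1 (le_antisymm this (abs_nonneg _))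
      obtain ⟨q', hq'⟩ := hX.1
      have := hXa q' hq'
      simpa [hb0] using this
    · let e : Bool := decide (b j < 0)
      let c : Fin (k+1) × Bool := (j, e)
      have he : (ue_sg e : ℝ) * b j = - |b j| := by
        by_cases h : b j < 0
        · simp [e, ue_sg, h, abs_of_neg h]
        · simp [e, ue_sg, h, abs_of_nonneg (not_lt.1 h)]
      have hpos : 0 < |b j| := abs_pos.2 hb
      let g : Fin k → ℝ := fun i => ue_sg e * b (Equiv.swap 0 j i.succ) / |b j|
      have hg : ∀ i, |g i| ≤ 1 := by
        intro i
        simp only [g]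
        rw [abs_div, abs_mul, ue_sg_abs, one_mul, abs_abs, div_le_one hpos]
        exact hj _ (Finset.mem_univ _)
      have key : ∀ q : Fin (k+1) → ℝ, ∑ i, g i * ue_cp c q i.succ - ue_cp c q 0 = (∑ i, b i * q i) / |b j| := by
        intro q
        rw [← Equiv.sum_comp (Equiv.swap 0 j), Fin.sum_univ_succ, Equiv.swap_apply_left, eq_div_iff hpos.ne',
          sub_mul, Finset.sum_mul]
        have e1 : ∀ i : Fin k, g i * ue_cp c q i.succ * |b j| = b (Equiv.swap 0 j i.succ) * q (Equiv.swap 0 j i.succ) := by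
          intro i
          simp only [g, ue_cp, c]
          have := ue_sg_sq e
          field_simp
          linear_combination (b (Equiv.swap 0 j i.succ) * q (Equiv.swap 0 j i.succ)) * this
        rw [Finset.sum_congr rfl (fun i _ => e1 i)]
        have e2 : ue_cp c q 0 * |b j| = - (b j * q j) := by
          simp only [ue_cp, c, Equiv.swap_apply_left]
          have := ue_sg_sq e
          have h3 : |b j| = - (ue_sg e * b j) := by rw [he, neg_neg]
          rw [h3]
          linear_combination (- b j * q j) * this
        rw [e2]; ring
      have := hDat2 c _ _ (ue_ch_good W c v0 X hX) (ue_ch_good W c v0 X' hX') (congrFun hC c) g hg (a / |b j|) (by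
        intro q' hq'
        obtain ⟨q1, hq1, rfl⟩ := Finset.mem_image.1 hq'
        rw [key]
        exact div_le_div_of_nonneg_right (hXa q1 hq1) hpos.le) (ue_cp c q) (Finset.mem_image_of_mem _ hq)
      rw [key] at this
      exact (div_le_div_iff_of_pos_right hpos).1 this

theorem uf_count {ι : Type*} [DecidableEq ι] (Q : Finset ι) (s : ι → ℝ) (τ S : ℝ) (hτ : 0 ≤ τ) :
    ((Q.powerset.filter (fun D => ∑ N ∈ D, s N ≤ S)).card : ℝ) ≤
      Real.exp (τ * S + ∑ N ∈ Q, Real.exp (-(τ * s N))) := by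
  have h1 : ((Q.powerset.filter (fun D => ∑ N ∈ D, s N ≤ S)).card : ℝ) ≤
      ∑ D ∈ Q.powerset.filter (fun D => ∑ N ∈ D, s N ≤ S), Real.exp (τ * S) * ∏ N ∈ D, Real.exp (-(τ * s N)) := by
    rw [Finset.card_eq_sum_ones, Nat.cast_sum]
    apply Finset.sum_le_sum
    intro D hD
    rw [← Real.exp_sum, ← Real.exp_add, Nat.cast_one]
    apply Real.one_le_exp
    rw [Finset.sum_neg_distrib, ← Finset.mul_sum]
    have := mul_le_mul_of_nonneg_left (Finset.mem_filter.1 hD).2 hτ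
    linarith
  have h2 : ∑ D ∈ Q.powerset.filter (fun D => ∑ N ∈ D, s N ≤ S), Real.exp (τ * S) * ∏ N ∈ D, Real.exp (-(τ * s N))
      ≤ ∑ D ∈ Q.powerset, Real.exp (τ * S) * ∏ N ∈ D, Real.exp (-(τ * s N)) := by
    apply Finset.sum_le_sum_of_subset_of_nonneg (Finset.filter_subset _ _)
    intro D _ _
    exact mul_nonneg (Real.exp_pos _).le (Finset.prod_nonneg fun i _ => (Real.exp_pos _).le)
  refine h1.trans (h2.trans ?_)
  rw [← Finset.mul_sum, ← Finset.prod_one_add, Real.exp_add, Real.exp_sum]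
  apply mul_le_mul_of_nonneg_left _ (Real.exp_pos _).le
  apply Finset.prod_le_prod
  · intro i _; positivity
  · intro i _
    have := Real.add_one_le_exp (Real.exp (-(τ * s i)))
    linarith

def uf_c (d : ℕ) : ℝ := ∑' l : ℕ, (l:ℝ)^d * Real.exp (1 - l)

theorem uf_summ (d : ℕ) : Summable fun l : ℕ => (l:ℝ)^d * Real.exp (1 - l) := by
  have := (Real.summable_pow_mul_exp_neg_nat_mul d (r := 1) one_pos).mul_left (Real.exp 1)
  refine this.congr ?_
  intro l
  rw [sub_eq_add_neg, Real.exp_add]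
  simp only [neg_mul, one_mul]
  ring

theorem uf_c_nonneg (d : ℕ) : 0 ≤ uf_c d := tsum_nonneg fun l => by positivity

theorem uf_sum {ι : Type*} [DecidableEq ι] (d : ℕ) (Q : Finset ι) (s : ι → ℝ) (τ κ : ℝ) (hκ : 0 ≤ κ)
    (hs : ∀ N ∈ Q, 0 < τ * s N)
    (h : ∀ l : ℕ, 1 ≤ l → ((Q.filter (fun N => τ * s N ≤ l)).card : ℝ) ≤ κ * (l:ℝ)^d) :
    ∑ N ∈ Q, Real.exp (-(τ * s N)) ≤ κ * uf_c d := by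
  rw [← Finset.sum_fiberwise_of_maps_to (g := fun N => ⌈τ * s N⌉₊) (t := Q.image fun N => ⌈τ * s N⌉₊)
    (fun N hN => Finset.mem_image_of_mem _ hN)]
  calc _ ≤ ∑ l ∈ Q.image (fun N => ⌈τ * s N⌉₊), κ * ((l:ℝ)^d * Real.exp (1 - l)) := by
        apply Finset.sum_le_sum
        intro l hl
        obtain ⟨N0, hN0, rfl⟩ := Finset.mem_image.1 hl
        set l := ⌈τ * s N0⌉₊ with hl'
        have hl1 : 1 ≤ l := Nat.one_le_iff_ne_zero.2 (by
          rw [hl']; exact (Nat.ceil_pos.2 (hs N0 hN0)).ne')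
        have h1 : ∀ N ∈ Q.filter (fun N => ⌈τ * s N⌉₊ = l), Real.exp (-(τ * s N)) ≤ Real.exp (1 - l) := by
          intro N hN
          apply Real.exp_le_exp.2
          obtain ⟨hN1, hN2⟩ := Finset.mem_filter.1 hN
          have := Nat.ceil_lt_add_one (hs N hN1).le
          rw [hN2] at this
          linarith
        refine (Finset.sum_le_card_nsmul _ _ _ h1).trans ?_
        rw [nsmul_eq_mul, ← mul_assoc]
        apply mul_le_mul_of_nonneg_right _ (Real.exp_pos _).le
        refine le_trans ?_ (h l hl1)
        norm_cast
        apply Finset.card_le_card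
        intro N hN
        obtain ⟨hN1, hN2⟩ := Finset.mem_filter.1 hN
        refine Finset.mem_filter.2 ⟨hN1, ?_⟩
        rw [← hN2]; exact Nat.le_ceil _
    _ ≤ _ := by
        rw [← Finset.mul_sum]
        apply mul_le_mul_of_nonneg_left _ hκ
        exact (uf_summ d).sum_le_tsum _ (fun l _ => by positivity)

theorem uf_hull {d : ℕ} (F F' : Finset (Fin d → ℝ))
    (h : ∀ b : Fin d → ℝ, ∀ a : ℝ, (∀ q ∈ F, ∑ i, b i * q i ≤ a) → ∀ q ∈ F', ∑ i, b i * q i ≤ a) :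
    convexHull ℝ (F' : Set (Fin d → ℝ)) ⊆ convexHull ℝ (F : Set (Fin d → ℝ)) := by
  apply convexHull_min _ (convex_convexHull ℝ _)
  intro q hq
  by_contra hc
  obtain ⟨f, u, h1, h2⟩ := geometric_hahn_banach_closed_point (convex_convexHull ℝ (F : Set (Fin d → ℝ)))
    (F.finite_toSet.isCompact_convexHull ℝ).isClosed hc
  have hf : ∀ x, f x = ∑ i, f (Pi.single i 1) * x i := by
    intro x
    have := LinearMap.pi_apply_eq_sum_univ f.toLinearMap x
    simp only [smul_eq_mul, ContinuousLinearMap.coe_coe] at this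
    rw [this]
    apply Finset.sum_congr rfl
    intro i _
    rw [mul_comm]
    congr 2
    ext j
    simp [Pi.single_apply, eq_comm]
  have := h (fun i => f (Pi.single i 1)) u (by
    intro q hq
    rw [← hf]; exact (h1 q (subset_convexHull ℝ _ hq)).le) q hq
  rw [← hf] at this
  linarith

def uf_W {n : ℕ} (T : Matrix (Fin n) (Fin n) ℝ) (m : ℕ) : Matrix (Fin n) (Fin n) ℤ :=
  Matrix.of fun a i => ⌊2 * (m:ℝ) * T a i⌋

def uf_T {n : ℕ} (T : Matrix (Fin n) (Fin n) ℝ) (m : ℕ) : Matrix (Fin n) (Fin n) ℝ :=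
  Matrix.of fun a i => (⌊2 * (m:ℝ) * T a i⌋ : ℝ) / (2 * m)

theorem uf_WT {n : ℕ} (T : Matrix (Fin n) (Fin n) ℝ) (m : ℕ) (hm : m ≠ 0) :
    (uf_W T m).map (Int.cast : ℤ → ℝ) = (2 * (m:ℝ)) • uf_T T m := by
  ext a i
  have : (m:ℝ) ≠ 0 := by exact_mod_cast hm
  simp only [uf_W, uf_T, Matrix.map_apply, Matrix.of_apply, Matrix.smul_apply, smul_eq_mul]
  field_simp

theorem uf_Wdet {n : ℕ} (T : Matrix (Fin n) (Fin n) ℝ) (m : ℕ) (hm : m ≠ 0) :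
    ((uf_W T m).det : ℝ) = (2 * (m:ℝ))^n * (uf_T T m).det := by
  have : ((uf_W T m).det : ℝ) = ((uf_W T m).map (Int.cast : ℤ → ℝ)).det := by
    exact (Int.castRingHom ℝ).map_det _
  rw [this, uf_WT T m hm, Matrix.det_smul, Fintype.card_fin]

theorem uf_lim {n : ℕ} (T : Matrix (Fin n) (Fin n) ℝ) : Tendsto (uf_T T) atTop (nhds T) := by
  refine tendsto_pi_nhds.2 fun a => tendsto_pi_nhds.2 fun i => ?_
  have h0 : Tendsto (fun m : ℕ => T a i - (1:ℝ) / m) atTop (nhds (T a i)) := by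
    have := (tendsto_const_nhds (x := T a i)).sub (tendsto_one_div_atTop_nhds_zero_nat (𝕜 := ℝ))
    simpa using this
  refine tendsto_of_tendsto_of_tendsto_of_le_of_le' h0 tendsto_const_nhds ?_ ?_
  · filter_upwards [eventually_gt_atTop 0] with m hm
    have hm' : (0:ℝ) < m := by exact_mod_cast hm
    simp only [uf_T, Matrix.of_apply]
    rw [le_div_iff₀ (by positivity)]
    have := (Int.sub_one_lt_floor (2 * (m:ℝ) * T a i)).le
    have h2 : (T a i - 1 / (m:ℝ)) * (2 * m) = 2 * m * T a i - 2 := by field_simp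
    linarith
  · filter_upwards [eventually_gt_atTop 0] with m hm
    have hm' : (0:ℝ) < m := by exact_mod_cast hm
    simp only [uf_T, Matrix.of_apply]
    rw [div_le_iff₀ (by positivity)]
    have := Int.floor_le (2 * (m:ℝ) * T a i)
    linarith

theorem uf_mat {n : ℕ} (T : Matrix (Fin n) (Fin n) ℝ) (hT : T.det ≠ 0) :
    ∀ᶠ m : ℕ in atTop, (uf_T T m).det ≠ 0 ∧ |(uf_T T m).det| ≤ 2 * |T.det| ∧
      (∀ i, (1 / (m:ℝ)) * ∑ j, |(uf_T T m)⁻¹ i j| + 1/2 * ∑ j, |((uf_T T m)⁻¹ * T) i j| ≤ 1) ∧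
      (∀ i j, |((uf_T T m)⁻¹ * T) i j| ≤ 2) := by
  have h1 : Tendsto (fun m => (uf_T T m).det) atTop (nhds T.det) :=
    ((continuous_id.matrix_det).tendsto T).comp (uf_lim T)
  have h2 : Tendsto (fun m => (uf_T T m)⁻¹) atTop (nhds T⁻¹) := by
    simp only [Matrix.inv_def, Ring.inverse_eq_inv']
    exact (h1.inv₀ hT).smul (((continuous_id.matrix_adjugate).tendsto T).comp (uf_lim T))
  have h3 : Tendsto (fun m => (uf_T T m)⁻¹ * T) atTop (nhds 1) := by
    rw [← Matrix.nonsing_inv_mul T (isUnit_iff_ne_zero.2 hT)]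
    exact ((continuous_id.matrix_mul (continuous_const (y := T))).tendsto T⁻¹).comp h2
  have h2' : ∀ i j, Tendsto (fun m => |(uf_T T m)⁻¹ i j|) atTop (nhds |T⁻¹ i j|) := by
    intro i j
    exact ((tendsto_pi_nhds.1 (tendsto_pi_nhds.1 h2 i)) j).abs
  have h3' : ∀ i j, Tendsto (fun m => |((uf_T T m)⁻¹ * T) i j|) atTop (nhds |(1 : Matrix (Fin n) (Fin n) ℝ) i j|) := by
    intro i j
    exact ((tendsto_pi_nhds.1 (tendsto_pi_nhds.1 h3 i)) j).abs
  have e1 : ∀ᶠ m : ℕ in atTop, (uf_T T m).det ≠ 0 := h1.eventually_ne hT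
  have e2 : ∀ᶠ m : ℕ in atTop, |(uf_T T m).det| ≤ 2 * |T.det| := by
    refine (h1.abs.eventually_lt_const (u := 2 * |T.det|) ?_).mono fun m h => h.le
    have := abs_pos.2 hT
    linarith
  have e3 : ∀ᶠ m : ℕ in atTop, ∀ i, (1 / (m:ℝ)) * ∑ j, |(uf_T T m)⁻¹ i j| + 1/2 * ∑ j, |((uf_T T m)⁻¹ * T) i j| ≤ 1 := by
    rw [eventually_all]
    intro i
    have : Tendsto (fun m : ℕ => (1 / (m:ℝ)) * ∑ j, |(uf_T T m)⁻¹ i j| + 1/2 * ∑ j, |((uf_T T m)⁻¹ * T) i j|) atTop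
        (nhds (0 * ∑ j, |T⁻¹ i j| + 1/2 * ∑ j, |(1 : Matrix (Fin n) (Fin n) ℝ) i j|)) := by
      apply Tendsto.add
      · exact tendsto_one_div_atTop_nhds_zero_nat.mul (tendsto_finsetSum _ fun j _ => h2' i j)
      · exact tendsto_const_nhds.mul (tendsto_finsetSum _ fun j _ => h3' i j)
    refine (this.eventually_lt_const (u := 1) ?_).mono fun m h => h.le
    have : ∑ j, |(1 : Matrix (Fin n) (Fin n) ℝ) i j| = 1 := by
      simp [Matrix.one_apply, apply_ite abs]
    rw [this]; norm_num
  have e4 : ∀ᶠ m : ℕ in atTop, ∀ i j, |((uf_T T m)⁻¹ * T) i j| ≤ 2 := by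
    rw [eventually_all]; intro i
    rw [eventually_all]; intro j
    refine ((h3' i j).eventually_lt_const (u := 2) ?_).mono fun m h => h.le
    by_cases h : i = j <;> simp [Matrix.one_apply, h]
  filter_upwards [e1, e2, e3, e4] with m a b c e using ⟨a, b, c, e⟩

/-- volume of the dual box -/
def uf_D {n : ℕ} (T : Matrix (Fin n) (Fin n) ℝ) : Set (Fin n → ℝ) :=
  {v : Fin n → ℝ | ∀ i, |(Matrix.vecMul v T) i| ≤ 1}

theorem uf_Deq {n : ℕ} (T : Matrix (Fin n) (Fin n) ℝ) (hT : T.det ≠ 0) :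
    uf_D T = (Matrix.toLin' (T⁻¹).transpose) '' (Set.Icc (fun _ => -1) (fun _ => 1)) := by
  ext v
  simp only [uf_D, Set.mem_ofPred_eq, Set.mem_image, Matrix.toLin'_apply, Matrix.mulVec_transpose]
  have hu := isUnit_iff_ne_zero.2 hT
  constructor
  · intro h
    refine ⟨Matrix.vecMul v T, ⟨fun i => (abs_le.1 (h i)).1, fun i => (abs_le.1 (h i)).2⟩, ?_⟩
    rw [Matrix.vecMul_vecMul, Matrix.mul_nonsing_inv T hu, Matrix.vecMul_one]
  · rintro ⟨w, ⟨h1, h2⟩, rfl⟩ i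
    rw [Matrix.vecMul_vecMul, Matrix.nonsing_inv_mul T hu, Matrix.vecMul_one]
    exact abs_le.2 ⟨h1 i, h2 i⟩

theorem uf_Dvol {n : ℕ} (T : Matrix (Fin n) (Fin n) ℝ) (hT : T.det ≠ 0) :
    IsCompact (uf_D T) ∧ Convex ℝ (uf_D T) ∧ volume.real (uf_D T) = 2^n / |T.det| := by
  rw [uf_Deq T hT]
  refine ⟨?_, ?_, ?_⟩
  · exact isCompact_Icc.image (LinearMap.continuous_of_finiteDimensional _)
  · exact (convex_Icc _ _).linear_image _
  · rw [Measure.real, Measure.addHaar_image_linearMap, LinearMap.det_toLin', Matrix.det_transpose,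
      Matrix.det_nonsing_inv, Ring.inverse_eq_inv', Real.volume_Icc_pi, ENNReal.toReal_mul]
    simp [abs_inv]
    norm_num
    rw [div_eq_inv_mul]

/-- the number of integer functionals with small values -/
theorem uf_dualcount {n : ℕ} (T : Matrix (Fin n) (Fin n) ℝ) (hT : T.det ≠ 0) :
    ∃ R : ℝ, 1 ≤ R ∧ ∀ x : ℝ, R ≤ x → ∀ Q : Finset (Fin n → ℤ),
      (∀ N ∈ Q, ∀ i, |(Matrix.vecMul (fun j => (N j:ℝ)) T) i| ≤ x) →
      (Q.card : ℝ) ≤ 2 * 4^n / |T.det| * x^n := by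
  obtain ⟨h1, h2, h3⟩ := uf_Dvol T hT
  have hp := abs_pos.2 hT
  obtain ⟨R, hR⟩ := eventually_atTop.1 (ub_count (uf_D T) h1 h2 (by rw [h3]; positivity))
  refine ⟨max 1 R, le_max_left _ _, ?_⟩
  intro x hx Q hQ
  have hx1 : 1 ≤ x := (le_max_left _ _).trans hx
  have hxR : (R:ℝ) ≤ x := (le_max_right _ _).trans hx
  let r := ⌈x⌉₊
  have hr1 : x ≤ r := Nat.le_ceil x
  have hr2 : (r:ℝ) ≤ 2 * x := by
    have := Nat.ceil_lt_add_one (zero_le_one.trans hx1)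
    change (⌈x⌉₊:ℝ) ≤ _
    linarith
  have hr0 : (0:ℝ) < r := by linarith
  obtain ⟨-, h4⟩ := hR r (by exact_mod_cast hxR.trans hr1)
  have hsub : (Q : Set (Fin n → ℤ)) ⊆ ub_Z (uf_D T) r := by
    intro N hN i
    have := hQ N hN i
    have e : (fun i => (N i:ℝ)/r) = (r:ℝ)⁻¹ • (fun i => (N i:ℝ)) := by
      ext i; simp [div_eq_inv_mul]
    rw [e, Matrix.smul_vecMul, Pi.smul_apply, smul_eq_mul, abs_mul, abs_of_pos (by positivity), ← div_eq_inv_mul,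
      div_le_one hr0]
    exact this.trans hr1
  have h5 := Set.ncard_le_ncard hsub (ub_finite _ h1.isBounded r (by intro h; rw [h] at hr0; simp at hr0))
  rw [Set.ncard_coe_finset] at h5
  have h6 : (Q.card : ℝ) ≤ (ub_Z (uf_D T) r).ncard := by exact_mod_cast h5
  refine h6.trans (h4.trans ?_)
  rw [h3]
  calc 2 * (2^n / |T.det|) * (r:ℝ)^n ≤ 2 * (2^n / |T.det|) * (2 * x)^n := by gcongr
    _ = _ := by rw [mul_pow, show (4:ℝ) = 2 * 2 by norm_num, mul_pow]; ring

def uf_S {k : ℕ} (W : Matrix (Fin (k+1)) (Fin (k+1)) ℤ) : ℝ :=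
  (k+1) * (2*k+1) * (|(W.det : ℝ)| * 6 ^ (k+1) / ue_v k)

def uf_phi {n : ℕ} (W : Matrix (Fin n) (Fin n) ℤ) (v0 : Fin n → ℤ) (m : ℕ) (y : Fin n → ℝ) : Fin n → ℝ :=
  ((W.map (Int.cast : ℤ → ℝ))⁻¹).mulVec ((m:ℝ) • y - fun i => (v0 i:ℝ))

open Classical in
theorem uf_step {k : ℕ} (hk : 1 ≤ k) (W : Matrix (Fin (k+1)) (Fin (k+1)) ℤ) (hW : W.det ≠ 0)
    (v0 : Fin (k+1) → ℤ) (m : ℕ) (hm : 0 < m) (𝓕 : Finset (Finset (Fin (k+1) → ℝ)))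
    (hne : ∀ F ∈ 𝓕, F.Nonempty) (hlat : ∀ F ∈ 𝓕, ∀ y ∈ F, ∀ i, ∃ z : ℤ, y i = (z:ℝ) / m)
    (hq : ∀ F ∈ 𝓕, ∀ y ∈ F, ∀ i, |uf_phi W v0 m y i| ≤ 1)
    (hinj : ∀ F ∈ 𝓕, ∀ F' ∈ 𝓕, convexHull ℝ (F : Set (Fin (k+1) → ℝ)) = convexHull ℝ (F' : Set (Fin (k+1) → ℝ)) → F = F') :
    ∃ Q : Finset (Fin (k+1) → ℤ), (∀ N ∈ Q, 0 < ue_sz W N) ∧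
      𝓕.card ≤ (Q.powerset.filter (fun D => ∑ N ∈ D, ue_sz W N ≤ uf_S W)).card ^ ((k+1)*2) := by
  obtain ⟨Code, hC1, hC2⟩ := ue_code hk W hW v0
  have hm' : (m:ℝ) ≠ 0 := by exact_mod_cast hm.ne'
  let X : Finset (Fin (k+1) → ℝ) → Finset (Fin (k+1) → ℝ) := fun F => F.image (uf_phi W v0 m)
  have hdet : (W.map (Int.cast : ℤ → ℝ)).det ≠ 0 := by
    have : ((W.det : ℤ) : ℝ) = (W.map (Int.cast : ℤ → ℝ)).det := (Int.castRingHom ℝ).map_det _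
    rw [← this]; exact_mod_cast hW
  have hWphi : ∀ y, (W.map (Int.cast : ℤ → ℝ)).mulVec (uf_phi W v0 m y) = (m:ℝ) • y - fun i => (v0 i:ℝ) := by
    intro y
    rw [uf_phi, Matrix.mulVec_mulVec, Matrix.mul_nonsing_inv _ (isUnit_iff_ne_zero.2 hdet), Matrix.one_mulVec]
  have hgood : ∀ F ∈ 𝓕, ue_good W v0 (X F) := by
    intro F hF
    refine ⟨(hne F hF).image _, ?_, ?_⟩
    · intro q hqX
      obtain ⟨y, hy, rfl⟩ := Finset.mem_image.1 hqX
      exact hq F hF y hy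
    · intro q hqX
      obtain ⟨y, hy, rfl⟩ := Finset.mem_image.1 hqX
      choose p hp using hlat F hF y hy
      refine ⟨p, ?_⟩
      rw [hWphi]
      ext i
      simp only [Pi.add_apply, Pi.sub_apply, Pi.smul_apply, smul_eq_mul, hp i]
      field_simp
      ring
  let Q : Finset (Fin (k+1) → ℤ) := 𝓕.biUnion fun F => Finset.univ.biUnion fun c => Code (X F) c
  have hQ : ∀ F ∈ 𝓕, ∀ c, Code (X F) c ⊆ Q := by
    intro F hF c N hN
    exact Finset.mem_biUnion.2 ⟨F, hF, Finset.mem_biUnion.2 ⟨c, Finset.mem_univ c, hN⟩⟩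
  refine ⟨Q, ?_, ?_⟩
  · intro N hN
    obtain ⟨F, hF, hN⟩ := Finset.mem_biUnion.1 hN
    obtain ⟨c, -, hN⟩ := Finset.mem_biUnion.1 hN
    exact (hC1 _ (hgood F hF) c).1 N hN
  · have hcard : (Fintype.piFinset (fun _ : Fin (k+1) × Bool =>
        (Q.powerset.filter (fun D => ∑ N ∈ D, ue_sz W N ≤ uf_S W)))).card =
        (Q.powerset.filter (fun D => ∑ N ∈ D, ue_sz W N ≤ uf_S W)).card ^ ((k+1)*2) := by
      rw [Fintype.card_piFinset]; simp
    rw [← hcard]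
    apply Finset.card_le_card_of_injOn (fun F => Code (X F))
    · intro F hF
      refine Fintype.mem_piFinset.2 fun c => Finset.mem_filter.2 ⟨Finset.mem_powerset.2 (hQ F hF c), ?_⟩
      exact (hC1 _ (hgood F hF) c).2
    · have key : ∀ F ∈ 𝓕, ∀ F' ∈ 𝓕, Code (X F) = Code (X F') →
          convexHull ℝ (F' : Set (Fin (k+1) → ℝ)) ⊆ convexHull ℝ (F : Set (Fin (k+1) → ℝ)) := by
        intro F hF F' hF' hE
        apply uf_hull
        intro b a hba y hy
        let bb := Matrix.vecMul b (W.map (Int.cast : ℤ → ℝ))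
        have e : ∀ y, ∑ i, bb i * uf_phi W v0 m y i = m * (∑ i, b i * y i) - ∑ i, b i * v0 i := by
          intro y
          change dotProduct bb (uf_phi W v0 m y) = _
          rw [← Matrix.dotProduct_mulVec, hWphi, dotProduct_sub, dotProduct_smul]
          rfl
        have := hC2 _ _ (hgood F hF) (hgood F' hF') hE bb (m * a - ∑ i, b i * v0 i) (by
          intro q hqX
          obtain ⟨y1, hy1, rfl⟩ := Finset.mem_image.1 hqX
          rw [e]
          have := mul_le_mul_of_nonneg_left (hba y1 hy1) (Nat.cast_nonneg m)
          linarith) _ (Finset.mem_image_of_mem _ hy)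
        rw [e] at this
        have hmp : (0:ℝ) < m := by exact_mod_cast hm
        nlinarith
      intro F hF F' hF' hE
      exact hinj F hF F' hF' (subset_antisymm (key F' hF' F hF hE.symm) (key F hF F' hF' hE))

/-- bounds on `uf_phi` and on functionals for the actual choice of `W` -/
theorem uf_phi_bd {n : ℕ} (T : Matrix (Fin n) (Fin n) ℝ) (x0 : Fin n → ℝ) (m : ℕ) (hm : 0 < m)
    (hdet : (uf_T T m).det ≠ 0)
    (h : ∀ i, (1 / (m:ℝ)) * ∑ j, |(uf_T T m)⁻¹ i j| + 1/2 * ∑ j, |((uf_T T m)⁻¹ * T) i j| ≤ 1)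
    (b : Fin n → ℝ) (hb : ∀ i, |b i| ≤ 1) (i : Fin n) :
    |uf_phi (uf_W T m) (fun i => ⌊(m:ℝ) * x0 i⌋) m (x0 + T.mulVec b) i| ≤ 1 := by
  have hm' : (0:ℝ) < m := by exact_mod_cast hm
  let ε : Fin n → ℝ := fun i => m * x0 i - ⌊(m:ℝ) * x0 i⌋
  have hε : ∀ i, |ε i| ≤ 1 := by
    intro i
    have h1 := Int.floor_le ((m:ℝ) * x0 i)
    have h2 := Int.lt_floor_add_one ((m:ℝ) * x0 i)
    simp only [ε]
    rw [abs_le]; constructor <;> linarith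
  have hinv : ((uf_W T m).map (Int.cast : ℤ → ℝ))⁻¹ = (1 / (2 * (m:ℝ))) • (uf_T T m)⁻¹ := by
    rw [uf_WT T m hm.ne']
    apply Matrix.inv_eq_right_inv
    rw [Matrix.smul_mul, Matrix.mul_smul, Matrix.mul_nonsing_inv _ (isUnit_iff_ne_zero.2 hdet), smul_smul]
    have : 2 * (m:ℝ) * (1 / (2 * m)) = 1 := by field_simp
    rw [this, one_smul]
  have e : uf_phi (uf_W T m) (fun i => ⌊(m:ℝ) * x0 i⌋) m (x0 + T.mulVec b) =
      (1 / (2 * (m:ℝ))) • ((uf_T T m)⁻¹).mulVec ε + (1/2 : ℝ) • ((uf_T T m)⁻¹ * T).mulVec b := by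
    have : (m:ℝ) • (x0 + T.mulVec b) - (fun i => ((⌊(m:ℝ) * x0 i⌋ : ℤ) : ℝ)) = ε + (m:ℝ) • T.mulVec b := by
      ext i; simp only [ε, Pi.add_apply, Pi.sub_apply, Pi.smul_apply, smul_eq_mul]; ring
    rw [uf_phi, this, hinv, Matrix.mulVec_add, Matrix.smul_mulVec, Matrix.smul_mulVec, Matrix.mulVec_smul, Matrix.mulVec_mulVec, smul_smul]
    congr 2
    field_simp
  rw [e]
  have b1 : |((uf_T T m)⁻¹).mulVec ε i| ≤ ∑ j, |(uf_T T m)⁻¹ i j| := by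
    rw [Matrix.mulVec, dotProduct]
    refine (Finset.abs_sum_le_sum_abs _ _).trans (Finset.sum_le_sum fun j _ => ?_)
    rw [abs_mul]; exact mul_le_of_le_one_right (abs_nonneg _) (hε j)
  have b2 : |((uf_T T m)⁻¹ * T).mulVec b i| ≤ ∑ j, |((uf_T T m)⁻¹ * T) i j| := by
    rw [Matrix.mulVec, dotProduct]
    refine (Finset.abs_sum_le_sum_abs _ _).trans (Finset.sum_le_sum fun j _ => ?_)
    rw [abs_mul]; exact mul_le_of_le_one_right (abs_nonneg _) (hb j)
  simp only [Pi.add_apply, Pi.smul_apply, smul_eq_mul]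
  refine (abs_add_le _ _).trans (le_trans ?_ (h i))
  rw [abs_mul, abs_mul, abs_of_pos (show (0:ℝ) < 1 / (2 * m) by positivity), abs_of_pos (show (0:ℝ) < 1/2 by norm_num)]
  have h3 : 1 / (2 * (m:ℝ)) ≤ 1 / m := by
    apply one_div_le_one_div_of_le hm'; linarith
  have := mul_le_mul h3 b1 (abs_nonneg _) (by positivity)
  linarith

theorem uf_nu_bd {n : ℕ} (T : Matrix (Fin (n+1)) (Fin (n+1)) ℝ) (m : ℕ) (hm : 0 < m)
    (hdet : (uf_T T m).det ≠ 0) (h : ∀ i j, |((uf_T T m)⁻¹ * T) i j| ≤ 2) (N : Fin (n+1) → ℤ) (i) :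
    |(Matrix.vecMul (fun j => (N j:ℝ)) T) i| ≤ ue_sz (uf_W T m) N / m := by
  have hm' : (0:ℝ) < m := by exact_mod_cast hm
  have hnu : ue_nu (uf_W T m) N = (2 * (m:ℝ)) • Matrix.vecMul (fun j => (N j:ℝ)) (uf_T T m) := by
    rw [← Matrix.vecMul_smul, ← uf_WT T m hm.ne']
    ext i; rfl
  have e : Matrix.vecMul (fun j => (N j:ℝ)) T = (1 / (2 * (m:ℝ))) • Matrix.vecMul (ue_nu (uf_W T m) N) ((uf_T T m)⁻¹ * T) := by
    rw [hnu, Matrix.smul_vecMul, Matrix.vecMul_vecMul, ← Matrix.mul_assoc, Matrix.mul_nonsing_inv _ (isUnit_iff_ne_zero.2 hdet),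
      Matrix.one_mul, smul_smul]
    have : 1 / (2 * (m:ℝ)) * (2 * m) = 1 := by field_simp
    rw [this, one_smul]
  rw [e, Pi.smul_apply, smul_eq_mul, abs_mul, abs_of_pos (show (0:ℝ) < 1 / (2 * m) by positivity)]
  have : |Matrix.vecMul (ue_nu (uf_W T m) N) ((uf_T T m)⁻¹ * T) i| ≤ 2 * ue_sz (uf_W T m) N := by
    rw [Matrix.vecMul, dotProduct]
    refine (Finset.abs_sum_le_sum_abs _ _).trans ?_
    rw [ue_sz, Finset.mul_sum]
    refine Finset.sum_le_sum fun j _ => ?_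
    rw [abs_mul, mul_comm]; exact mul_le_mul_of_nonneg_right (h j i) (abs_nonneg _)
  refine (mul_le_mul_of_nonneg_left this (by positivity)).trans (le_of_eq ?_)
  field_simp

theorem uf_upper (k : ℕ) (hk : 1 ≤ k) : ∃ C : ℝ, 0 < C ∧ ∀ (K : Set (Fin (k+1) → ℝ)) (x0 : Fin (k+1) → ℝ)
    (T : Matrix (Fin (k+1)) (Fin (k+1)) ℝ), T.det ≠ 0 →
    (∀ y ∈ K, ∃ b : Fin (k+1) → ℝ, (∀ i, |b i| ≤ 1) ∧ y = x0 + T.mulVec b) →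
    ∀ᶠ m : ℕ in atTop, ∀ 𝓕 : Finset (Finset (Fin (k+1) → ℝ)),
      (∀ F ∈ 𝓕, F.Nonempty) → (∀ F ∈ 𝓕, ∀ y ∈ F, y ∈ K) →
      (∀ F ∈ 𝓕, ∀ y ∈ F, ∀ i, ∃ z : ℤ, y i = (z:ℝ) / m) →
      (∀ F ∈ 𝓕, ∀ F' ∈ 𝓕, convexHull ℝ (F : Set (Fin (k+1) → ℝ)) = convexHull ℝ (F' : Set (Fin (k+1) → ℝ)) → F = F') →
      Real.log 𝓕.card ≤ C * ((m:ℝ)^(k+1) * |T.det|) ^ ((k:ℝ) / (k+2)) := by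
  classical
  have hv := ue_v_pos k
  have hc := uf_c_nonneg (k+1)
  let C0 : ℝ := (k+1) * (2*k+1) * (6^(k+1) / ue_v k)
  have hC0 : 0 < C0 := by positivity
  refine ⟨((k+1)*2) * (C0 * (2 * 2^(k+1)) + 2 * 4^(k+1) * uf_c (k+1)), by positivity, ?_⟩
  intro K x0 T hT hK
  have hΔ : 0 < |T.det| := abs_pos.2 hT
  obtain ⟨R, hR1, hR⟩ := uf_dualcount T hT
  have hlim : Tendsto (fun m : ℕ => |T.det| ^ ((2:ℝ)/(k+2)) * (m:ℝ)^((k:ℝ)/(k+2))) atTop atTop := by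
    apply Tendsto.const_mul_atTop (by positivity)
    exact (tendsto_rpow_atTop (by positivity)).comp tendsto_natCast_atTop_atTop
  filter_upwards [uf_mat T hT, eventually_gt_atTop 0, hlim.eventually_ge_atTop R] with m hmat hm hmR
  obtain ⟨hd1, hd2, hd3, hd4⟩ := hmat
  intro 𝓕 hne hsub hlat hinj
  have hm' : (0:ℝ) < m := by exact_mod_cast hm
  have hkk : (0:ℝ) < (k:ℝ) + 2 := by positivity
  set V : ℝ := (m:ℝ)^(k+1) * |T.det| with hVdef
  have hV : 0 < V := by positivity
  have hWdet : (uf_W T m).det ≠ 0 := by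
    have := uf_Wdet T m hm.ne'
    intro h
    rw [h] at this
    have h2 : (2 * (m:ℝ))^(k+1) * (uf_T T m).det ≠ 0 := mul_ne_zero (by positivity) hd1
    apply h2; rw [← this]; simp
  obtain ⟨Q, hQ1, hQ2⟩ := uf_step hk (uf_W T m) hWdet (fun i => ⌊(m:ℝ) * x0 i⌋) m hm 𝓕 hne hlat (by
    intro F hF y hy i
    obtain ⟨b, hb, rfl⟩ := hK y (hsub F hF y hy)
    exact uf_phi_bd T x0 m hm hd1 hd3 b hb i) hinj
  let τ : ℝ := V ^ (-(2:ℝ)/(k+2))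
  have hτ : 0 < τ := Real.rpow_pos_of_pos hV _
  have e1 : τ * V = V ^ ((k:ℝ)/(k+2)) := by
    rw [show τ * V = V ^ (-(2:ℝ)/(k+2)) * V ^ (1:ℝ) by rw [Real.rpow_one], ← Real.rpow_add hV]
    congr 1; field_simp; ring
  have e2 : V⁻¹ * (τ ^ (k+1))⁻¹ = V ^ ((k:ℝ)/(k+2)) := by
    rw [← Real.rpow_neg_one V, ← Real.rpow_natCast τ, ← Real.rpow_neg hτ.le, ← Real.rpow_mul hV.le, ← Real.rpow_add hV]
    congr 1; push_cast; field_simp; ring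
  have e3 : τ⁻¹ / m = |T.det| ^ ((2:ℝ)/(k+2)) * (m:ℝ)^((k:ℝ)/(k+2)) := by
    rw [← Real.rpow_neg hV.le, div_eq_mul_inv, ← Real.rpow_neg_one (m:ℝ), hVdef, Real.mul_rpow (by positivity) (by positivity),
      ← Real.rpow_natCast (m:ℝ), ← Real.rpow_mul hm'.le, mul_right_comm, ← Real.rpow_add hm', mul_comm]
    congr 2
    · ring
    · push_cast; field_simp; ring
  have hcnt := uf_count Q (ue_sz (uf_W T m)) τ (uf_S (uf_W T m)) hτ.le
  have hS : uf_S (uf_W T m) ≤ C0 * (2 * 2^(k+1)) * V := by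
    have : |((uf_W T m).det : ℝ)| ≤ (2 * 2^(k+1)) * V := by
      rw [uf_Wdet T m hm.ne', abs_mul, abs_of_pos (by positivity)]
      calc (2 * (m:ℝ))^(k+1) * |(uf_T T m).det| ≤ (2 * (m:ℝ))^(k+1) * (2 * |T.det|) := by gcongr
        _ = _ := by rw [hVdef, mul_pow]; ring
    calc uf_S (uf_W T m) = C0 * |((uf_W T m).det : ℝ)| := by simp only [uf_S, C0]; ring
      _ ≤ C0 * ((2 * 2^(k+1)) * V) := by gcongr
      _ = _ := by ring
  have hsum := uf_sum (k+1) Q (ue_sz (uf_W T m)) τ (2 * 4^(k+1) * V ^ ((k:ℝ)/(k+2))) (by positivity)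
    (fun N hN => mul_pos hτ (hQ1 N hN)) (by
      intro l hl
      have hl' : (1:ℝ) ≤ l := by exact_mod_cast hl
      have := hR (l * (τ⁻¹ / m)) (by
        rw [e3]
        refine hmR.trans (le_mul_of_one_le_left (by positivity) hl')) (Q.filter (fun N => τ * ue_sz (uf_W T m) N ≤ l)) (by
          intro N hN i
          refine (uf_nu_bd T m hm hd1 hd4 N i).trans ?_
          have := (Finset.mem_filter.1 hN).2
          rw [← mul_div_assoc]
          apply div_le_div_of_nonneg_right _ hm'.le
          rw [← div_eq_mul_inv, le_div_iff₀ hτ]; linarith)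
      refine this.trans (le_of_eq ?_)
      rw [← e2, hVdef, mul_pow, div_pow, inv_pow]
      field_simp)
  have hfin : Real.log 𝓕.card ≤ ((k+1)*2) * (τ * uf_S (uf_W T m) + ∑ N ∈ Q, Real.exp (-(τ * ue_sz (uf_W T m) N))) := by
    set cc := (Q.powerset.filter (fun D => ∑ N ∈ D, ue_sz (uf_W T m) N ≤ uf_S (uf_W T m))).card with hcc
    have hex : 0 ≤ τ * uf_S (uf_W T m) + ∑ N ∈ Q, Real.exp (-(τ * ue_sz (uf_W T m) N)) := by
      have : 0 ≤ uf_S (uf_W T m) := by unfold uf_S; positivity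
      positivity
    rcases Nat.eq_zero_or_pos 𝓕.card with h0 | h0
    · rw [h0]; simp; positivity
    · have h1 : (𝓕.card : ℝ) ≤ (cc:ℝ) ^ ((k+1)*2) := by exact_mod_cast hQ2
      have h2 : (𝓕.card : ℝ) ≤ (Real.exp (τ * uf_S (uf_W T m) + ∑ N ∈ Q, Real.exp (-(τ * ue_sz (uf_W T m) N)))) ^ ((k+1)*2) :=
        h1.trans (by gcongr)
      have h3 := Real.log_le_log (by exact_mod_cast h0) h2
      rw [Real.log_pow, Real.log_exp] at h3
      push_cast at h3
      exact h3
  refine hfin.trans ?_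
  rw [mul_assoc (((k:ℝ)+1)*2)]
  apply mul_le_mul_of_nonneg_left _ (by positivity)
  have h5 : τ * uf_S (uf_W T m) ≤ C0 * (2 * 2^(k+1)) * V ^ ((k:ℝ)/(k+2)) := by
    rw [← e1]
    calc _ ≤ τ * (C0 * (2 * 2^(k+1)) * V) := by gcongr
      _ = _ := by ring
  linarith

open Classical in
theorem ug_res (M H : ℕ) (hM : 0 < M) (hH : H ≤ M) (s : ℝ) :
    ((Finset.range M).filter (fun j : ℕ => ∃ y : ℤ, 0 ≤ (y:ℝ) - (s + j / M) ∧ (y:ℝ) - (s + j / M) < (H:ℝ) / M)).card = H := by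
  have hM' : (0:ℝ) < M := by exact_mod_cast hM
  have hMz : (0:ℤ) < M := by exact_mod_cast hM
  let u : ℤ := ⌊-s * M⌋
  have hu1 : (u:ℝ) ≤ -s * M := Int.floor_le _
  have hu2 : -s * M < u + 1 := Int.lt_floor_add_one _
  have hg : ∀ j : ℕ, (∃ y : ℤ, 0 ≤ (y:ℝ) - (s + j / M) ∧ (y:ℝ) - (s + j / M) < (H:ℝ) / M) ↔ (u - j) % (M:ℤ) < H := by
    intro j
    have e : ∀ y : ℤ, ((y:ℝ) - (s + j / M)) * M = y * M - j + (-s * M) := by intro y; field_simp; ring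
    constructor
    · rintro ⟨y, h1, h2⟩
      have h1' := mul_nonneg h1 hM'.le
      have h2' := (lt_div_iff₀ hM').1 h2
      rw [e] at h1' h2'
      have a1 : (-1:ℝ) < ((y * M - j + u : ℤ) : ℝ) := by push_cast; linarith
      have a2 : ((y * M - j + u : ℤ) : ℝ) < ((H:ℤ):ℝ) := by push_cast; linarith
      have a1' : -1 < y * M - j + u := by exact_mod_cast a1
      have a2' : y * M - j + u < H := by exact_mod_cast a2
      have : (u - j) % (M:ℤ) = (y * M - j + u) % M := by
        rw [show y * (M:ℤ) - j + u = (u - j) + y * M by ring, Int.add_mul_emod_self_right]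
      rw [this]
      have hb : y * M - j + u < M := by
        have : (H:ℤ) ≤ M := by exact_mod_cast hH
        omega
      rw [Int.emod_eq_of_lt (by omega) hb]; exact a2'
    · intro h
      refine ⟨-((u - j) / (M:ℤ)), ?_, ?_⟩
      · have h0 := Int.emod_nonneg (u - j) hMz.ne'
        have h3 := Int.emod_add_mul_ediv (u - j) M
        have : (0:ℝ) ≤ (((u - j) % (M:ℤ) : ℤ) : ℝ) := by exact_mod_cast h0
        have h4 : (((u - j) % (M:ℤ) : ℤ) : ℝ) + M * (((u-j) / (M:ℤ) : ℤ) : ℝ) = u - j := by exact_mod_cast h3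
        by_contra hc
        push Not at hc
        have := mul_neg_of_neg_of_pos hc hM'
        rw [e] at this
        push_cast at this
        linarith
      · rw [lt_div_iff₀ hM', e]
        have h3 := Int.emod_add_mul_ediv (u - j) M
        have : (((u - j) % (M:ℤ) : ℤ) : ℝ) + 1 ≤ H := by exact_mod_cast h
        have h4 : (((u - j) % (M:ℤ) : ℤ) : ℝ) + M * (((u-j) / (M:ℤ) : ℤ) : ℝ) = u - j := by exact_mod_cast h3
        push_cast
        linarith
  simp only [hg]
  conv_rhs => rw [← Finset.card_range H]
  have hinv : ∀ j : ℕ, j < M → (u - ((u - j) % (M:ℤ))) % (M:ℤ) = j := by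
    intro j hj
    have : (u - ((u - j) % (M:ℤ))) ≡ j [ZMOD M] := by
      have h1 : (u - j) % (M:ℤ) ≡ u - j [ZMOD M] := Int.mod_modEq _ _
      have := (Int.ModEq.refl u).sub h1
      simpa using this
    rw [this]
    exact Int.emod_eq_of_lt (by omega) (by omega)
  have hc : ∀ j : ℕ, ((((u - j) % (M:ℤ)).toNat : ℕ) : ℤ) = (u - j) % (M:ℤ) := fun j =>
    Int.toNat_of_nonneg (Int.emod_nonneg _ hMz.ne')
  apply Finset.card_nbij' (fun j : ℕ => ((u - j) % (M:ℤ)).toNat) (fun j : ℕ => ((u - j) % (M:ℤ)).toNat)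
  · intro j hj
    have h1 := (Finset.mem_filter.1 hj).2
    have := hc j
    simp only [Finset.coe_range, Set.mem_Iio]
    omega
  · intro j hj
    have hj' : j < H := by simpa using hj
    refine Finset.mem_coe.2 (Finset.mem_filter.2 ⟨?_, ?_⟩)
    · have := hc j
      have h2 := Int.emod_lt_of_pos (u - j) hMz
      simp only [Finset.mem_range]
      omega
    · rw [hc, hinv j (by omega)]; exact_mod_cast hj'
  · intro j hj
    have h1 := Finset.mem_range.1 (Finset.mem_filter.1 hj).1
    simp only
    rw [hc, hinv j h1]; simp
  · intro j hj
    have hj' : j < H := by simpa using hj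
    simp only
    rw [hc, hinv j (by omega)]; simp

theorem ug_len (S : Finset ℕ) (L : ℝ) (hL : 0 ≤ L) (h : ∀ a ∈ S, ∀ b ∈ S, (a:ℝ) - b ≤ L) : (S.card : ℝ) ≤ L + 1 := by
  rcases S.eq_empty_or_nonempty with rfl | hne
  · simp; linarith
  · have hs : S ⊆ Finset.Icc (S.min' hne) (S.max' hne) := by
      intro a ha
      exact Finset.mem_Icc.2 ⟨S.min'_le a ha, S.le_max' a ha⟩
    have h1 := Finset.card_le_card hs
    rw [Nat.card_Icc] at h1
    have h2 := h _ (S.max'_mem hne) _ (S.min'_mem hne)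
    have h3 : S.min' hne ≤ S.max' hne := S.min'_le _ (S.max'_mem hne)
    have h4 : (S.card : ℝ) ≤ S.max' hne + 1 - S.min' hne := by
      have : S.card + S.min' hne ≤ S.max' hne + 1 := by omega
      have : (S.card : ℝ) + S.min' hne ≤ S.max' hne + 1 := by exact_mod_cast this
      linarith
    linarith

open Classical in
theorem ug_ap (M : ℕ) (σ θ h : ℝ) (hθ : θ ≠ 0) (hh : 0 ≤ h) (hh1 : h ≤ 1) :
    (((Finset.range M).filter (fun j : ℕ => ∃ n : ℤ, |σ + j * θ - n| < h)).card : ℝ) ≤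
      (|θ| * M + 3) * (2 * h / |θ| + 1) := by
  wlog hpos : 0 < θ generalizing σ θ
  · have := this (-σ) (-θ) (neg_ne_zero.2 hθ) (by
      have := lt_of_le_of_ne (not_lt.1 hpos) hθ; linarith)
    rw [abs_neg] at this
    refine le_trans ?_ this
    norm_cast
    apply Finset.card_le_card
    apply Finset.monotone_filter_right
    rintro j - ⟨n, hn⟩
    refine ⟨-n, ?_⟩
    rw [← abs_neg]; convert hn using 2; push_cast; ring
  rw [abs_of_pos hpos]
  let I : Finset ℤ := Finset.Icc ⌈σ - h⌉ ⌊σ + θ * M + h⌋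
  have hsub : (Finset.range M).filter (fun j : ℕ => ∃ n : ℤ, |σ + j * θ - n| < h) ⊆
      I.biUnion fun n => (Finset.range M).filter (fun j : ℕ => |σ + j * θ - n| < h) := by
    intro j hj
    obtain ⟨h1, n, hn⟩ := Finset.mem_filter.1 hj
    refine Finset.mem_biUnion.2 ⟨n, ?_, Finset.mem_filter.2 ⟨h1, hn⟩⟩
    have hn' := abs_lt.1 hn
    have hj0 : (0:ℝ) ≤ j := Nat.cast_nonneg j
    have hjM : (j:ℝ) ≤ M := by exact_mod_cast (Finset.mem_range.1 h1).le
    refine Finset.mem_Icc.2 ⟨Int.ceil_le.2 ?_, Int.le_floor.2 ?_⟩ <;> nlinarith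
  have hI : (I.card : ℝ) ≤ θ * M + 3 := by
    have h1 : (I.card : ℤ) ≤ max (⌊σ + θ * M + h⌋ + 1 - ⌈σ - h⌉) 0 := by
      rw [Int.card_Icc, Int.toNat_eq_max]
    have h2 : ((I.card : ℤ) : ℝ) ≤ ((max (⌊σ + θ * M + h⌋ + 1 - ⌈σ - h⌉) 0 : ℤ) : ℝ) := by exact_mod_cast h1
    push_cast at h2
    refine h2.trans (max_le ?_ (by positivity))
    have h3 := Int.floor_le (σ + θ * M + h)
    have h4 := Int.le_ceil (σ - h)
    linarith
  have hc : ∀ n ∈ I, ((((Finset.range M).filter (fun j : ℕ => |σ + j * θ - n| < h)).card : ℕ) : ℝ) ≤ 2 * h / θ + 1 := by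
    intro n _
    apply ug_len _ _ (by positivity)
    intro a ha b hb
    have h1 := abs_lt.1 (Finset.mem_filter.1 ha).2
    have h2 := abs_lt.1 (Finset.mem_filter.1 hb).2
    rw [le_div_iff₀ hpos]
    nlinarith
  have h1 := (Finset.card_le_card hsub).trans Finset.card_biUnion_le
  have h2 : (((Finset.range M).filter (fun j : ℕ => ∃ n : ℤ, |σ + j * θ - n| < h)).card : ℝ) ≤
      ∑ n ∈ I, (((Finset.range M).filter (fun j : ℕ => |σ + j * θ - n| < h)).card : ℝ) := by exact_mod_cast h1
  refine h2.trans ((Finset.sum_le_card_nsmul _ _ _ hc).trans ?_)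
  rw [nsmul_eq_mul]
  gcongr

def ug_B (k M : ℕ) : Finset (Fin k → ℕ) := Fintype.piFinset (fun _ : Fin k => Finset.range M)

theorem ug_Bcard (k M : ℕ) : (ug_B k M).card = M^k := by
  rw [ug_B, Fintype.card_piFinset]; simp

open Classical in
theorem ug_bcount {k : ℕ} (M J : ℕ) (hM : 0 < M) (hJ : 0 < J) (z : Fin k → ℤ) (i : Fin k) (hi : z i ≠ 0)
    (σ h : ℝ) (hh : 0 ≤ h) (hh1 : h ≤ 1) :
    (((ug_B k M).filter (fun β => ∃ n : ℤ, |σ + ∑ l, (β l:ℝ) * ((z l:ℝ) / (J * M)) - n| < h)).card : ℝ) * M ≤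
      (M:ℝ)^k * ((|(z i:ℝ) / (J * M)| * M + 3) * (2 * h / |(z i:ℝ) / (J * M)| + 1)) := by
  have hM' : (0:ℝ) < M := by exact_mod_cast hM
  have hJ' : (0:ℝ) < J := by exact_mod_cast hJ
  let t : Finset ({l // l ≠ i} → ℕ) := Fintype.piFinset (fun _ => Finset.range M)
  have ht : t.card * M = M^k := by
    have : t.card = M^(k-1) := by
      rw [Fintype.card_piFinset]; simp
    rw [this, ← pow_succ]
    congr 1
    have := i.pos
    omega
  let f : (Fin k → ℕ) → ({l // l ≠ i} → ℕ) := fun β l => β l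
  set s := (ug_B k M).filter (fun β => ∃ n : ℤ, |σ + ∑ l, (β l:ℝ) * ((z l:ℝ) / (J * M)) - n| < h) with hs
  have hmaps : Set.MapsTo f s t := by
    intro β hβ
    have := Fintype.mem_piFinset.1 (Finset.mem_filter.1 hβ).1
    exact Fintype.mem_piFinset.2 fun l => this l
  have h1 := Finset.card_eq_sum_card_fiberwise hmaps
  set q := ((|(z i:ℝ) / (J * M)| * M + 3) * (2 * h / |(z i:ℝ) / (J * M)| + 1)) with hq
  have h2 : ∀ γ ∈ t, (((s.filter (fun β => f β = γ)).card : ℕ) : ℝ) ≤ q := by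
    intro γ _
    have hap := ug_ap M (σ + ∑ l : {l // l ≠ i}, (γ l:ℝ) * ((z l:ℝ) / (J * M))) ((z i:ℝ) / (J * M)) h
      (div_ne_zero (by exact_mod_cast hi) (by positivity)) hh hh1
    refine le_trans (Nat.cast_le.2 ?_) hap
    apply Finset.card_le_card_of_injOn (fun β => β i)
    · intro β hβ
      obtain ⟨hβ1, hβ2⟩ := Finset.mem_filter.1 hβ
      obtain ⟨hβ3, n, hn⟩ := Finset.mem_filter.1 hβ1
      refine Finset.mem_coe.2 (Finset.mem_filter.2 ⟨Fintype.mem_piFinset.1 hβ3 i, n, ?_⟩)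
      rw [Fintype.sum_eq_add_sum_subtype_ne _ i] at hn
      have : ∀ l : {l // l ≠ i}, (γ l:ℝ) = β l := by
        intro l; rw [← hβ2]
      simp only [this]
      convert hn using 2
      ring
    · intro β hβ β' hβ' he
      have e1 := (Finset.mem_filter.1 hβ).2
      have e2 := (Finset.mem_filter.1 hβ').2
      ext l
      by_cases hl : l = i
      · rw [hl]; exact he
      · exact congrFun (e1.trans e2.symm) ⟨l, hl⟩
  have h3 : (s.card : ℝ) ≤ t.card * q := by
    rw [h1]; push_cast
    refine (Finset.sum_le_card_nsmul _ _ _ h2).trans ?_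
    rw [nsmul_eq_mul]
  have h4 : (t.card : ℝ) * M = (M:ℝ)^k := by exact_mod_cast ht
  calc (s.card : ℝ) * M ≤ t.card * q * M := by gcongr
    _ = _ := by rw [← h4]; ring

open Classical in
theorem ug_bcount2 {k : ℕ} (M J H : ℕ) (hM : 0 < M) (hJ : 0 < J) (hH : 0 < H) (hHM : H ≤ M) (z : Fin k → ℤ) (hz : z ≠ 0)
    (hzH : ∀ i, |(z i:ℝ)| + 3 ≤ H) (σ : ℝ) :
    (((ug_B k M).filter (fun β => ∃ n : ℤ, |σ + ∑ l, (β l:ℝ) * ((z l:ℝ) / (J * M)) - n| < (H:ℝ) / M)).card : ℝ) * M ≤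
      (M:ℝ)^k * (9 * H * (if ∃ i, (J:ℝ) ≤ |(z i:ℝ)| then (1:ℝ) else J)) := by
  have hM' : (0:ℝ) < M := by exact_mod_cast hM
  have hJ' : (0:ℝ) < J := by exact_mod_cast hJ
  have hJ1 : (1:ℝ) ≤ J := by exact_mod_cast hJ
  have hH' : (0:ℝ) < H := by exact_mod_cast hH
  have hHM' : (H:ℝ) ≤ M := by exact_mod_cast hHM
  have key : ∀ i, z i ≠ 0 → (|(z i:ℝ) / (J * M)| * M + 3) * (2 * ((H:ℝ)/M) / |(z i:ℝ) / (J * M)| + 1)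
      = 2 * H + |(z i:ℝ)| / J + 6 * H * J / |(z i:ℝ)| + 3 := by
    intro i hi
    have : 0 < |(z i:ℝ)| := abs_pos.2 (by exact_mod_cast hi)
    rw [abs_div, abs_of_pos (show (0:ℝ) < J * M by positivity)]
    field_simp
    ring
  split_ifs with hc
  · obtain ⟨i, hi⟩ := hc
    have hp : 0 < |(z i:ℝ)| := hJ'.trans_le hi
    have hi0 : z i ≠ 0 := by intro h; rw [h] at hp; simp at hp
    refine (ug_bcount M J hM hJ z i hi0 σ (H/M) (by positivity) (div_le_one_of_le₀ hHM' hM'.le)).trans ?_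
    rw [key i hi0]
    apply mul_le_mul_of_nonneg_left _ (by positivity)
    have a1 : |(z i:ℝ)| / J ≤ |(z i:ℝ)| := div_le_self hp.le hJ1
    have a2 : 6 * H * J / |(z i:ℝ)| ≤ 6 * H := by
      rw [div_le_iff₀ hp]; nlinarith
    have := hzH i
    linarith
  · obtain ⟨i, hi0⟩ := Function.ne_iff.1 hz
    have hi0 : z i ≠ 0 := hi0
    have h1 : (1:ℝ) ≤ |(z i:ℝ)| := by
      rw [← Int.cast_abs]; exact_mod_cast Int.one_le_abs hi0
    refine (ug_bcount M J hM hJ z i hi0 σ (H/M) (by positivity) (div_le_one_of_le₀ hHM' hM'.le)).trans ?_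
    rw [key i hi0]
    apply mul_le_mul_of_nonneg_left _ (by positivity)
    have a1 : |(z i:ℝ)| / J ≤ |(z i:ℝ)| := div_le_self (by linarith) hJ1
    have a2 : 6 * H * J / |(z i:ℝ)| ≤ 6 * H * J := div_le_self (by positivity) h1
    have := hzH i
    have a3 : (H:ℝ) ≤ H * J := le_mul_of_one_le_right hH'.le hJ1
    nlinarith

def ug_good {k : ℕ} (F0 : (Fin k → ℤ) → ℝ) (J M H : ℕ) (w : (Fin k → ℕ) × ℕ) (x : Fin k → ℤ) : Prop :=
  ∃ y : ℤ, 0 ≤ (y:ℝ) - ((F0 x + ∑ l, (w.1 l:ℝ) * ((x l:ℝ) / (J * M))) + w.2 / M) ∧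
    (y:ℝ) - ((F0 x + ∑ l, (w.1 l:ℝ) * ((x l:ℝ) / (J * M))) + w.2 / M) < (H:ℝ) / M

open Classical in
theorem ug_core {k : ℕ} (M J H : ℕ) (hM : 0 < M) (hJ : 0 < J) (hH : 0 < H) (hHM : H ≤ M)
    (F0 : (Fin k → ℤ) → ℝ) (X Z : Finset (Fin k → ℤ)) (hZ0 : ∀ z ∈ Z, z ≠ 0)
    (hZH : ∀ z ∈ Z, ∀ i, |(z i:ℝ)| + 3 ≤ H)
    (hcond : 18 * (H:ℝ) * (∑ z ∈ Z, if ∃ i, (J:ℝ) ≤ |(z i:ℝ)| then (1:ℝ) else J) ≤ M) :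
    ∃ w ∈ (ug_B k M) ×ˢ (Finset.range M), ∃ S ⊆ X, (X.card : ℝ) * (H / M) / 2 ≤ S.card ∧
      (∀ x ∈ S, ug_good F0 J M H w x) ∧ ∀ x ∈ S, ∀ x' ∈ S, x' - x ∉ Z := by
  have hM' : (0:ℝ) < M := by exact_mod_cast hM
  have hH' : (0:ℝ) < H := by exact_mod_cast hH
  let Ω := (ug_B k M) ×ˢ (Finset.range M)
  have hΩ : (Ω.card : ℝ) = (M:ℝ)^k * M := by
    simp only [Ω, Finset.card_product, ug_Bcard, Finset.card_range]; push_cast; ring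
  let G : (Fin k → ℕ) × ℕ → Finset (Fin k → ℤ) := fun w => X.filter (ug_good F0 J M H w)
  let P : (Fin k → ℕ) × ℕ → Finset ((Fin k → ℤ) × (Fin k → ℤ)) := fun w =>
    (X ×ˢ Z).filter (fun p => ug_good F0 J M H w p.1 ∧ ug_good F0 J M H w (p.1 + p.2))
  have hcnt : ∀ x, ∀ β, (∑ j ∈ Finset.range M, if ug_good F0 J M H (β, j) x then (1:ℝ) else 0) = H := by
    intro x β
    rw [← Finset.natCast_card_filter]
    exact congrArg Nat.cast (ug_res M H hM hHM (F0 x + ∑ l, (β l:ℝ) * ((x l:ℝ) / (J * M))))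
  have hG : ∑ w ∈ Ω, ((G w).card : ℝ) = X.card * ((M:ℝ)^k * H) := by
    simp only [G, Finset.natCast_card_filter]
    rw [Finset.sum_comm]
    have : ∀ x ∈ X, (∑ w ∈ Ω, if ug_good F0 J M H w x then (1:ℝ) else 0) = (M:ℝ)^k * H := by
      intro x _
      rw [Finset.sum_product, Finset.sum_congr rfl (fun β _ => hcnt x β), Finset.sum_const, ug_Bcard, nsmul_eq_mul]
      push_cast; ring
    rw [Finset.sum_congr rfl this, Finset.sum_const, nsmul_eq_mul]
  let Zsum : ℝ := ∑ z ∈ Z, if ∃ i, (J:ℝ) ≤ |(z i:ℝ)| then (1:ℝ) else J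
  have hP : ∑ w ∈ Ω, ((P w).card : ℝ) ≤ X.card * ((M:ℝ)^k * (9 * H) / M * Zsum * H) := by
    simp only [P, Finset.natCast_card_filter]
    rw [Finset.sum_comm, Finset.sum_product]
    have : ∀ x ∈ X, ∑ z ∈ Z, (∑ w ∈ Ω, if ug_good F0 J M H w x ∧ ug_good F0 J M H w (x + z) then (1:ℝ) else 0)
        ≤ (M:ℝ)^k * (9 * H) / M * Zsum * H := by
      intro x _
      have h1 : ∀ z ∈ Z, (∑ w ∈ Ω, if ug_good F0 J M H w x ∧ ug_good F0 J M H w (x + z) then (1:ℝ) else 0) ≤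
          (M:ℝ)^k * (9 * H) / M * (if ∃ i, (J:ℝ) ≤ |(z i:ℝ)| then (1:ℝ) else J) * H := by
        intro z hz
        have hb := ug_bcount2 M J H hM hJ hH hHM z (hZ0 z hz) (hZH z hz) (F0 (x + z) - F0 x)
        set bs := (ug_B k M).filter (fun β => ∃ n : ℤ, |(F0 (x + z) - F0 x) + ∑ l, (β l:ℝ) * ((z l:ℝ) / (J * M)) - n| < (H:ℝ) / M) with hbs
        have h2 : ∀ β ∈ ug_B k M, (∑ j ∈ Finset.range M, if ug_good F0 J M H (β, j) x ∧ ug_good F0 J M H (β, j) (x + z) then (1:ℝ) else 0)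
            ≤ if ∃ n : ℤ, |(F0 (x + z) - F0 x) + ∑ l, (β l:ℝ) * ((z l:ℝ) / (J * M)) - n| < (H:ℝ) / M then (H:ℝ) else 0 := by
          intro β _
          split_ifs with hc
          · rw [← hcnt x β]
            apply Finset.sum_le_sum
            intro j _
            by_cases h3 : ug_good F0 J M H (β, j) x
            · by_cases h4 : ug_good F0 J M H (β, j) (x + z) <;> simp [h3, h4]
            · simp [h3]
          · apply le_of_eq
            apply Finset.sum_eq_zero
            intro j _
            rw [if_neg]
            rintro ⟨⟨y, hy1, hy2⟩, ⟨y', hy3, hy4⟩⟩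
            apply hc
            refine ⟨y' - y, ?_⟩
            have e : ∑ l, (β l:ℝ) * (((x + z) l : ℤ) / (J * M)) = ∑ l, (β l:ℝ) * ((x l:ℝ) / (J * M)) + ∑ l, (β l:ℝ) * ((z l:ℝ) / (J * M)) := by
              rw [← Finset.sum_add_distrib]
              apply Finset.sum_congr rfl
              intro l _
              simp only [Pi.add_apply]; push_cast; ring
            simp only [e] at hy3 hy4
            simp only at hy1 hy2
            rw [abs_lt]; push_cast
            constructor <;> linarith
        rw [Finset.sum_product]
        refine (Finset.sum_le_sum h2).trans ?_
        rw [← Finset.sum_filter, Finset.sum_const, nsmul_eq_mul]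
        apply mul_le_mul_of_nonneg_right _ hH'.le
        have h5 : (bs.card : ℝ) ≤ (M:ℝ)^k * (9 * H * (if ∃ i, (J:ℝ) ≤ |(z i:ℝ)| then (1:ℝ) else J)) / M :=
          (le_div_iff₀ hM').2 hb
        refine h5.trans (le_of_eq ?_)
        ring
      refine (Finset.sum_le_sum h1).trans (le_of_eq ?_)
      rw [← Finset.sum_mul, ← Finset.mul_sum]
    refine (Finset.sum_le_sum this).trans (le_of_eq ?_)
    rw [Finset.sum_const, nsmul_eq_mul]
  have hX0 : (0:ℝ) ≤ X.card := Nat.cast_nonneg _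
  have htot : ∑ w ∈ Ω, ((X.card : ℝ) * (H / M) / 2) ≤ ∑ w ∈ Ω, (((G w).card : ℝ) - (P w).card) := by
    rw [Finset.sum_sub_distrib, hG, Finset.sum_const, nsmul_eq_mul, hΩ]
    have h6 : (M:ℝ)^k * (9 * H) / M * Zsum * H ≤ (M:ℝ)^k * H / 2 := by
      have : 9 * (H:ℝ) * Zsum / M ≤ 1/2 := by
        rw [div_le_iff₀ hM']
        have : 18 * (H:ℝ) * Zsum ≤ M := hcond
        linarith
      calc (M:ℝ)^k * (9 * H) / M * Zsum * H = (M:ℝ)^k * H * (9 * (H:ℝ) * Zsum / M) := by ring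
        _ ≤ (M:ℝ)^k * H * (1/2) := by gcongr
        _ = _ := by ring
    have h7 := mul_le_mul_of_nonneg_left h6 hX0
    have h8 : (M:ℝ)^k * M * ((X.card : ℝ) * (H / M) / 2) = X.card * ((M:ℝ)^k * H / 2) := by field_simp
    rw [h8]
    have h9 : (X.card:ℝ) * ((M:ℝ)^k * H) = X.card * ((M:ℝ)^k * H / 2) + X.card * ((M:ℝ)^k * H / 2) := by ring
    linarith
  have hne : Ω.Nonempty := by
    rw [← Finset.card_pos]
    have : (0:ℝ) < Ω.card := by rw [hΩ]; positivity
    exact_mod_cast this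
  obtain ⟨w, hw, hle⟩ := Finset.exists_le_of_sum_le hne htot
  refine ⟨w, hw, (G w).filter (fun x => ∀ x' ∈ G w, x' - x ∉ Z), ?_, ?_, ?_, ?_⟩
  · exact (Finset.filter_subset _ _).trans (Finset.filter_subset _ _)
  · refine hle.trans ?_
    have h1 := Finset.card_filter_add_card_filter_not (s := G w) (fun x => ∀ x' ∈ G w, x' - x ∉ Z)
    have h2 : ((G w).filter (fun x => ¬ ∀ x' ∈ G w, x' - x ∉ Z)).card ≤ (P w).card := by
      refine (Finset.card_le_card (t := (P w).image Prod.fst) ?_).trans Finset.card_image_le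
      intro x hx
      obtain ⟨hx1, hx2⟩ := Finset.mem_filter.1 hx
      push Not at hx2
      obtain ⟨x', hx', hxz⟩ := hx2
      refine Finset.mem_image.2 ⟨(x, x' - x), Finset.mem_filter.2 ⟨Finset.mem_product.2 ⟨(Finset.mem_filter.1 hx1).1, hxz⟩, 
        (Finset.mem_filter.1 hx1).2, ?_⟩, rfl⟩
      simp only [add_sub_cancel]
      exact (Finset.mem_filter.1 hx').2
    have h3 : (((G w).filter (fun x => ∀ x' ∈ G w, x' - x ∉ Z)).card : ℝ) + ((G w).filter (fun x => ¬ ∀ x' ∈ G w, x' - x ∉ Z)).card = (G w).card := by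
      exact_mod_cast h1
    have h4 : (((G w).filter (fun x => ¬ ∀ x' ∈ G w, x' - x ∉ Z)).card : ℝ) ≤ (P w).card := by exact_mod_cast h2
    linarith
  · intro x hx
    exact (Finset.mem_filter.1 (Finset.mem_filter.1 hx).1).2
  · intro x hx x' hx'
    exact (Finset.mem_filter.1 hx).2 x' (Finset.mem_filter.1 hx').1

theorem ug_piv {k : ℕ} (K : Set (Fin (k+1) → ℝ)) (x0 : Fin (k+1) → ℝ) (T : Matrix (Fin (k+1)) (Fin (k+1)) ℝ)
    (hT : T.det ≠ 0) (ρ : ℝ) (hρ : ρ = 1 / (2 * (k+1)))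
    (hK : ∀ b : Fin (k+1) → ℝ, (∀ i, 0 ≤ b i) → ∑ i, b i ≤ 1 → x0 + T.mulVec b ∈ K) :
    ∃ (α : ℝ) (lam : Fin k → ℝ) (μ : Matrix (Fin k) (Fin k) ℝ) (yc : ℝ) (xc : Fin k → ℝ),
      0 < α ∧ μ.det ≠ 0 ∧ α * |μ.det| * |T.det| = 1 ∧
      ∀ v : Fin (k+1) → ℝ, α * |v 0 + ∑ j, lam j * v j.succ - yc| ≤ ρ / 2 →
        (∀ i, |∑ j, μ i j * (v j.succ - xc j)| ≤ ρ / 2) → v ∈ K := by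
  have hu := isUnit_iff_ne_zero.2 hT
  have hρ0 : 0 < ρ := by rw [hρ]; positivity
  let U := T⁻¹
  have hUdet : U.det = (T.det)⁻¹ := by simp only [U]; rw [Matrix.det_nonsing_inv, Ring.inverse_eq_inv']
  have hUdet0 : U.det ≠ 0 := by rw [hUdet]; exact inv_ne_zero hT
  obtain ⟨κ, -, hκ⟩ := Finset.exists_max_image Finset.univ (fun i => |U i 0|) Finset.univ_nonempty
  have ha : U κ 0 ≠ 0 := by
    intro h
    apply hUdet0
    apply Matrix.det_eq_zero_of_column_eq_zero 0
    intro i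
    have := hκ i (Finset.mem_univ i)
    rw [h, abs_zero] at this
    exact abs_eq_zero.1 (le_antisymm this (abs_nonneg _))
  have hα : 0 < |U κ 0| := abs_pos.2 ha
  let c : Fin (k+1) → ℝ := fun i => if i = κ then 0 else - U i 0 / U κ 0
  have hc1 : ∀ i, |c i| ≤ 1 := by
    intro i
    simp only [c]
    split_ifs
    · simp
    · rw [abs_div, abs_neg, div_le_one hα]; exact hκ i (Finset.mem_univ i)
  let A : Matrix (Fin (k+1)) (Fin (k+1)) ℝ := Matrix.of fun i j => U i j + c i * U κ j
  have hA : A.det = U.det := Matrix.det_eq_of_forall_row_eq_smul_add_const c κ (by simp [c]) (fun i j => rfl)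
  let μ : Matrix (Fin k) (Fin k) ℝ := A.submatrix κ.succAbove Fin.succ
  have hAd : A.det = (-1) ^ (κ:ℕ) * U κ 0 * μ.det := by
    rw [Matrix.det_succ_column_zero, Finset.sum_eq_single κ]
    · simp [A, c, μ]
    · intro i _ hi
      have : A i 0 = 0 := by simp only [A, Matrix.of_apply, c, if_neg hi]; field_simp; ring
      rw [this]; ring
    · simp
  let vc : Fin (k+1) → ℝ := x0 + T.mulVec (fun _ => ρ)
  have hdets : |U κ 0| * |μ.det| * |T.det| = 1 := by
    have : |A.det| = |U κ 0| * |μ.det| := by rw [hAd]; simp [abs_mul]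
    rw [← this, hA, hUdet, ← abs_mul, inv_mul_cancel₀ hT, abs_one]
  refine ⟨|U κ 0|, fun j => U κ j.succ / U κ 0, μ, vc 0 + ∑ j : Fin k, U κ j.succ / U κ 0 * vc j.succ, fun j => vc j.succ, hα, ?_, hdets, ?_⟩
  · intro h
    rw [h] at hdets; simp at hdets
  · intro v h1 h2
    have hv : v = x0 + T.mulVec (U.mulVec (v - x0)) := by
      rw [Matrix.mulVec_mulVec, Matrix.mul_nonsing_inv _ hu, Matrix.one_mulVec]; ext i; simp
    have hb : ∀ i, U.mulVec (v - x0) i = U.mulVec (v - vc) i + ρ := by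
      intro i
      have : v - x0 = (v - vc) + T.mulVec (fun _ => ρ) := by ext i; simp [vc]; ring
      rw [this, Matrix.mulVec_add, Matrix.mulVec_mulVec, Matrix.nonsing_inv_mul _ hu, Matrix.one_mulVec]
      rfl
    have hexp : ∀ i, U.mulVec (v - vc) i = U i 0 * (v 0 - vc 0) + ∑ j : Fin k, U i j.succ * (v j.succ - vc j.succ) := by
      intro i
      rw [Matrix.mulVec, dotProduct, Fin.sum_univ_succ]; rfl
    have hk1 : |U.mulVec (v - vc) κ| ≤ ρ / 2 := by
      refine le_trans (le_of_eq ?_) h1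
      rw [hexp, ← abs_mul]
      congr 1
      have : ∀ w : Fin (k+1) → ℝ, ∑ j : Fin k, U κ 0 * (U κ j.succ / U κ 0 * w j.succ) = ∑ j : Fin k, U κ j.succ * w j.succ := by
        intro w
        apply Finset.sum_congr rfl; intro j _; field_simp
      have h1' := this v
      have h2' := this vc
      rw [← Finset.mul_sum] at h1' h2'
      simp only [mul_sub, Finset.sum_sub_distrib]
      linear_combination (-1) * h1' + h2'
    have hall : ∀ i, |U.mulVec (v - vc) i| ≤ ρ := by
      intro i
      rcases eq_or_ne i κ with rfl | hi
      · linarith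
      · obtain ⟨i', rfl⟩ := Fin.exists_succAbove_eq hi
        have e : U.mulVec (v - vc) (κ.succAbove i') = ∑ j, μ i' j * (v j.succ - vc j.succ) - c (κ.succAbove i') * U.mulVec (v - vc) κ := by
          rw [hexp, hexp]
          simp only [μ, A, Matrix.submatrix_apply, Matrix.of_apply, add_mul, Finset.sum_add_distrib, mul_add, Finset.mul_sum, mul_assoc]
          have : c (κ.succAbove i') * U κ 0 = - U (κ.succAbove i') 0 := by
            simp only [c, if_neg hi]; field_simp
          linear_combination (v 0 - vc 0) * this
        rw [e]
        refine (abs_sub _ _).trans ?_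
        rw [abs_mul]
        have := mul_le_mul (hc1 (κ.succAbove i')) hk1 (abs_nonneg _) zero_le_one
        have := h2 i'
        linarith
    rw [hv]
    apply hK
    · intro i; rw [hb]; have := (abs_le.1 (hall i)).1; linarith
    · calc ∑ i, U.mulVec (v - x0) i ≤ ∑ i : Fin (k+1), (2 * ρ) := by
            apply Finset.sum_le_sum; intro i _; rw [hb]; have := (abs_le.1 (hall i)).2; linarith
        _ = 1 := by rw [hρ]; simp; field_simp

theorem ug_sq {k : ℕ} (μ : Matrix (Fin k) (Fin k) ℝ) (u w : Fin k → ℝ) :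
    ∑ i, (∑ j, μ i j * w j)^2 = ∑ i, (∑ j, μ i j * u j)^2 + ∑ j, (2 * ∑ i, (∑ l, μ i l * u l) * μ i j) * (w j - u j)
      + ∑ i, (∑ j, μ i j * (w j - u j))^2 := by
  have h2 : ∑ j, (2 * ∑ i, (∑ l, μ i l * u l) * μ i j) * (w j - u j) = ∑ i, 2 * (∑ l, μ i l * u l) * (∑ j, μ i j * (w j - u j)) := by
    simp only [Finset.mul_sum, Finset.sum_mul]
    rw [Finset.sum_comm]
    apply Finset.sum_congr rfl; intro i _
    apply Finset.sum_congr rfl; intro j _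
    apply Finset.sum_congr rfl; intro l _
    ring
  rw [h2, ← Finset.sum_add_distrib, ← Finset.sum_add_distrib]
  apply Finset.sum_congr rfl; intro i _
  have : ∑ j, μ i j * (w j - u j) = ∑ j, μ i j * w j - ∑ j, μ i j * u j := by
    simp only [mul_sub, Finset.sum_sub_distrib]
  rw [this]; ring

open Classical in
theorem ug_conf {k : ℕ} (M J H m : ℕ) (hM : 0 < M) (hJ : 0 < J) (hH : 0 < H) (hHM : H ≤ M) (hm : 0 < m)
    (K : Set (Fin (k+1) → ℝ)) (α : ℝ) (hα : 0 < α) (lam : Fin k → ℝ) (μ : Matrix (Fin k) (Fin k) ℝ) (yc : ℝ) (xc : Fin k → ℝ)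
    (ρ A DK : ℝ) (hρ : 0 < ρ) (hA : 0 < A) (hDK : 0 ≤ DK) (hAρ : α * A * k * ρ ≤ 1)
    (hK : ∀ v : Fin (k+1) → ℝ, α * |v 0 + ∑ j, lam j * v j.succ - yc| ≤ ρ / 2 →
        (∀ i, |∑ j, μ i j * (v j.succ - xc j)| ≤ ρ / 2) → v ∈ K)
    (X Z : Finset (Fin k → ℤ))
    (hX : ∀ x ∈ X, ∀ i, |∑ j, μ i j * ((x j:ℝ)/m - xc j)| ≤ ρ / 2)
    (hXD : ∀ x ∈ X, ∀ j, |(x j:ℝ)/m - xc j| ≤ DK)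
    (hJD : α * k * DK / J ≤ ρ / 8) (hmρ : 3 * α ≤ m * ρ / 8)
    (hZ0 : ∀ z∈Z, z≠0) (hZH : ∀ z∈Z, ∀ i, |(z i:ℝ)|+3 ≤ H)
    (hZc : ∀ z : Fin k → ℤ, z ∉ Z → z ≠ 0 → (H:ℝ)/M ≤ A / m * ∑ i, (∑ j, μ i j * (z j:ℝ))^2)
    (hcond : 18*(H:ℝ)*(∑ z∈Z, if ∃ i, (J:ℝ) ≤ |(z i:ℝ)| then (1:ℝ) else J) ≤ M) :
    ∃ G : Finset (Fin (k+1) → ℝ), (∀ p ∈ G, p ∈ K) ∧ (∀ p ∈ G, ∀ i, ∃ z : ℤ, p i = (z:ℝ)/m) ∧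
      (∀ p ∈ G, ∃ a : Fin (k+1) → ℝ, ∀ q ∈ G, q ≠ p → ∑ i, a i * p i < ∑ i, a i * q i) ∧
      (X.card:ℝ)*(H/M)/2 ≤ G.card := by
  have hMr : (0:ℝ) < M := by exact_mod_cast hM
  have hJr : (0:ℝ) < J := by exact_mod_cast hJ
  have hmr : (0:ℝ) < m := by exact_mod_cast hm
  let F0 : (Fin k → ℤ) → ℝ := fun x => - ∑ j, lam j * (x j:ℝ) + m * yc + A / m * ∑ i, (∑ j, μ i j * ((x j:ℝ) - m * xc j))^2
  obtain ⟨w, hw, S, hSX, hSc, hSg, hSZ⟩ := ug_core M J H hM hJ hH hHM F0 X Z hZ0 hZH hcond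
  let b : Fin k → ℝ := fun l => (w.1 l:ℝ)/(J*M)
  have hb0 : ∀ l, 0 ≤ b l := fun l => by simp only [b]; positivity
  have hb1 : ∀ l, b l ≤ 1 / J := fun l => by
    have h := Finset.mem_range.1 (Fintype.mem_piFinset.1 (Finset.mem_product.1 hw).1 l)
    have h' : (w.1 l:ℝ) ≤ M := by exact_mod_cast h.le
    simp only [b]
    rw [div_le_div_iff₀ (by positivity) hJr]
    nlinarith
  let c : ℝ := (w.2:ℝ)/M
  have hc0 : 0 ≤ c := by simp only [c]; positivity
  have hc1 : c ≤ 1 := by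
    have h := Finset.mem_range.1 (Finset.mem_product.1 hw).2
    have h' : (w.2:ℝ) ≤ M := by exact_mod_cast h.le
    simp only [c]; rw [div_le_one hMr]; exact h'
  have hh1 : (H:ℝ)/M ≤ 1 := by rw [div_le_one hMr]; exact_mod_cast hHM
  have hSg' : ∀ x : S, ∃ y : ℤ, 0 ≤ (y:ℝ) - (F0 x.1 + ∑ l, b l * (x.1 l:ℝ) + c) ∧ (y:ℝ) - (F0 x.1 + ∑ l, b l * (x.1 l:ℝ) + c) < (H:ℝ)/M := by
    intro x
    obtain ⟨y, h1, h2⟩ := hSg x.1 x.2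
    have e : ∑ l, b l * (x.1 l:ℝ) = ∑ l, (w.1 l:ℝ)*((x.1 l:ℝ)/(J*M)) := by
      apply Finset.sum_congr rfl; intro l _; simp only [b]; ring
    refine ⟨y, ?_, ?_⟩
    · rw [e]; exact h1
    · rw [e]; exact h2
  choose y hy0 hy1 using hSg'
  let n0 : ℤ := ⌊∑ l, b l * (m * xc l)⌋
  let f : S → (Fin (k+1) → ℝ) := fun x => Fin.cons (((y x - n0 : ℤ):ℝ)/m) (fun j => (x.1 j:ℝ)/m)
  have hf0 : ∀ x, f x 0 = ((y x - n0 : ℤ):ℝ)/m := fun x => rfl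
  have hfs : ∀ x j, f x (Fin.succ j) = (x.1 j:ℝ)/m := fun x j => rfl
  have hfinj : Function.Injective f := by
    intro x x' h
    apply Subtype.ext
    funext j
    have := congrFun h j.succ
    rw [hfs, hfs, div_left_inj' hmr.ne'] at this
    exact_mod_cast this
  have hμm : ∀ (x : Fin k → ℤ) i, ∑ j, μ i j * ((x j:ℝ) - m * xc j) = m * ∑ j, μ i j * ((x j:ℝ)/m - xc j) := by
    intro x i
    rw [Finset.mul_sum]
    apply Finset.sum_congr rfl; intro j _; field_simp
  refine ⟨Finset.univ.image f, ?_, ?_, ?_, ?_⟩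
  · intro p hp
    obtain ⟨x, -, rfl⟩ := Finset.mem_image.1 hp
    have hxX := hSX x.2
    apply hK
    · rw [hf0]
      simp only [hfs]
      have e : ((y x - n0 : ℤ):ℝ)/m + ∑ j, lam j * ((x.1 j:ℝ)/m) - yc =
        (A / m * ∑ i, (∑ j, μ i j * ((x.1 j:ℝ) - m * xc j))^2 + ∑ l, b l * ((x.1 l:ℝ) - m * xc l)
          + (∑ l, b l * (m * xc l) - n0) + c + (y x - (F0 x.1 + ∑ l, b l * (x.1 l:ℝ) + c))) / m := by
        have e1 : ∑ j, lam j * ((x.1 j:ℝ)/m) = (∑ j, lam j * (x.1 j:ℝ))/m := by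
          rw [Finset.sum_div]; apply Finset.sum_congr rfl; intro j _; ring
        have e2 : ∑ l, b l * ((x.1 l:ℝ) - m * xc l) = ∑ l, b l * (x.1 l:ℝ) - ∑ l, b l * (m * xc l) := by
          rw [← Finset.sum_sub_distrib]; apply Finset.sum_congr rfl; intro j _; ring
        rw [e1, e2]
        simp only [F0]
        push_cast
        rw [eq_div_iff hmr.ne']
        field_simp
        ring
      rw [e, abs_div, abs_of_pos hmr]
      have t1 : |A / m * ∑ i, (∑ j, μ i j * ((x.1 j:ℝ) - m * xc j))^2| ≤ A * k * ρ^2 / 4 * m := by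
        rw [abs_of_nonneg (by positivity)]
        have : ∑ i, (∑ j, μ i j * ((x.1 j:ℝ) - m * xc j))^2 ≤ ∑ i : Fin k, (m * (ρ/2))^2 := by
          apply Finset.sum_le_sum; intro i _
          rw [hμm, ← sq_abs, abs_mul, abs_of_pos hmr]
          have := hX x.1 hxX i
          gcongr
        calc _ ≤ A / m * ∑ i : Fin k, (m * (ρ/2))^2 := by gcongr
          _ = A * k * ρ^2 / 4 * m := by simp; field_simp; ring
      have t2 : |∑ l, b l * ((x.1 l:ℝ) - m * xc l)| ≤ k * DK / J * m := by
        refine (Finset.abs_sum_le_sum_abs _ _).trans ?_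
        calc _ ≤ ∑ l : Fin k, (1/(J:ℝ)) * (m * DK) := by
              apply Finset.sum_le_sum; intro l _
              rw [abs_mul, abs_of_nonneg (hb0 l)]
              have e3 : (x.1 l:ℝ) - m * xc l = m * ((x.1 l:ℝ)/m - xc l) := by field_simp
              rw [e3, abs_mul, abs_of_pos hmr]
              have := hXD x.1 hxX l
              have := hb1 l
              gcongr
          _ = _ := by simp; field_simp
      have t3 : |∑ l, b l * (m * xc l) - n0| ≤ 1 := by
        rw [abs_of_nonneg (sub_nonneg.2 (Int.floor_le _))]
        have := Int.lt_floor_add_one (∑ l, b l * (m * xc l))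
        linarith
      have t4 : |c| ≤ 1 := by rw [abs_of_nonneg hc0]; exact hc1
      have t5 : |(y x - (F0 x.1 + ∑ l, b l * (x.1 l:ℝ) + c))| ≤ 1 := by
        rw [abs_of_nonneg (hy0 x)]; exact (hy1 x).le.trans hh1
      have t : ∀ p q r s t : ℝ, |p+q+r+s+t| ≤ |p|+|q|+|r|+|s|+|t| := by
        intro p q r s t
        have h1 := abs_add_le (p+q+r+s) t
        have h2 := abs_add_le (p+q+r) s
        have h3 := abs_add_le (p+q) r
        have h4 := abs_add_le p q
        linarith
      have tt := (t _ _ _ _ _).trans (add_le_add (add_le_add (add_le_add (add_le_add t1 t2) t3) t4) t5)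
      rw [← mul_div_assoc, div_le_iff₀ hmr]
      refine (mul_le_mul_of_nonneg_left tt hα.le).trans ?_
      have s1 : α * (A * k * ρ^2/4*m) ≤ ρ/4*m := by
        have : α * (A * k * ρ^2/4*m) = (α * A * k * ρ) * (ρ/4*m) := by ring
        rw [this]
        exact mul_le_of_le_one_left (by positivity) hAρ
      have s2 : α * (k * DK / J * m) ≤ ρ/8*m := by
        have : α * (k * DK / J * m) = (α * k * DK / J) * m := by ring
        rw [this]; gcongr
      linarith
    · intro i
      simp only [hfs]
      exact hX x.1 hxX i
  · intro p hp i
    obtain ⟨x, -, rfl⟩ := Finset.mem_image.1 hp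
    refine Fin.cases ?_ ?_ i
    · exact ⟨_, hf0 x⟩
    · intro j; exact ⟨_, hfs x j⟩
  · intro p hp
    obtain ⟨x, -, rfl⟩ := Finset.mem_image.1 hp
    let g : Fin k → ℝ := fun j => - lam j + b j + A / m * (2 * ∑ i, (∑ l, μ i l * ((x.1 l:ℝ) - m * xc l)) * μ i j)
    refine ⟨Fin.cons 1 (fun j => - g j), ?_⟩
    intro q hq hne
    obtain ⟨x', -, rfl⟩ := Finset.mem_image.1 hq
    have hxx : x'.1 - x.1 ≠ 0 := by
      intro h; apply hne; rw [Subtype.ext (sub_eq_zero.1 h)]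
    have hq := hZc _ (hSZ x.1 x.2 x'.1 x'.2) hxx
    have hsq := ug_sq μ (fun j => (x.1 j:ℝ) - m * xc j) (fun j => (x'.1 j:ℝ) - m * xc j)
    have e1 : ∀ j, ((x'.1 j:ℝ) - m * xc j) - ((x.1 j:ℝ) - m * xc j) = (x'.1 j:ℝ) - x.1 j := fun j => by ring
    simp only [e1] at hsq
    simp only [Pi.sub_apply, Int.cast_sub] at hq
    rw [Fin.sum_univ_succ, Fin.sum_univ_succ]
    simp only [Fin.cons_zero, Fin.cons_succ, hf0, hfs, one_mul]
    have e2 : ∀ x : S, ∑ j, -g j * ((x.1 j:ℝ)/m) = -(∑ j, g j * (x.1 j:ℝ))/m := by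
      intro x
      rw [← Finset.sum_neg_distrib, Finset.sum_div]; apply Finset.sum_congr rfl; intro j _; ring
    rw [e2, e2, ← add_div, ← add_div, div_lt_div_iff_of_pos_right hmr]
    push_cast
    have h1 := hy1 x
    have h2 := hy0 x'
    have e3 : ∑ j, g j * (x'.1 j:ℝ) - ∑ j, g j * (x.1 j:ℝ) = -(∑ j, lam j * (x'.1 j:ℝ)) + (∑ j, lam j * (x.1 j:ℝ)) +
        ∑ j, b j * (x'.1 j:ℝ) - ∑ j, b j * (x.1 j:ℝ) + A / m * ∑ j, (2 * ∑ i, (∑ l, μ i l * ((x.1 l:ℝ) - m * xc l)) * μ i j) * ((x'.1 j:ℝ) - x.1 j) := by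
      rw [Finset.mul_sum, ← Finset.sum_neg_distrib, ← Finset.sum_sub_distrib, ← Finset.sum_add_distrib, ← Finset.sum_add_distrib, ← Finset.sum_sub_distrib, ← Finset.sum_add_distrib]
      apply Finset.sum_congr rfl; intro j _; simp only [g]; ring
    simp only [F0] at h1 h2
    rw [hsq] at h2
    rw [mul_add, mul_add] at h2
    linarith
  · rw [Finset.card_image_of_injective _ hfinj, Finset.card_univ, Fintype.card_coe]
    exact hSc

theorem ug_vm {k : ℕ} (μ : Matrix (Fin k) (Fin k) ℝ) (v : Fin k → ℝ) (i : Fin k) :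
    Matrix.vecMul v μ.transpose i = ∑ j, μ i j * v j := by
  rw [Matrix.vecMul_transpose]; rfl

def ug_D {k : ℕ} (μ : Matrix (Fin k) (Fin k) ℝ) (xc : Fin k → ℝ) (r : ℝ) : Set (Fin k → ℝ) :=
  {v : Fin k → ℝ | ∀ i, |∑ j, μ i j * (v j - xc j)| ≤ r}

theorem ug_Deq {k : ℕ} (μ : Matrix (Fin k) (Fin k) ℝ) (xc : Fin k → ℝ) (r : ℝ) (hr : 0 < r) :
    ug_D μ xc r = (fun v => xc + v) '' ((fun v => r • v) '' uf_D μ.transpose) := by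
  ext v
  constructor
  · intro hv
    refine ⟨v - xc, ⟨r⁻¹ • (v - xc), ?_, ?_⟩, by ext; simp⟩
    · intro i
      rw [ug_vm]
      have : ∑ j, μ i j * (r⁻¹ • (v - xc)) j = r⁻¹ * ∑ j, μ i j * (v j - xc j) := by
        rw [Finset.mul_sum]; apply Finset.sum_congr rfl; intro j _; simp; ring
      rw [this, abs_mul, abs_of_pos (inv_pos.2 hr), inv_mul_le_one₀ hr]
      exact hv i
    · simp only; rw [smul_smul, mul_inv_cancel₀ hr.ne', one_smul]
  · rintro ⟨_, ⟨u, hu, rfl⟩, rfl⟩ i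
    have := hu i
    rw [ug_vm] at this
    have e : ∑ j, μ i j * ((xc + r • u) j - xc j) = r * ∑ j, μ i j * u j := by
      rw [Finset.mul_sum]; apply Finset.sum_congr rfl; intro j _; simp; ring
    simp only
    rw [e, abs_mul, abs_of_pos hr]
    exact mul_le_of_le_one_right hr.le this

open Pointwise in
theorem ug_Dvol {k : ℕ} (μ : Matrix (Fin k) (Fin k) ℝ) (hμ : μ.det ≠ 0) (xc : Fin k → ℝ) (r : ℝ) (hr : 0 < r) :
    IsCompact (ug_D μ xc r) ∧ Convex ℝ (ug_D μ xc r) ∧ volume.real (ug_D μ xc r) = (2*r)^k / |μ.det| := by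
  obtain ⟨h1, h2, h3⟩ := uf_Dvol μ.transpose (by rwa [Matrix.det_transpose])
  rw [Matrix.det_transpose] at h3
  rw [ug_Deq μ xc r hr]
  refine ⟨?_, ?_, ?_⟩
  · exact (h1.image (by fun_prop)).image (by fun_prop)
  · exact (h2.smul r).translate xc
  · rw [Measure.real, image_add_left, measure_preimage_add]
    have : (fun v : Fin k → ℝ => r • v) '' uf_D μ.transpose = r • uf_D μ.transpose := rfl
    rw [this, Measure.addHaar_smul, ENNReal.toReal_mul, ← Measure.real, h3]
    simp
    rw [abs_of_pos (by positivity)]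
    rw [mul_pow]; ring

theorem ug_Zfin {k : ℕ} (μ : Matrix (Fin k) (Fin k) ℝ) (hμ : μ.det ≠ 0) :
    ∃ R : ℝ, 1 ≤ R ∧ ∀ w, R ≤ w → ∃ Z : Finset (Fin k → ℤ), (∀ z, z ∈ Z ↔ z ≠ 0 ∧ ∀ i, |∑ j, μ i j * (z j:ℝ)| ≤ w) ∧
      (Z.card : ℝ) ≤ 2 * 4^k / |μ.det| * w^k := by
  obtain ⟨R, hR1, hR⟩ := uf_dualcount μ.transpose (by rwa [Matrix.det_transpose])
  rw [Matrix.det_transpose] at hR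
  refine ⟨R, hR1, ?_⟩
  intro w hw
  have key := hR w hw
  simp only [ug_vm] at key
  have hfin : {z : Fin k → ℤ | z ≠ 0 ∧ ∀ i, |∑ j, μ i j * (z j:ℝ)| ≤ w}.Finite := by
    by_contra hinf
    obtain ⟨Q, hQ, hQc⟩ := Set.Infinite.exists_subset_card_eq hinf (⌊2 * 4^k / |μ.det| * w^k⌋₊ + 1)
    have := key Q (fun N hN => (hQ hN).2)
    rw [hQc] at this
    have h2 := Nat.lt_floor_add_one (2 * 4^k / |μ.det| * w^k)
    push_cast at this
    linarith
  refine ⟨hfin.toFinset, ?_, ?_⟩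
  · intro z; simp
  · apply key
    intro N hN
    exact ((Set.Finite.mem_toFinset hfin).1 hN).2

open Classical in
theorem ug_sumZ {k : ℕ} (Z : Finset (Fin k → ℤ)) (J : ℕ) :
    (∑ z∈Z, if ∃ i, (J:ℝ) ≤ |(z i:ℝ)| then (1:ℝ) else J) ≤ Z.card + J * (2*J+1)^k := by
  have h : ∀ z ∈ Z, (if ∃ i, (J:ℝ) ≤ |(z i:ℝ)| then (1:ℝ) else J) ≤ 1 + (if ∃ i, (J:ℝ) ≤ |(z i:ℝ)| then (0:ℝ) else J) := by
    intro z _; split_ifs <;> simp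
  refine (Finset.sum_le_sum h).trans ?_
  rw [Finset.sum_add_distrib]
  have h2 : ∑ z ∈ Z, (if ∃ i, (J:ℝ) ≤ |(z i:ℝ)| then (0:ℝ) else J) ≤ J * (2*J+1)^k := by
    have : ∀ z ∈ Z, (if ∃ i, (J:ℝ) ≤ |(z i:ℝ)| then (0:ℝ) else J) = if ¬ ∃ i, (J:ℝ) ≤ |(z i:ℝ)| then (J:ℝ) else 0 := by
      intro z _; rw [ite_not]
    rw [Finset.sum_congr rfl this, ← Finset.sum_filter, Finset.sum_const, nsmul_eq_mul, mul_comm]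
    apply mul_le_mul_of_nonneg_left _ (Nat.cast_nonneg _)
    have hsub : (Z.filter (fun z => ¬ ∃ i, (J:ℝ) ≤ |(z i:ℝ)|)) ⊆ Fintype.piFinset (fun _ : Fin k => Finset.Icc (-(J:ℤ)) J) := by
      intro z hz
      rw [Fintype.mem_piFinset]
      intro i
      have := (Finset.mem_filter.1 hz).2
      push Not at this
      have h3 := abs_lt.1 (this i)
      rw [Finset.mem_Icc]
      constructor
      · exact_mod_cast h3.1.le
      · exact_mod_cast h3.2.le
    have := Finset.card_le_card hsub
    rw [Fintype.card_piFinset] at this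
    simp only [Int.card_Icc, Finset.prod_const, Finset.card_univ, Fintype.card_fin] at this
    have e : ((J:ℤ) + 1 - -(J:ℤ)).toNat = 2*J+1 := by omega
    rw [e] at this
    calc _ ≤ (((2*J+1)^k : ℕ):ℝ) := Nat.cast_le.2 this
      _ = _ := by push_cast; ring
  simpa using h2

set_option maxHeartbeats 1000000 in
theorem ug_lower (k : ℕ) (hk : 1 ≤ k) : ∃ c : ℝ, 0 < c ∧ ∀ (K : Set (Fin (k+1) → ℝ)) (x0 : Fin (k+1) → ℝ)
    (T : Matrix (Fin (k+1)) (Fin (k+1)) ℝ), T.det ≠ 0 →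
    (∀ b : Fin (k+1) → ℝ, (∀ i, 0 ≤ b i) → ∑ i, b i ≤ 1 → x0 + T.mulVec b ∈ K) →
    ∀ᶠ m : ℕ in atTop, ∃ G : Finset (Fin (k+1) → ℝ), (∀ p ∈ G, p ∈ K) ∧ (∀ p ∈ G, ∀ i, ∃ z : ℤ, p i = (z:ℝ)/m) ∧
      (∀ p ∈ G, ∃ a : Fin (k+1) → ℝ, ∀ q ∈ G, q ≠ p → ∑ i, a i * p i < ∑ i, a i * q i) ∧
      c * ((m:ℝ)^(k+1) * |T.det|)^((k:ℝ)/(k+2)) ≤ G.card := by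
  have hk0 : (0:ℝ) < k := by exact_mod_cast hk
  obtain ⟨ρ, hρ⟩ : ∃ ρ : ℝ, ρ = 1 / (2 * (k+1)) := ⟨_, rfl⟩
  have hρ0 : 0 < ρ := by rw [hρ]; positivity
  obtain ⟨C1, hC1⟩ : ∃ C1 : ℝ, C1 = 72 * 4^k / (k * ρ) := ⟨_, rfl⟩
  have hC10 : 0 < C1 := by rw [hC1]; positivity
  refine ⟨ρ^k / (576 * 4^k) * C1^((k:ℝ)/(k+2)), by positivity, ?_⟩
  intro K x0 T hT hK
  have hT0 := abs_pos.2 hT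
  obtain ⟨α, lam, μ, yc, xc, hα, hμ, hdet, hpiv⟩ := ug_piv K x0 T hT ρ hρ hK
  have hμ0 := abs_pos.2 hμ
  obtain ⟨A, hAdef⟩ : ∃ A : ℝ, A = 1 / (α * k * ρ) := ⟨_, rfl⟩
  have hA : 0 < A := by rw [hAdef]; positivity
  obtain ⟨δ, hδdef⟩ : ∃ δ : ℝ, δ = |μ.det| / (72 * 4^k) := ⟨_, rfl⟩
  have hδ : 0 < δ := by rw [hδdef]; positivity
  have hAδ : A / δ = C1 * |T.det| := by
    rw [hAdef, hδdef, hC1]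
    field_simp
    linear_combination (-1) * hdet
  obtain ⟨hD1, hD2, hD3⟩ := ug_Dvol μ hμ xc (ρ/2) (by positivity)
  have hvol : volume.real (ug_D μ xc (ρ/2)) = ρ^k / |μ.det| := by rw [hD3]; congr 2; ring
  obtain ⟨R0, hR0⟩ := hD1.isBounded.subset_closedBall xc
  obtain ⟨DK, hDK0, hDK⟩ : ∃ DK : ℝ, 0 ≤ DK ∧ ∀ v ∈ ug_D μ xc (ρ/2), ∀ j, |v j - xc j| ≤ DK := by
    refine ⟨max R0 0, le_max_right _ _, ?_⟩
    intro v hv j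
    have := hR0 hv
    rw [mem_closedBall_iff_norm] at this
    exact (norm_le_pi_norm (v - xc) j).trans (this.trans (le_max_left _ _))
  obtain ⟨J, hJ0, hJ⟩ : ∃ J : ℕ, 0 < J ∧ α * k * DK / J ≤ ρ / 8 := by
    refine ⟨⌈8 * (α * k * DK) / ρ⌉₊ + 1, Nat.succ_pos _, ?_⟩
    have h1 := Nat.le_ceil (8 * (α * k * DK) / ρ)
    rw [div_le_iff₀ (by positivity)]
    rw [div_le_iff₀ hρ0] at h1
    push_cast
    nlinarith
  have hJr : (0:ℝ) < J := by exact_mod_cast hJ0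
  obtain ⟨R, hR1, hR⟩ := ug_Zfin μ hμ
  have hxpow : ∀ x : ℝ, 0 < x → ((x^((1:ℝ)/(k+2))) ^ (k+2) = x) := by
    intro x hx
    rw [← Real.rpow_natCast, ← Real.rpow_mul hx.le]
    have : (1:ℝ)/(k+2) * ((k+2 : ℕ):ℝ) = 1 := by push_cast; field_simp
    rw [this, Real.rpow_one]
  let w : ℕ → ℝ := fun m => (δ * m / A)^((1:ℝ)/(k+2))
  have hwt : Tendsto w atTop atTop := by
    apply (tendsto_rpow_atTop (by positivity)).comp
    apply Tendsto.atTop_div_const hA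
    exact Tendsto.const_mul_atTop hδ tendsto_natCast_atTop_atTop
  have hwk : Tendsto (fun m => (w m)^k) atTop atTop := (tendsto_pow_atTop (by omega)).comp hwt
  have hh0 : Tendsto (fun m => δ / (w m)^k) atTop (nhds 0) := hwk.const_div_atTop δ
  have ev1 := hh0.eventually_le_const (u := 1) one_pos
  have hJp : (0:ℝ) < 1 / (36 * ((J:ℝ) * (2*(J:ℝ)+1)^k)) := by positivity
  have ev2 := hh0.eventually_le_const hJp
  have ev3 := hwt.eventually_ge_atTop R
  have ev4 : ∀ᶠ m : ℕ in atTop, 3 * α ≤ m * ρ / 8 := by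
    have : Tendsto (fun m : ℕ => (m:ℝ) * ρ / 8) atTop atTop := by
      apply Tendsto.atTop_div_const (by norm_num)
      exact Tendsto.atTop_mul_const hρ0 tendsto_natCast_atTop_atTop
    exact this.eventually_ge_atTop _
  have ev5 := ub_count _ hD1 hD2 (by rw [hvol]; positivity)
  filter_upwards [ev1, ev2, ev3, ev4, ev5, eventually_gt_atTop 0] with m e1 e2 e3 e4 e5 hm
  have hmr : (0:ℝ) < m := by exact_mod_cast hm
  have hw1 : 1 ≤ w m := hR1.trans e3
  have hw0 : 0 < w m := by linarith
  have hwpow : (w m)^(k+2) = δ * m / A := hxpow _ (by positivity)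
  have hh0w : δ / (w m)^k = A / m * (w m)^2 := by
    rw [div_eq_iff (by positivity)]
    have : A / m * (w m)^2 * (w m)^k = A / m * (w m)^(k+2) := by rw [pow_add]; ring
    rw [this, hwpow]; field_simp
  obtain ⟨h0, hh0def⟩ : ∃ h0 : ℝ, h0 = δ / (w m)^k := ⟨_, rfl⟩
  rw [← hh0def] at e1 e2 hh0w
  have hh00 : 0 < h0 := by rw [hh0def]; positivity
  obtain ⟨Z, hZ, hZc⟩ := hR (w m) e3
  obtain ⟨B, hB0, hB⟩ : ∃ B : ℝ, 0 ≤ B ∧ ∀ z ∈ Z, ∀ i, |(z i:ℝ)| ≤ B := by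
    refine ⟨∑ z ∈ Z, ∑ i, |(z i:ℝ)|, by positivity, ?_⟩
    intro z hz i
    calc |(z i:ℝ)| ≤ ∑ i, |(z i:ℝ)| := Finset.single_le_sum (f := fun i => |(z i:ℝ)|) (fun _ _ => abs_nonneg _) (Finset.mem_univ i)
      _ ≤ _ := Finset.single_le_sum (f := fun z : Fin k → ℤ => ∑ i, |(z i:ℝ)|) (fun _ _ => by positivity) hz
  obtain ⟨M, hM⟩ := exists_nat_ge ((B + 4) / h0)
  rw [div_le_iff₀ hh00] at hM
  have hMr : (0:ℝ) < M := by
    by_contra h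
    have := mul_nonpos_of_nonpos_of_nonneg (not_lt.1 h) hh00.le
    linarith
  let H : ℕ := ⌊(M:ℝ) * h0⌋₊
  have hH1 : (H:ℝ) ≤ M * h0 := Nat.floor_le (by positivity)
  have hH2 : (M:ℝ) * h0 - 1 < H := by
    have := Nat.lt_floor_add_one ((M:ℝ) * h0)
    simp only [H]; linarith
  have hHr : (0:ℝ) < H := by linarith
  have hHM : (H:ℝ) / M ≤ h0 := by rw [div_le_iff₀ hMr]; linarith
  have hHM2 : h0 / 2 ≤ (H:ℝ) / M := by rw [le_div_iff₀ hMr]; linarith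
  have hXf := ub_finite _ hD1.isBounded m hm.ne'
  obtain ⟨G, hG1, hG2, hG3, hG4⟩ := ug_conf M J H m (by exact_mod_cast hMr) hJ0 (by exact_mod_cast hHr)
    (by have : (H:ℝ) ≤ M := hH1.trans (mul_le_of_le_one_right hMr.le e1)
        exact_mod_cast this) hm K α hα lam μ yc xc ρ A DK hρ0 hA hDK0
    (by rw [hAdef]; apply le_of_eq; field_simp) hpiv hXf.toFinset Z
    (fun x hx => (Set.Finite.mem_toFinset hXf).1 hx)
    (fun x hx => hDK _ ((Set.Finite.mem_toFinset hXf).1 hx)) hJ e4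
    (fun z hz => ((hZ z).1 hz).1)
    (fun z hz i => by have := hB z hz i; linarith)
    (by
      intro z hz hz0
      have : ∃ i, w m < |∑ j, μ i j * (z j:ℝ)| := by
        by_contra hcon
        push Not at hcon
        exact hz ((hZ z).2 ⟨hz0, hcon⟩)
      obtain ⟨i, hi⟩ := this
      refine hHM.trans ?_
      rw [hh0w]
      apply mul_le_mul_of_nonneg_left _ (by positivity)
      calc (w m)^2 ≤ |∑ j, μ i j * (z j:ℝ)|^2 := by gcongr
        _ = (∑ j, μ i j * (z j:ℝ))^2 := sq_abs _
        _ ≤ _ := Finset.single_le_sum (f := fun i => (∑ j, μ i j * (z j:ℝ))^2) (fun _ _ => sq_nonneg _) (Finset.mem_univ i))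
    (by
      have hs := ug_sumZ Z J
      have hs2 : 18 * h0 * (Z.card + J * (2*J+1)^k) ≤ 1 := by
        have a1 : h0 * Z.card ≤ 1 / 36 := by
          calc h0 * Z.card ≤ h0 * (2 * 4^k / |μ.det| * (w m)^k) := by gcongr
            _ = 1 / 36 := by rw [hh0def, hδdef]; field_simp; norm_num
        have a2 : h0 * (J * (2*J+1)^k) ≤ 1 / 36 := by
          have hp : (0:ℝ) < J * (2*J+1)^k := by positivity
          calc h0 * (J * (2*J+1)^k) ≤ 1 / (36 * (J * (2*J+1)^k)) * (J * (2*J+1)^k) := by gcongr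
            _ = 1 / 36 := by field_simp
        linarith
      calc 18*(H:ℝ)*_ ≤ 18 * (M * h0) * (Z.card + J * (2*J+1)^k) := by gcongr
        _ = M * (18 * h0 * (Z.card + J * (2*J+1)^k)) := by ring
        _ ≤ M * 1 := by gcongr
        _ = M := mul_one _)
  refine ⟨G, hG1, hG2, hG3, le_trans ?_ hG4⟩
  have hXc : ρ^k / |μ.det| / 2 * (m:ℝ)^k ≤ hXf.toFinset.card := by
    rw [← Set.ncard_eq_toFinset_card _ hXf, ← hvol]
    exact e5.1
  have hfin : C1^((k:ℝ)/(k+2)) * ((m:ℝ)^(k+1) * |T.det|)^((k:ℝ)/(k+2)) = ((m:ℝ) / w m)^k := by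
    rw [← Real.mul_rpow hC10.le (by positivity)]
    have e : C1 * ((m:ℝ)^(k+1) * |T.det|) = ((m:ℝ) / w m)^(k+2) := by
      rw [div_pow, hwpow]
      have : C1 * ((m:ℝ)^(k+1) * |T.det|) = (C1 * |T.det|) * (m:ℝ)^(k+1) := by ring
      rw [this, ← hAδ, pow_succ (m:ℝ) (k+1)]
      field_simp
    rw [e, ← Real.rpow_natCast, ← Real.rpow_mul (by positivity), ← Real.rpow_natCast]
    congr 1
    push_cast; field_simp
  rw [mul_assoc, hfin]
  calc ρ^k / (576 * 4^k) * ((m:ℝ) / w m)^k = (ρ^k / |μ.det| / 2 * (m:ℝ)^k) * (h0 / 2) / 2 := by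
        rw [hh0def, hδdef, div_pow]; field_simp; norm_num
    _ ≤ _ := by gcongr

def uh_L (d m : ℕ) : Set (Fin d → ℝ) := {v : Fin d → ℝ | ∀ i, ∃ z : ℤ, v i = (z : ℝ) / m}

def uh_pol (d m : ℕ) (K : Set (Fin d → ℝ)) : Set (Set (Fin d → ℝ)) :=
  {P : Set (Fin d → ℝ) | P.Nonempty ∧ P ⊆ K ∧
    ∃ F : Finset (Fin d → ℝ), (↑F : Set (Fin d → ℝ)) ⊆ uh_L d m ∧ P = convexHull ℝ (↑F : Set (Fin d → ℝ))}

theorem uh_fin {d m : ℕ} (hm : m ≠ 0) (K : Set (Fin d → ℝ)) (hK : Bornology.IsBounded K) : (K ∩ uh_L d m).Finite := by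
  have := (ub_finite K hK m hm).image (fun (z : Fin d → ℤ) (i : Fin d) => (z i : ℝ) / m)
  rw [ub_image] at this
  exact this

theorem uh_ncard {d m : ℕ} (hm : m ≠ 0) (K : Set (Fin d → ℝ)) : (K ∩ uh_L d m).ncard = (ub_Z K m).ncard := by
  rw [← Set.ncard_image_of_injective _ (ub_inj m hm), ub_image]; rfl

theorem uh_polfin {d m : ℕ} (hm : m ≠ 0) (K : Set (Fin d → ℝ)) (hK : Bornology.IsBounded K) : (uh_pol d m K).Finite := by
  refine Set.Finite.subset (((uh_fin hm K hK).finite_subsets).image (fun s => convexHull ℝ s)) ?_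
  rintro P ⟨-, h2, F, hF, rfl⟩
  exact ⟨↑F, fun x hx => ⟨h2 (subset_convexHull ℝ _ hx), hF hx⟩, rfl⟩

/-- distinct subsets of a set in strictly convex position have distinct hulls -/
theorem uh_dist {d : ℕ} (G Q Q' : Finset (Fin d → ℝ))
    (hG : ∀ p ∈ G, ∃ a : Fin d → ℝ, ∀ q ∈ G, q ≠ p → ∑ i, a i * p i < ∑ i, a i * q i)
    (hQ : Q ⊆ G) (hQ' : Q' ⊆ G)
    (h : convexHull ℝ (↑Q : Set (Fin d → ℝ)) = convexHull ℝ (↑Q' : Set (Fin d → ℝ))) : Q ⊆ Q' := by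
  intro p hp
  by_contra hp'
  obtain ⟨a, ha⟩ := hG p (hQ hp)
  have hmem : p ∈ convexHull ℝ (↑Q' : Set (Fin d → ℝ)) := h ▸ subset_convexHull ℝ _ hp
  have hconv : Convex ℝ {q : Fin d → ℝ | ∑ i, a i * p i < ∑ i, a i * q i} := by
    apply convex_halfSpace_gt
    constructor
    · intro x y; simp [mul_add, Finset.sum_add_distrib]
    · intro c x; simp only [Pi.smul_apply, smul_eq_mul, Finset.mul_sum]; apply Finset.sum_congr rfl; intros; ring
  have hsub : (↑Q' : Set (Fin d → ℝ)) ⊆ {q : Fin d → ℝ | ∑ i, a i * p i < ∑ i, a i * q i} :=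
    fun q hq => ha q (hQ' hq) (fun e => hp' (e ▸ hq))
  have : ∑ i, a i * p i < ∑ i, a i * p i := convexHull_min hsub hconv hmem
  exact lt_irrefl _ this

open Classical in
theorem uh_low {d m : ℕ} (hm : m ≠ 0) (K : Set (Fin d → ℝ)) (hK : Bornology.IsBounded K) (hc : Convex ℝ K)
    (G : Finset (Fin d → ℝ)) (hGK : ∀ p ∈ G, p ∈ K) (hGL : ∀ p ∈ G, ∀ i, ∃ z : ℤ, p i = (z:ℝ)/m)
    (hG : ∀ p ∈ G, ∃ a : Fin d → ℝ, ∀ q ∈ G, q ≠ p → ∑ i, a i * p i < ∑ i, a i * q i) (h2 : 2 ≤ G.card) :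
    (G.card : ℝ) * (Real.log 2 / 2) ≤ Real.log (uh_pol d m K).ncard := by
  have hsub : (((G.powerset.erase ∅).image (fun Q : Finset (Fin d → ℝ) => convexHull ℝ (↑Q : Set (Fin d → ℝ))) : Finset _) : Set _) ⊆ uh_pol d m K := by
    intro P hP
    obtain ⟨Q, hQ, rfl⟩ := Finset.mem_image.1 (Finset.mem_coe.1 hP)
    have hQ1 := Finset.mem_erase.1 hQ
    have hQG := Finset.mem_powerset.1 hQ1.2
    refine ⟨?_, ?_, Q, ?_, rfl⟩
    · rw [convexHull_nonempty_iff]; exact Finset.coe_nonempty.2 (Finset.nonempty_iff_ne_empty.2 hQ1.1)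
    · exact convexHull_min (fun q hq => hGK q (hQG hq)) hc
    · intro q hq; exact hGL q (hQG hq)
  have hcard := Set.ncard_le_ncard hsub (uh_polfin hm K hK)
  rw [Set.ncard_coe_finset, Finset.card_image_of_injOn, Finset.card_erase_of_mem (Finset.empty_mem_powerset G), Finset.card_powerset] at hcard
  · have h3 : 2^(G.card-1) ≤ 2^G.card - 1 := by
      have : 2^G.card = 2 * 2^(G.card-1) := by rw [← pow_succ']; congr 1; omega
      have h4 : 1 ≤ 2^(G.card-1) := Nat.one_le_two_pow
      omega
    have h5 : ((2:ℝ)^(G.card-1)) ≤ (uh_pol d m K).ncard := by exact_mod_cast h3.trans hcard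
    have h6 := Real.log_le_log (by positivity) h5
    rw [Real.log_pow] at h6
    refine le_trans ?_ h6
    have h7 : ((G.card - 1 : ℕ):ℝ) = (G.card:ℝ) - 1 := by rw [Nat.cast_sub (by omega)]; simp
    rw [h7]
    have h8 : (2:ℝ) ≤ G.card := by exact_mod_cast h2
    have := Real.log_pos (show (1:ℝ) < 2 by norm_num)
    nlinarith
  · intro Q hQ Q' hQ' h
    have hQ := Finset.mem_powerset.1 (Finset.mem_erase.1 hQ).2
    have hQ' := Finset.mem_powerset.1 (Finset.mem_erase.1 hQ').2
    exact Finset.Subset.antisymm (uh_dist G Q Q' hG hQ hQ' h) (uh_dist G Q' Q hG hQ' hQ h.symm)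

open Classical in
theorem uh_fam {d m : ℕ} (hm : m ≠ 0) (K : Set (Fin d → ℝ)) (hK : Bornology.IsBounded K) :
    ∃ 𝓕 : Finset (Finset (Fin d → ℝ)), (∀ F∈𝓕, F.Nonempty) ∧ (∀ F∈𝓕, ∀ y∈F, y∈K) ∧ (∀ F∈𝓕, ∀ y∈F, ∀ i, ∃ z:ℤ, y i = (z:ℝ)/m) ∧
     (∀ F∈𝓕, ∀ F'∈𝓕, convexHull ℝ (↑F : Set (Fin d → ℝ)) = convexHull ℝ (↑F' : Set (Fin d → ℝ)) → F = F') ∧ 𝓕.card = (uh_pol d m K).ncard := by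
  have hfin := uh_polfin hm K hK
  have hch : ∀ P : uh_pol d m K, ∃ F : Finset (Fin d → ℝ), (↑F : Set (Fin d → ℝ)) ⊆ uh_L d m ∧ P.1 = convexHull ℝ (↑F : Set (Fin d → ℝ)) := fun P => P.2.2.2
  choose f hf1 hf2 using hch
  have hinj : Function.Injective f := by
    intro P P' h
    apply Subtype.ext
    rw [hf2 P, hf2 P', h]
  have : Fintype (uh_pol d m K) := hfin.fintype
  refine ⟨Finset.univ.image f, ?_, ?_, ?_, ?_, ?_⟩
  · intro F hF
    obtain ⟨P, -, rfl⟩ := Finset.mem_image.1 hF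
    have := P.2.1
    rw [hf2 P, convexHull_nonempty_iff] at this
    exact Finset.coe_nonempty.1 this
  · intro F hF y hy
    obtain ⟨P, -, rfl⟩ := Finset.mem_image.1 hF
    apply P.2.2.1
    rw [hf2 P]
    exact subset_convexHull ℝ _ hy
  · intro F hF y hy
    obtain ⟨P, -, rfl⟩ := Finset.mem_image.1 hF
    exact hf1 P hy
  · intro F hF F' hF' h
    obtain ⟨P, -, rfl⟩ := Finset.mem_image.1 hF
    obtain ⟨P', -, rfl⟩ := Finset.mem_image.1 hF'
    rw [← hf2, ← hf2] at h
    rw [Subtype.ext h]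
  · rw [Finset.card_image_of_injective _ hinj, Finset.card_univ, Set.ncard_eq_toFinset_card', Set.toFinset_card]

theorem uh_vol {d : ℕ} (hd : 0 < d) (K : Set (Fin d → ℝ)) (hKc : IsCompact K) (x0 : Fin d → ℝ) (T : Matrix (Fin d) (Fin d) ℝ)
    (h1 : ∀ b : Fin d → ℝ, (∀ i, 0 ≤ b i) → ∑ i, b i ≤ 1 → x0 + T.mulVec b ∈ K)
    (h2 : ∀ y ∈ K, ∃ b : Fin d → ℝ, (∀ i, |b i| ≤ 1) ∧ y = x0 + T.mulVec b) :
    (1/(d:ℝ))^d * |T.det| ≤ volume.real K ∧ volume.real K ≤ 2^d * |T.det| := by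
  have hd' : (0:ℝ) < d := by exact_mod_cast hd
  have key : ∀ a c : ℝ, a ≤ c → volume ((fun v => x0 + v) '' (Matrix.toLin' T '' Set.Icc (fun _ => a) (fun _ => c))) = ENNReal.ofReal ((c-a)^d * |T.det|) := by
    intro a c hac
    rw [image_add_left, measure_preimage_add, Measure.addHaar_image_linearMap, LinearMap.det_toLin', Real.volume_Icc_pi]
    simp only [Finset.prod_const, Finset.card_univ, Fintype.card_fin]
    rw [← ENNReal.ofReal_pow (by linarith), ← ENNReal.ofReal_mul (abs_nonneg _), mul_comm]
  constructor
  · have hs : (fun v => x0 + v) '' (Matrix.toLin' T '' Set.Icc (fun _ => (0:ℝ)) (fun _ => 1/(d:ℝ))) ⊆ K := by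
      rintro _ ⟨_, ⟨b, hb, rfl⟩, rfl⟩
      apply h1 b (fun i => hb.1 i)
      calc ∑ i, b i ≤ ∑ i : Fin d, 1/(d:ℝ) := Finset.sum_le_sum (fun i _ => hb.2 i)
        _ = 1 := by simp; field_simp
    have := measure_mono (μ := volume) hs
    rw [key 0 _ (by positivity), sub_zero] at this
    rw [Measure.real]
    rw [← ENNReal.ofReal_le_iff_le_toReal hKc.measure_lt_top.ne]
    exact this
  · have hs : K ⊆ (fun v => x0 + v) '' (Matrix.toLin' T '' Set.Icc (fun _ => (-1:ℝ)) (fun _ => 1)) := by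
      intro y hy
      obtain ⟨b, hb, rfl⟩ := h2 y hy
      exact ⟨_, ⟨b, ⟨fun i => (abs_le.1 (hb i)).1, fun i => (abs_le.1 (hb i)).2⟩, rfl⟩, rfl⟩
    have := measure_mono (μ := volume) hs
    rw [key _ _ (by norm_num)] at this
    rw [Measure.real]
    apply ENNReal.toReal_le_of_le_ofReal (by positivity)
    refine this.trans (le_of_eq ?_)
    norm_num

theorem uh_main (k : ℕ) (hk : 1 ≤ k) : ∃ c₁ c₂ : ℝ, 0 < c₁ ∧ 0 < c₂ ∧
    ∀ K : Set (Fin (k+1) → ℝ), IsCompact K → Convex ℝ K → (interior K).Nonempty →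
      ∀ᶠ m : ℕ in atTop,
        c₁ * ((K ∩ uh_L (k+1) m).ncard : ℝ)^((k:ℝ)/(k+2)) ≤ Real.log (uh_pol (k+1) m K).ncard ∧
        Real.log (uh_pol (k+1) m K).ncard ≤ c₂ * ((K ∩ uh_L (k+1) m).ncard : ℝ)^((k:ℝ)/(k+2)) := by
  obtain ⟨C, hC, hup⟩ := uf_upper k hk
  obtain ⟨c, hc, hlow⟩ := ug_lower k hk
  have hk0 : (0:ℝ) < k := by exact_mod_cast hk
  have hlog := Real.log_pos (show (1:ℝ) < 2 by norm_num)
  obtain ⟨e, he⟩ : ∃ e : ℝ, e = (k:ℝ)/(k+2) := ⟨_, rfl⟩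
  have he0 : 0 < e := by rw [he]; positivity
  rw [← he] at hup hlow ⊢
  obtain ⟨a, ha⟩ : ∃ a : ℝ, a = 2 * 2^(k+1) := ⟨_, rfl⟩
  obtain ⟨b, hb⟩ : ∃ b : ℝ, b = 2 * ((k:ℝ)+1)^(k+1) := ⟨_, rfl⟩
  have ha0 : 0 < a := by rw [ha]; positivity
  have hb0 : 0 < b := by rw [hb]; positivity
  refine ⟨c * (Real.log 2 / 2) / a^e, C * b^e, by positivity, by positivity, ?_⟩
  intro K hKc hKv hKi
  obtain ⟨x0, T, hT, h1, h2⟩ := ua_box K hKc hKv hKi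
  have hT0 := abs_pos.2 hT
  obtain ⟨v1, v2⟩ := uh_vol (Nat.succ_pos k) K hKc x0 T h1 h2
  have hv0 : 0 < volume.real K := lt_of_lt_of_le (by positivity) v1
  have hbig : Tendsto (fun m : ℕ => c * ((m:ℝ)^(k+1) * |T.det|)^e) atTop atTop := by
    apply Tendsto.const_mul_atTop hc
    apply (tendsto_rpow_atTop he0).comp
    apply Tendsto.atTop_mul_const hT0
    exact (tendsto_pow_atTop (by omega)).comp tendsto_natCast_atTop_atTop
  filter_upwards [hup K x0 T hT h2, hlow K x0 T hT h1, ub_count K hKc hKv hv0, hbig.eventually_ge_atTop 2, eventually_gt_atTop 0] with m hu hl hcount hb2 hm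
  rw [uh_ncard hm.ne']
  have hmr : (0:ℝ) < m := by exact_mod_cast hm
  obtain ⟨n, hn⟩ : ∃ n : ℝ, n = ((ub_Z K m).ncard : ℝ) := ⟨_, rfl⟩
  rw [← hn] at hcount ⊢
  have hn0 : 0 ≤ n := by rw [hn]; positivity
  obtain ⟨V, hV⟩ : ∃ V : ℝ, V = (m:ℝ)^(k+1) * |T.det| := ⟨_, rfl⟩
  have hV0 : 0 < V := by rw [hV]; positivity
  rw [← hV] at hu hl hb2
  have hmp : (0:ℝ) < (m:ℝ)^(k+1) := by positivity
  have hn1 : n ≤ a * V := by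
    refine hcount.2.trans ?_
    rw [ha, hV]
    calc 2 * volume.real K * (m:ℝ)^(k+1) ≤ 2 * (2^(k+1) * |T.det|) * (m:ℝ)^(k+1) := by gcongr
      _ = _ := by ring
  have hn2 : V ≤ b * n := by
    have : volume.real K / 2 * (m:ℝ)^(k+1) ≤ n := hcount.1
    have h3 : V ≤ b * (volume.real K / 2 * (m:ℝ)^(k+1)) := by
      have h4 : |T.det| ≤ ((k:ℝ)+1)^(k+1) * volume.real K := by
        have h5 : (1/((k+1:ℕ):ℝ))^(k+1) * |T.det| = |T.det| / ((k:ℝ)+1)^(k+1) := by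
          push_cast; rw [div_pow, one_pow]; ring
        rw [h5, div_le_iff₀ (by positivity)] at v1
        linarith
      rw [hV, hb]
      calc (m:ℝ)^(k+1) * |T.det| ≤ (m:ℝ)^(k+1) * (((k:ℝ)+1)^(k+1) * volume.real K) := by gcongr
        _ = _ := by ring
    exact h3.trans (by gcongr)
  constructor
  · obtain ⟨G, g1, g2, g3, g4⟩ := hl
    have hG2 : 2 ≤ G.card := by exact_mod_cast hb2.trans g4
    refine le_trans ?_ (uh_low hm.ne' K hKc.isBounded hKv G g1 g2 g3 hG2)
    have hne : n^e ≤ a^e * V^e := by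
      rw [← Real.mul_rpow ha0.le hV0.le]
      exact Real.rpow_le_rpow hn0 hn1 he0.le
    calc c * (Real.log 2 / 2) / a^e * n^e ≤ c * (Real.log 2 / 2) / a^e * (a^e * V^e) := by gcongr
      _ = (c * V^e) * (Real.log 2 / 2) := by field_simp
      _ ≤ _ := by gcongr
  · obtain ⟨𝓕, f1, f2, f3, f4, f5⟩ := uh_fam hm.ne' K hKc.isBounded
    have := hu 𝓕 f1 f2 f3 f4
    rw [f5] at this
    refine this.trans ?_
    rw [mul_assoc, ← Real.mul_rpow hb0.le hn0]
    gcongr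

def uh_e (d : ℕ) : E d ≃L[ℝ] (Fin d → ℝ) := EuclideanSpace.equiv (Fin d) ℝ

theorem uh_elat (d m : ℕ) (v : E d) : uh_e d v ∈ uh_L d m ↔ v ∈ scaledLattice d m := Iff.rfl

theorem uh_ehull (d : ℕ) (s : Set (E d)) : uh_e d '' convexHull ℝ s = convexHull ℝ (uh_e d '' s) :=
  (uh_e d).toLinearEquiv.toLinearMap.image_convexHull s

open Classical in
theorem uh_epol (d m : ℕ) (K : Set (E d)) : (fun P => uh_e d '' P) '' latticePolytopes d m K = uh_pol d m (uh_e d '' K) := by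
  ext P
  constructor
  · rintro ⟨Q, ⟨h1, h2, F, hF, rfl⟩, rfl⟩
    refine ⟨h1.image _, image_mono h2, F.image (uh_e d), ?_, ?_⟩
    · rw [Finset.coe_image]
      rintro _ ⟨v, hv, rfl⟩
      exact hF hv
    · rw [Finset.coe_image]; exact uh_ehull d _
  · rintro ⟨h1, h2, F, hF, rfl⟩
    have hFe : uh_e d '' ((uh_e d).symm '' (↑F : Set (Fin d → ℝ))) = ↑F := by
      rw [image_image]; simp
    have hh : uh_e d '' (convexHull ℝ ((uh_e d).symm '' (↑F : Set (Fin d → ℝ)))) = convexHull ℝ ↑F := by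
      rw [uh_ehull, hFe]
    refine ⟨convexHull ℝ ((uh_e d).symm '' (↑F : Set (Fin d → ℝ))), ⟨?_, ?_, F.image (uh_e d).symm, ?_, ?_⟩, hh⟩
    · rw [← hh] at h1; exact h1.of_image
    · rw [← hh] at h2; exact (image_subset_image_iff (uh_e d).injective).1 h2
    · rw [Finset.coe_image]
      rintro _ ⟨v, hv, rfl⟩
      rw [← uh_elat, ContinuousLinearEquiv.apply_symm_apply]
      exact hF hv
    · rw [Finset.coe_image]

theorem uh_elat2 (d m : ℕ) (K : Set (E d)) : uh_e d '' (K ∩ scaledLattice d m) = (uh_e d '' K) ∩ uh_L d m := by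
  ext v
  constructor
  · rintro ⟨u, ⟨h1, h2⟩, rfl⟩
    exact ⟨⟨u, h1, rfl⟩, h2⟩
  · rintro ⟨⟨u, h1, rfl⟩, h2⟩
    exact ⟨u, ⟨h1, h2⟩, rfl⟩

/-- Theorem 2.2: for every convex body `K ⊆ ℝ^d`, if `n` is the number of points of
`(1/m)ℤ^d` in `K`, then `c₁ n^{(d-1)/(d+1)} ≤ log |𝒫_m(K)| ≤ c₂ n^{(d-1)/(d+1)}`
for constants `c₁, c₂ > 0` depending only on `d` and all sufficiently large `m`. -/
theorem log_number_of_lattice_polytopes (d : ℕ) (hd : 2 ≤ d) :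
    ∃ c₁ c₂ : ℝ, 0 < c₁ ∧ 0 < c₂ ∧
      ∀ (K : Set (E d)), IsCompact K → Convex ℝ K → (interior K).Nonempty →
        ∃ M : ℕ, ∀ m : ℕ, M ≤ m →
          c₁ * ((K ∩ scaledLattice d m).ncard : ℝ) ^ (((d : ℝ) - 1) / ((d : ℝ) + 1)) ≤
              Real.log ((latticePolytopes d m K).ncard) ∧
          Real.log ((latticePolytopes d m K).ncard) ≤
              c₂ * ((K ∩ scaledLattice d m).ncard : ℝ) ^ (((d : ℝ) - 1) / ((d : ℝ) + 1)) := by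
  obtain ⟨k, rfl⟩ : ∃ k, d = k + 1 := ⟨d - 1, by omega⟩
  obtain ⟨c₁, c₂, h1, h2, hmain⟩ := uh_main k (by omega)
  refine ⟨c₁, c₂, h1, h2, ?_⟩
  intro K hK hc hi
  have hi' : (interior (uh_e (k+1) '' K)).Nonempty := by
    have : uh_e (k+1) '' interior K = interior (uh_e (k+1) '' K) := (uh_e (k+1)).toHomeomorph.image_interior K
    rw [← this]
    exact hi.image _
  have hc' : Convex ℝ (uh_e (k+1) '' K) := hc.linear_image (uh_e (k+1)).toLinearEquiv.toLinearMap
  obtain ⟨M, hM⟩ := eventually_atTop.1 (hmain (uh_e (k+1) '' K) (hK.image (uh_e (k+1)).continuous) hc' hi')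
  refine ⟨M, fun m hm => ?_⟩
  have := hM m hm
  have e : (((k+1:ℕ):ℝ) - 1) / (((k+1:ℕ):ℝ) + 1) = (k:ℝ)/(k+2) := by push_cast; congr 1 <;> ring
  rw [e]
  rw [← uh_elat2, ← uh_epol, Set.ncard_image_of_injective _ (uh_e (k+1)).injective,
    Set.ncard_image_of_injective _ (Set.image_injective.2 (uh_e (k+1)).injective)] at this
  exact this
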